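/- For every ω > 0 and every n ∈ ℕ there exist positive constants C_n and B_n such that for all B ≥ B_n and every Neumann eigenfunction Ψ of H(B) with eigenvalue λ ≤ Θ₀·B + ω·B^{2/3}: ∫_Ω dist(x,∂Ω)ⁿ·(|Ψ|² + B^{−1}|(−i∇+A)Ψ|²) dx ≤ C_n·B^{−n/2}·∫_Ω |Ψ|² dx, and ∫_Ω dist_{∂Ω}(x,Γ)ⁿ·(|Ψ|² + B^{−1}|(−i∇+A)Ψ|²) dx ≤ C_n·B^{−n/4}·∫_Ω |Ψ|² dx. -/

import Mathlib

noncomputable section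
open MeasureTheory Real Filter Set Topology

/-- Euclidean 3-space. -/
abbrev E3 := EuclideanSpace ℝ (Fin 3)

/-- The magnetic vector potential `A(x) = (B/2)(-x₂, x₁, 0)`. -/
def Avec (B : ℝ) (x : E3) : Fin 3 → ℝ := ![-(B / 2) * x 1, B / 2 * x 0, 0]

/-- The `j`-th component of `(-i∇ + A)Ψ`. -/
def magD (B : ℝ) (Ψ : E3 → ℂ) (j : Fin 3) (x : E3) : ℂ :=
  -Complex.I * fderiv ℝ Ψ x (EuclideanSpace.single j 1) + (Avec B x j : ℂ) * Ψ x

/-- The magnetic energy density `|(-i∇ + A)Ψ|²`. -/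
def magEnergyDensity (B : ℝ) (Ψ : E3 → ℂ) (x : E3) : ℝ :=
  ∑ j : Fin 3, ‖magD B Ψ j x‖ ^ 2

/-- The open unit ball in `ℝ³`. -/
def ball3 : Set E3 := Metric.ball 0 1

/-- The Neumann ground-state energy `λ₁(H(B))` of `(-i∇ + A)²` in the unit ball,
as the infimum of the Rayleigh quotients. -/
def lambda1H (B : ℝ) : ℝ :=
  sInf { q : ℝ | ∃ Ψ : E3 → ℂ, ContDiff ℝ 1 Ψ ∧
    0 < (∫ x in ball3, ‖Ψ x‖ ^ 2) ∧
    q = (∫ x in ball3, magEnergyDensity B Ψ x) / ∫ x in ball3, ‖Ψ x‖ ^ 2 }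

/-- The de Gennes energy `λ₁^𝒢(ξ)`. -/
def deGennes (ξ : ℝ) : ℝ :=
  sInf { q : ℝ | ∃ u : ℝ → ℂ, ContDiff ℝ 1 u ∧
    IntegrableOn (fun t => ‖u t‖ ^ 2) (Ioi 0) ∧
    IntegrableOn (fun t => ‖deriv u t‖ ^ 2 + (t + ξ) ^ 2 * ‖u t‖ ^ 2) (Ioi 0) ∧
    0 < (∫ t in Ioi (0:ℝ), ‖u t‖ ^ 2) ∧
    q = (∫ t in Ioi (0:ℝ), (‖deriv u t‖ ^ 2 + (t + ξ) ^ 2 * ‖u t‖ ^ 2)) /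
        ∫ t in Ioi (0:ℝ), ‖u t‖ ^ 2 }

/-- `Θ₀`, the infimum of the de Gennes energy. -/
def Theta0 : ℝ := ⨅ ξ : ℝ, deGennes ξ

/-- The Montgomery energy `λ₁^ℳ(ζ)`. -/
def montgomery (ζ : ℝ) : ℝ :=
  sInf { q : ℝ | ∃ u : ℝ → ℂ, ContDiff ℝ 1 u ∧
    Integrable (fun ρ => ‖u ρ‖ ^ 2) ∧
    Integrable (fun ρ => ‖deriv u ρ‖ ^ 2 + (ζ + ρ ^ 2) ^ 2 * ‖u ρ‖ ^ 2) ∧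
    0 < (∫ ρ : ℝ, ‖u ρ‖ ^ 2) ∧
    q = (∫ ρ : ℝ, (‖deriv u ρ‖ ^ 2 + (ζ + ρ ^ 2) ^ 2 * ‖u ρ‖ ^ 2)) / ∫ ρ : ℝ, ‖u ρ‖ ^ 2 }

/-- `ν̂₀`, the infimum of the Montgomery energy. -/
def nu0 : ℝ := ⨅ ζ : ℝ, montgomery ζ

/-- The magnetic operator `H(B)Ψ = (-i∇ + A)²Ψ`. -/
def magLap (B : ℝ) (Ψ : E3 → ℂ) (x : E3) : ℂ :=
  ∑ j : Fin 3, (-Complex.I * fderiv ℝ (magD B Ψ j) x (EuclideanSpace.single j 1)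
    + (Avec B x j : ℂ) * magD B Ψ j x)

/-- A Neumann eigenfunction of `H(B)` with eigenvalue `lam`: a nonzero (in `L²(Ω)`)
twice continuously differentiable function satisfying the eigenvalue equation in the ball
and the magnetic Neumann condition `N(x)·(-i∇+A)Ψ = 0` on the boundary sphere,
`N(x) = -x` being the interior normal. -/
def IsNeumannEigenfunction (B lam : ℝ) (Ψ : E3 → ℂ) : Prop :=
  ContDiff ℝ 2 Ψ ∧
  0 < (∫ x in ball3, ‖Ψ x‖ ^ 2) ∧
  (∀ x ∈ ball3, magLap B Ψ x = (lam : ℂ) * Ψ x) ∧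
  (∀ x ∈ Metric.sphere (0 : E3) 1, ∑ j : Fin 3, ((-x j : ℝ) : ℂ) * magD B Ψ j x = 0)

/-- Distance to the boundary of the unit ball. -/
def distBd (x : E3) : ℝ := 1 - ‖x‖

/-- Distance along the boundary (on the unit sphere, after radial projection)
to the equator `Γ`. -/
def distEq (x : E3) : ℝ := Real.arcsin (|x 2| / ‖x‖)

/-!
An eigenfunction with eigenvalue `λ` satisfies, for real `φ`, the localisation identity
`∫ |(-i∇ + A)(φΨ)|² = λ ∫ φ²|Ψ|² + ∫ |∇φ|²|Ψ|²`. Hence a lower bound of the magnetic energy by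
`λ` plus a positive weight turns into a recursion for the moments of `|Ψ|²`.

For the distance to the boundary, a function vanishing on the sphere has magnetic energy at least
`B` times its mass, by the commutation relation of the magnetic derivatives. As `Θ₀ < 1`, the mass
in the interior costs an amount of order `B` too much.

For the distance to the equator, split into Fourier modes in the azimuthal angle. On each ray from
the centre the energy of a mode is bounded below by a de Gennes form, which exceeds `Θ₀ B` by a
multiple of `B` times the squared deviation, in units of `√B`, of the momentum from its optimal
value `√(Θ₀ B)`. Along the meridians this momentum varies at a rate of order `B |x₃|`, so that it
cannot be optimal throughout: an uncertainty inequality yields a gain of order `B |x₃|`, up to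
errors of order `B ^ (3 / 4)`. This localises `Ψ` at heights `|x₃|` of order `B ^ (-1 / 4)`.
-/

/-! ### The de Gennes problem on the half-line -/

lemma deGennes_rayleigh_nonneg (ξ : ℝ) (u : ℝ → ℂ) :
    0 ≤ (∫ t in Ioi (0 : ℝ), (‖deriv u t‖ ^ 2 + (t + ξ) ^ 2 * ‖u t‖ ^ 2)) /
      ∫ t in Ioi (0 : ℝ), ‖u t‖ ^ 2 :=
  div_nonneg (integral_nonneg fun _ => by positivity) (integral_nonneg fun _ => by positivity)

lemma deGennes_nonneg (ξ : ℝ) : 0 ≤ deGennes ξ := by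
  apply Real.sInf_nonneg
  rintro q ⟨u, -, -, -, -, rfl⟩
  exact deGennes_rayleigh_nonneg ξ u

lemma Theta0_nonneg : 0 ≤ Theta0 := Real.iInf_nonneg deGennes_nonneg

lemma Theta0_le_deGennes (ξ : ℝ) : Theta0 ≤ deGennes ξ :=
  ciInf_le ⟨0, by rintro _ ⟨ξ, rfl⟩; exact deGennes_nonneg ξ⟩ ξ

lemma Theta0_mul_integral_le (ξ : ℝ) {u : ℝ → ℂ} (hu : ContDiff ℝ 1 u)
    (hmass : IntegrableOn (fun t => ‖u t‖ ^ 2) (Ioi 0))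
    (henergy : IntegrableOn (fun t => ‖deriv u t‖ ^ 2 + (t + ξ) ^ 2 * ‖u t‖ ^ 2) (Ioi 0)) :
    Theta0 * (∫ t in Ioi (0 : ℝ), ‖u t‖ ^ 2) ≤
      ∫ t in Ioi (0 : ℝ), (‖deriv u t‖ ^ 2 + (t + ξ) ^ 2 * ‖u t‖ ^ 2) := by
  have hnonneg : 0 ≤ ∫ t in Ioi (0 : ℝ), ‖u t‖ ^ 2 := integral_nonneg fun _ => by positivity
  rcases hnonneg.eq_or_lt with hzero | hpos
  · rw [← hzero, mul_zero]
    exact integral_nonneg fun _ => by positivity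
  · rw [← le_div_iff₀ hpos]
    refine (Theta0_le_deGennes ξ).trans (csInf_le ⟨0, ?_⟩ ⟨u, hu, hmass, henergy, hpos, rfl⟩)
    rintro q ⟨u, -, -, -, -, rfl⟩
    exact deGennes_rayleigh_nonneg ξ u

/-- The test function `exp (-t²/2)`, used to show `Θ₀ < 1`. -/
def gaussian (t : ℝ) : ℂ := (rexp (-(t ^ 2) / 2) : ℝ)

lemma contDiff_gaussian : ContDiff ℝ 1 gaussian :=
  Complex.ofRealCLM.contDiff.comp (by fun_prop : ContDiff ℝ 1 fun t : ℝ => rexp (-(t ^ 2) / 2))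

lemma norm_sq_gaussian (t : ℝ) : ‖gaussian t‖ ^ 2 = rexp (-t ^ 2) := by
  rw [gaussian, Complex.norm_real, Real.norm_eq_abs, sq_abs, ← Real.exp_nat_mul]
  congr 1
  push_cast
  ring

lemma deriv_gaussian (t : ℝ) : deriv gaussian t = -t * gaussian t := by
  have hexponent : HasDerivAt (fun t : ℝ => -(t ^ 2) / 2) (-t) t :=
    (((hasDerivAt_pow 2 t).neg).div_const 2).congr_deriv (by norm_num; ring)
  have h : HasDerivAt gaussian (rexp (-(t ^ 2) / 2) * -t : ℝ) t := hexponent.exp.ofReal_comp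
  rw [h.deriv, gaussian]
  push_cast
  ring

lemma norm_sq_deriv_gaussian (t : ℝ) : ‖deriv gaussian t‖ ^ 2 = t ^ 2 * rexp (-t ^ 2) := by
  rw [deriv_gaussian, norm_mul, mul_pow, norm_sq_gaussian, norm_neg, Complex.norm_real,
    Real.norm_eq_abs, sq_abs]

lemma integral_Ioi_pow_mul_exp_neg_sq (n : ℕ) :
    ∫ t in Ioi (0 : ℝ), t ^ n * rexp (-t ^ 2) = Real.Gamma ((n + 1) / 2) / 2 := by
  have h := integral_rpow_mul_exp_neg_rpow (p := 2) (q := n) two_pos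
    (by linarith [n.cast_nonneg (α := ℝ)])
  simp only [Real.rpow_natCast, Real.rpow_two] at h
  rw [h]
  ring

lemma integrableOn_Ioi_pow_mul_exp_neg_sq (n : ℕ) :
    IntegrableOn (fun t : ℝ => t ^ n * rexp (-t ^ 2)) (Ioi 0) := by
  have h := integrable_rpow_mul_exp_neg_mul_sq one_pos (s := n)
    (by linarith [n.cast_nonneg (α := ℝ)])
  simpa only [Real.rpow_natCast, neg_mul, one_mul] using h.integrableOn

lemma Theta0_lt_one : Theta0 < 1 := by
  have hint := integrableOn_Ioi_pow_mul_exp_neg_sq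
  have hmass : (fun t => ‖gaussian t‖ ^ 2) = fun t : ℝ => t ^ 0 * rexp (-t ^ 2) := by
    funext t
    rw [norm_sq_gaussian, pow_zero, one_mul]
  have henergy : (fun t => ‖deriv gaussian t‖ ^ 2 + (t + (-1)) ^ 2 * ‖gaussian t‖ ^ 2) = fun t =>
      2 * (t ^ 2 * rexp (-t ^ 2)) - 2 * (t ^ 1 * rexp (-t ^ 2)) + t ^ 0 * rexp (-t ^ 2) := by
    funext t
    rw [norm_sq_gaussian, norm_sq_deriv_gaussian]
    ring
  have key := Theta0_mul_integral_le (-1) contDiff_gaussian (hmass ▸ hint 0)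
    (henergy ▸ (((hint 2).const_mul 2).sub ((hint 1).const_mul 2)).add (hint 0))
  have hmoment₀ : ∫ t in Ioi (0 : ℝ), t ^ 0 * rexp (-t ^ 2) = √π / 2 := by
    rw [integral_Ioi_pow_mul_exp_neg_sq, Nat.cast_zero, zero_add, Real.Gamma_one_half_eq]
  have hmoment₁ : ∫ t in Ioi (0 : ℝ), t ^ 1 * rexp (-t ^ 2) = 1 / 2 := by
    rw [integral_Ioi_pow_mul_exp_neg_sq]
    norm_num
  have hmoment₂ : ∫ t in Ioi (0 : ℝ), t ^ 2 * rexp (-t ^ 2) = √π / 4 := by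
    rw [integral_Ioi_pow_mul_exp_neg_sq, show ((2 : ℕ) + 1 : ℝ) / 2 = 1 / 2 + 1 by norm_num,
      Real.Gamma_add_one (by norm_num), Real.Gamma_one_half_eq]
    ring
  rw [hmass, henergy,
    integral_add (by exact ((hint 2).const_mul 2).sub ((hint 1).const_mul 2)) (hint 0),
    integral_sub ((hint 2).const_mul 2) ((hint 1).const_mul 2), integral_const_mul,
    integral_const_mul, hmoment₀, hmoment₁, hmoment₂] at key
  have hπ : √π < 2 := by
    rw [Real.sqrt_lt' two_pos]
    linarith [Real.pi_lt_four]
  nlinarith [Real.sqrt_pos.2 Real.pi_pos]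

/-- The quadratic form of `-d²/dt² + (t - p)² - Θ₀` on `(0, L)`: the amount by which `u` fails to
attain `Θ₀` in the de Gennes problem with `ξ = -p`. -/
def deGennesExcess (p L : ℝ) (u : ℝ → ℂ) : ℝ :=
  ∫ t in (0 : ℝ)..L, (‖deriv u t‖ ^ 2 + ((t - p) ^ 2 - Theta0) * ‖u t‖ ^ 2)

section HalfLine

variable {p L s : ℝ} {u : ℝ → ℂ}

lemma deriv_eq_zero_of_forall_ge {F : Type*} [NormedAddCommGroup F] [NormedSpace ℝ F] {v : ℝ → F}
    (hzero : ∀ t, L ≤ t → v t = 0) {t : ℝ} (ht : L < t) : deriv v t = 0 := by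
  have hlocal : v =ᶠ[𝓝 t] fun _ => 0 := by
    filter_upwards [Ioi_mem_nhds ht] with r hr using hzero r (le_of_lt hr)
  rw [hlocal.deriv_eq, deriv_const]

lemma deGennesExcess_nonneg (hu : ContDiff ℝ 1 u) (hL : 0 ≤ L) (hzero : ∀ t, L ≤ t → u t = 0) :
    0 ≤ deGennesExcess p L u := by
  have hcont := hu.continuous
  have := hu.continuous_deriv le_rfl
  have hvanish : ∀ t ∈ Ioi 0 \ Ioc 0 L, L < t := fun t ht => by
    by_contra! h
    exact ht.2 ⟨ht.1, h⟩
  have hmass : ∀ t ∈ Ioi 0 \ Ioc 0 L, ‖u t‖ ^ 2 = 0 := fun t ht => by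
    simp [hzero t (hvanish t ht).le]
  have henergy : ∀ t ∈ Ioi 0 \ Ioc 0 L, ‖deriv u t‖ ^ 2 + (t + -p) ^ 2 * ‖u t‖ ^ 2 = 0 :=
    fun t ht => by simp [hzero t (hvanish t ht).le, deriv_eq_zero_of_forall_ge hzero (hvanish t ht)]
  have imass : IntervalIntegrable (fun t => ‖u t‖ ^ 2) volume 0 L :=
    Continuous.intervalIntegrable (by fun_prop) _ _
  have ienergy : IntervalIntegrable
      (fun t => ‖deriv u t‖ ^ 2 + (t + -p) ^ 2 * ‖u t‖ ^ 2) volume 0 L :=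
    Continuous.intervalIntegrable (by fun_prop) _ _
  have key := Theta0_mul_integral_le (-p) hu
    (((intervalIntegrable_iff_integrableOn_Ioc_of_le hL).1 imass).of_forall_sdiff_eq_zero
      measurableSet_Ioi hmass)
    (((intervalIntegrable_iff_integrableOn_Ioc_of_le hL).1 ienergy).of_forall_sdiff_eq_zero
      measurableSet_Ioi henergy)
  rw [setIntegral_eq_of_subset_of_forall_sdiff_eq_zero measurableSet_Ioi Ioc_subset_Ioi_self hmass,
    setIntegral_eq_of_subset_of_forall_sdiff_eq_zero measurableSet_Ioi Ioc_subset_Ioi_self henergy,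
    ← intervalIntegral.integral_of_le hL, ← intervalIntegral.integral_of_le hL, ← sub_nonneg,
    ← intervalIntegral.integral_const_mul,
    ← intervalIntegral.integral_sub ienergy (imass.const_mul _)] at key
  refine key.trans_eq (intervalIntegral.integral_congr fun t _ => ?_)
  ring

lemma deGennesExcess_eq_add (hu : ContDiff ℝ 1 u) (p s L : ℝ) :
    deGennesExcess p L u = deGennesExcess p s u +
      deGennesExcess (p - s) (L - s) (fun t => u (t + s)) := by
  have hcont := hu.continuous
  have := hu.continuous_deriv le_rfl
  have hdensity : Continuous fun t => ‖deriv u t‖ ^ 2 + ((t - p) ^ 2 - Theta0) * ‖u t‖ ^ 2 := by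
    fun_prop
  have hshift := intervalIntegral.integral_comp_add_right (a := 0) (b := L - s)
    (fun t => ‖deriv u t‖ ^ 2 + ((t - p) ^ 2 - Theta0) * ‖u t‖ ^ 2) s
  rw [zero_add, sub_add_cancel] at hshift
  unfold deGennesExcess
  rw [← intervalIntegral.integral_add_adjacent_intervals (hdensity.intervalIntegrable 0 s)
    (hdensity.intervalIntegrable s L), ← hshift]
  congr 1
  refine intervalIntegral.integral_congr fun t _ => ?_
  simp only [deriv_comp_add_const]
  ring

lemma deGennesExcess_mono (hu : ContDiff ℝ 1 u) (hsL : s ≤ L) (hzero : ∀ t, L ≤ t → u t = 0) :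
    deGennesExcess p s u ≤ deGennesExcess p L u := by
  rw [deGennesExcess_eq_add hu p s L, le_add_iff_nonneg_right]
  exact deGennesExcess_nonneg (hu.comp (by fun_prop)) (sub_nonneg.2 hsL)
    fun t ht => hzero _ (by linarith)

/-- A smooth approximation of `max t 0`. Composing with it extends a function on the half-line to
the left by (nearly) a constant, without matching derivatives at `0`. -/
def smoothPosPart (δ t : ℝ) : ℝ := (t + √(t ^ 2 + δ ^ 2)) / 2

lemma max_zero_le_smoothPosPart (δ t : ℝ) : max t 0 ≤ smoothPosPart δ t := by
  have h : |t| ≤ √(t ^ 2 + δ ^ 2) := Real.abs_le_sqrt (by nlinarith [sq_nonneg δ])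
  unfold smoothPosPart
  apply max_le <;> linarith [le_abs_self t, neg_abs_le t]

lemma contDiff_smoothPosPart {δ : ℝ} (hδ : 0 < δ) : ContDiff ℝ 1 (smoothPosPart δ) :=
  (contDiff_id.add ((by fun_prop : ContDiff ℝ 1 fun t : ℝ => t ^ 2 + δ ^ 2).sqrt
    fun t => by positivity)).div_const 2

lemma deriv_smoothPosPart {δ : ℝ} (hδ : 0 < δ) (t : ℝ) :
    deriv (smoothPosPart δ) t = (1 + t / √(t ^ 2 + δ ^ 2)) / 2 := by
  have hsq : HasDerivAt (fun t : ℝ => t ^ 2 + δ ^ 2) (2 * t) t := by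
    simpa using (hasDerivAt_pow 2 t).add_const (δ ^ 2)
  have h := (((hasDerivAt_id t).add (hsq.sqrt (by positivity))).div_const 2).congr_deriv
    (f' := _) (g' := (1 + t / √(t ^ 2 + δ ^ 2)) / 2) (by field_simp)
  exact h.deriv

lemma abs_deriv_smoothPosPart_le_one {δ : ℝ} (hδ : 0 < δ) (t : ℝ) :
    |deriv (smoothPosPart δ) t| ≤ 1 := by
  have hratio : |t / √(t ^ 2 + δ ^ 2)| ≤ 1 := by
    rw [abs_div, abs_of_nonneg (Real.sqrt_nonneg _)]
    exact div_le_one_of_le₀ (Real.abs_le_sqrt (by nlinarith [sq_nonneg δ])) (Real.sqrt_nonneg _)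
  rw [deriv_smoothPosPart hδ]
  rw [abs_le] at hratio ⊢
  constructor <;> linarith [hratio.1, hratio.2]

lemma tendsto_sqrt_sq_add_sq (t : ℝ) :
    Tendsto (fun δ : ℝ => √(t ^ 2 + δ ^ 2)) (𝓝[>] 0) (𝓝 |t|) := by
  have h : Continuous fun δ : ℝ => √(t ^ 2 + δ ^ 2) := by fun_prop
  simpa [Real.sqrt_sq_eq_abs] using (h.tendsto 0).mono_left nhdsWithin_le_nhds

lemma tendsto_smoothPosPart (t : ℝ) :
    Tendsto (fun δ => smoothPosPart δ t) (𝓝[>] 0) (𝓝 (max t 0)) := by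
  have h := ((tendsto_sqrt_sq_add_sq t).const_add t).div_const 2
  have hmax : (t + |t|) / 2 = max t 0 := by
    rcases le_total 0 t with ht | ht
    · rw [abs_of_nonneg ht, max_eq_left ht]; ring
    · rw [abs_of_nonpos ht, max_eq_right ht]; ring
  rwa [hmax] at h

lemma tendsto_deriv_smoothPosPart {t : ℝ} (ht : t ≠ 0) :
    Tendsto (fun δ => deriv (smoothPosPart δ) t) (𝓝[>] 0) (𝓝 (if 0 < t then 1 else 0)) := by
  have h := (((tendsto_const_nhds (x := t)).div (tendsto_sqrt_sq_add_sq t)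
    (abs_ne_zero.2 ht)).const_add 1).div_const 2
  have hlimit : (1 + t / |t|) / 2 = if 0 < t then 1 else 0 := by
    rcases lt_or_gt_of_ne ht with h | h
    · rw [if_neg h.not_gt, abs_of_neg h, div_neg, div_self ht]; norm_num
    · rw [if_pos h, abs_of_pos h, div_self ht]; norm_num
  rw [hlimit] at h
  refine h.congr' ?_
  filter_upwards [self_mem_nhdsWithin] with δ hδ using (deriv_smoothPosPart hδ t).symm

lemma hasDerivAt_comp_smoothPosPart_sub (hu : ContDiff ℝ 1 u) {δ : ℝ} (hδ : 0 < δ) (t : ℝ) :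
    HasDerivAt (fun t => u (smoothPosPart δ (t - s)))
      (deriv (smoothPosPart δ) (t - s) • deriv u (smoothPosPart δ (t - s))) t :=
  ((hu.differentiable one_ne_zero _).hasDerivAt.scomp (t - s)
    ((contDiff_smoothPosPart hδ).differentiable one_ne_zero _).hasDerivAt).comp_sub_const t s

lemma tendsto_extension_energy_density (hu : ContDiff ℝ 1 u) (p : ℝ) {t : ℝ} (hts : t ≠ s) :
    Tendsto (fun δ => ‖deriv (fun t => u (smoothPosPart δ (t - s))) t‖ ^ 2 +
        ((t - (p + s)) ^ 2 - Theta0) * ‖u (smoothPosPart δ (t - s))‖ ^ 2) (𝓝[>] 0)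
      (𝓝 (‖(if 0 < t - s then 1 else 0 : ℝ) • deriv u (max (t - s) 0)‖ ^ 2 +
        ((t - (p + s)) ^ 2 - Theta0) * ‖u (max (t - s) 0)‖ ^ 2)) := by
  have hu_lim := (hu.continuous.tendsto _).comp (tendsto_smoothPosPart (t - s))
  have hu'_lim := (tendsto_deriv_smoothPosPart (sub_ne_zero.2 hts)).smul
    (((hu.continuous_deriv le_rfl).tendsto _).comp (tendsto_smoothPosPart (t - s)))
  refine ((hu'_lim.norm.pow 2).add ((hu_lim.norm.pow 2).const_mul _)).congr' ?_
  filter_upwards [self_mem_nhdsWithin] with δ hδ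
  rw [(hasDerivAt_comp_smoothPosPart_sub hu hδ t).deriv]
  rfl

lemma exists_norm_le_of_eq_zero {F : Type*} [NormedAddCommGroup F] {v : ℝ → F}
    (hv : Continuous v) (hzero : ∀ t, L < t → v t = 0) : ∃ M, ∀ t, 0 ≤ t → ‖v t‖ ≤ M := by
  obtain ⟨M, hM⟩ := (isCompact_Icc (a := 0) (b := L)).exists_bound_of_continuousOn hv.continuousOn
  refine ⟨max M 0, fun t ht => ?_⟩
  rcases le_or_gt t L with htL | htL
  · exact (hM t ⟨ht, htL⟩).trans (le_max_left _ _)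
  · simp [hzero t htL]

lemma tendsto_deGennesExcess_extension (hu : ContDiff ℝ 1 u) (hzero : ∀ t, L ≤ t → u t = 0)
    (p T : ℝ) :
    Tendsto (fun δ => deGennesExcess (p + s) T fun t => u (smoothPosPart δ (t - s))) (𝓝[>] 0)
      (𝓝 (∫ t in (0 : ℝ)..T, (‖(if 0 < t - s then 1 else 0 : ℝ) • deriv u (max (t - s) 0)‖ ^ 2 +
        ((t - (p + s)) ^ 2 - Theta0) * ‖u (max (t - s) 0)‖ ^ 2))) := by
  have hcont' := hu.continuous_deriv le_rfl
  obtain ⟨M, hM⟩ := exists_norm_le_of_eq_zero hu.continuous fun t ht => hzero t ht.le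
  obtain ⟨M', hM'⟩ := exists_norm_le_of_eq_zero hcont' fun t => deriv_eq_zero_of_forall_ge hzero
  have hpos : ∀ δ t, 0 ≤ smoothPosPart δ t := fun δ t =>
    (le_max_right _ _).trans (max_zero_le_smoothPosPart δ t)
  refine intervalIntegral.tendsto_integral_filter_of_dominated_convergence
    (fun t => M' ^ 2 + ((t - (p + s)) ^ 2 + Theta0) * M ^ 2) ?_ ?_
    (Continuous.intervalIntegrable (by fun_prop) _ _) ?_
  · filter_upwards [self_mem_nhdsWithin] with δ hδ
    have hv : ContDiff ℝ 1 fun t => u (smoothPosPart δ (t - s)) :=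
      hu.comp ((contDiff_smoothPosPart hδ).comp (by fun_prop))
    exact (((hv.continuous_deriv le_rfl).norm.pow 2).add
      ((by fun_prop : Continuous fun t => (t - (p + s)) ^ 2 - Theta0).mul
        (hv.continuous.norm.pow 2))).aestronglyMeasurable
  · filter_upwards [self_mem_nhdsWithin] with δ hδ
    filter_upwards with t _
    have hmass := hM _ (hpos δ (t - s))
    have hkin : ‖deriv (fun t => u (smoothPosPart δ (t - s))) t‖ ≤ M' := by
      rw [(hasDerivAt_comp_smoothPosPart_sub hu hδ t).deriv, norm_smul, Real.norm_eq_abs]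
      exact (mul_le_of_le_one_left (norm_nonneg _) (abs_deriv_smoothPosPart_le_one hδ _)).trans
        (hM' _ (hpos δ (t - s)))
    have hpot : |(t - (p + s)) ^ 2 - Theta0| ≤ (t - (p + s)) ^ 2 + Theta0 := by
      rw [abs_le]
      constructor <;> linarith [sq_nonneg (t - (p + s)), Theta0_nonneg]
    refine (norm_add_le _ _).trans ?_
    rw [norm_mul, norm_pow, norm_pow, norm_norm, norm_norm, Real.norm_eq_abs]
    gcongr
    exact (abs_nonneg _).trans hpot
  · filter_upwards [compl_mem_ae_iff.2 (measure_singleton s)] with t hts _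
    exact tendsto_extension_energy_density hu p hts

lemma integral_extension_energy_density (hu : ContDiff ℝ 1 u) (p : ℝ) (hL : 0 ≤ L) (hs : 0 ≤ s) :
    ∫ t in (0 : ℝ)..L + s, (‖(if 0 < t - s then 1 else 0 : ℝ) • deriv u (max (t - s) 0)‖ ^ 2 +
        ((t - (p + s)) ^ 2 - Theta0) * ‖u (max (t - s) 0)‖ ^ 2) =
      (((p + s) ^ 3 - p ^ 3) / 3 - Theta0 * s) * ‖u 0‖ ^ 2 + deGennesExcess p L u := by
  have hcont := hu.continuous
  have := hu.continuous_deriv le_rfl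
  set f : ℝ → ℝ := fun t => ‖(if 0 < t - s then 1 else 0 : ℝ) • deriv u (max (t - s) 0)‖ ^ 2 +
    ((t - (p + s)) ^ 2 - Theta0) * ‖u (max (t - s) 0)‖ ^ 2
  set g : ℝ → ℝ := fun t => ‖deriv u t‖ ^ 2 + ((t - p) ^ 2 - Theta0) * ‖u t‖ ^ 2
  have hleft : EqOn f (fun t => ((t - (p + s)) ^ 2 - Theta0) * ‖u 0‖ ^ 2) (uIcc 0 s) := by
    intro t ht
    rw [uIcc_of_le hs] at ht
    simp [f, not_lt.2 ht.2, max_eq_right (sub_nonpos.2 ht.2)]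
  have hright : EqOn f (fun t => g (t - s)) (uIoo s (L + s)) := by
    intro t ht
    rw [uIoo_of_le (by linarith)] at ht
    simp only [f, g, if_pos (sub_pos.2 ht.1), one_smul, max_eq_left (sub_pos.2 ht.1).le]
    ring
  have hint : ∀ a b, IntervalIntegrable g volume a b :=
    fun a b => Continuous.intervalIntegrable (by fun_prop) a b
  have hint_left : IntervalIntegrable f volume 0 s :=
    IntervalIntegrable.congr (fun t ht => (hleft (uIoc_subset_uIcc ht)).symm)
      (Continuous.intervalIntegrable (by fun_prop) 0 s)
  have hint_right : IntervalIntegrable f volume s (L + s) := by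
    refine IntervalIntegrable.congr_uIoo ?_ hright.symm
    simpa using (hint 0 L).comp_sub_right s
  rw [← intervalIntegral.integral_add_adjacent_intervals hint_left hint_right,
    intervalIntegral.integral_congr hleft, intervalIntegral.integral_congr_uIoo hright,
    intervalIntegral.integral_comp_sub_right g, sub_self, add_sub_cancel_right,
    intervalIntegral.integral_mul_const, intervalIntegral.integral_sub
      (Continuous.intervalIntegrable (by fun_prop) 0 s) intervalIntegrable_const,
    intervalIntegral.integral_comp_sub_right (fun t => t ^ 2), integral_pow,
    intervalIntegral.integral_const, deGennesExcess, smul_eq_mul]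
  push_cast
  ring

lemma deGennesExcess_add_extension_nonneg (hu : ContDiff ℝ 1 u) (hL : 0 ≤ L) (hs : 0 ≤ s)
    (hzero : ∀ t, L ≤ t → u t = 0) :
    0 ≤ (((p + s) ^ 3 - p ^ 3) / 3 - Theta0 * s) * ‖u 0‖ ^ 2 + deGennesExcess p L u := by
  rw [← integral_extension_energy_density hu p hL hs]
  refine ge_of_tendsto (tendsto_deGennesExcess_extension hu hzero p (L + s)) ?_
  filter_upwards [self_mem_nhdsWithin] with δ hδ
  refine deGennesExcess_nonneg (hu.comp ((contDiff_smoothPosPart hδ).comp (by fun_prop)))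
    (by positivity) fun t ht => hzero _ ?_
  exact (le_sub_iff_add_le.2 ht).trans
    ((le_max_left _ _).trans (max_zero_le_smoothPosPart δ _))

lemma neg_norm_sq_add_le_mul_inner {F : Type*} [NormedAddCommGroup F] [InnerProductSpace ℝ F]
    (a b : F) (c : ℝ) : -(‖b‖ ^ 2 + c ^ 2 * ‖a‖ ^ 2) ≤ 2 * c * inner ℝ a b := by
  have h := sq_nonneg ‖b + c • a‖
  rw [norm_add_sq_real, norm_smul, inner_smul_right, real_inner_comm, mul_pow, Real.norm_eq_abs,
    sq_abs] at h
  linarith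

lemma hasDerivAt_sub_mul_norm_sq {F : Type*} [NormedAddCommGroup F] [InnerProductSpace ℝ F]
    {v : ℝ → F} (hv : ContDiff ℝ 1 v) (c t : ℝ) :
    HasDerivAt (fun t => (t - c) * ‖v t‖ ^ 2)
      (‖v t‖ ^ 2 + 2 * (t - c) * inner ℝ (v t) (deriv v t)) t := by
  refine (((hasDerivAt_id t).sub_const c).mul
    (hv.differentiable one_ne_zero t).hasDerivAt.norm_sq).congr_deriv ?_
  simp only [id]
  ring

lemma mul_norm_sq_zero_le_integral {F : Type*} [NormedAddCommGroup F] [InnerProductSpace ℝ F]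
    {v : ℝ → F} (hv : ContDiff ℝ 1 v) (hs : 0 ≤ s) :
    s * ‖v 0‖ ^ 2 ≤
      2 * (∫ t in (0 : ℝ)..s, ‖v t‖ ^ 2) + s ^ 2 * ∫ t in (0 : ℝ)..s, ‖deriv v t‖ ^ 2 := by
  have hcont := hv.continuous
  have := hv.continuous_deriv le_rfl
  have hftc := intervalIntegral.integral_eq_sub_of_hasDerivAt (a := 0) (b := s)
    (fun t _ => hasDerivAt_sub_mul_norm_sq hv s t)
    (Continuous.intervalIntegrable (by fun_prop) _ _)
  have hmass : IntervalIntegrable (fun t => 2 * ‖v t‖ ^ 2) volume 0 s :=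
    Continuous.intervalIntegrable (by fun_prop) _ _
  have hkin : IntervalIntegrable (fun t => s ^ 2 * ‖deriv v t‖ ^ 2) volume 0 s :=
    Continuous.intervalIntegrable (by fun_prop) _ _
  rw [sub_self, zero_mul, zero_sub, zero_sub, neg_mul, neg_neg] at hftc
  rw [← hftc, ← intervalIntegral.integral_const_mul, ← intervalIntegral.integral_const_mul,
    ← intervalIntegral.integral_add hmass hkin]
  refine intervalIntegral.integral_mono_on hs (Continuous.intervalIntegrable (by fun_prop) _ _)
    (hmass.add hkin) fun t ht => ?_
  have hyoung := neg_norm_sq_add_le_mul_inner (deriv v t) (v t) (s - t)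
  rw [real_inner_comm] at hyoung
  have hsq : (s - t) ^ 2 ≤ s ^ 2 := pow_le_pow_left₀ (sub_nonneg.2 ht.2) (by linarith [ht.1]) 2
  linarith [mul_le_mul_of_nonneg_right hsq (sq_nonneg ‖deriv v t‖)]

lemma one_sub_Theta0_mul_integral_le (hu : ContDiff ℝ 1 u) (hL : 0 ≤ L) (hzero : u L = 0) (p : ℝ) :
    (1 - Theta0) * (∫ t in (0 : ℝ)..L, ‖u t‖ ^ 2) ≤ deGennesExcess p L u + p * ‖u 0‖ ^ 2 := by
  have hcont := hu.continuous
  have := hu.continuous_deriv le_rfl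
  have hftc := intervalIntegral.integral_eq_sub_of_hasDerivAt (a := 0) (b := L)
    (fun t _ => hasDerivAt_sub_mul_norm_sq hu p t)
    (Continuous.intervalIntegrable (by fun_prop) _ _)
  rw [hzero, norm_zero, zero_pow two_ne_zero, mul_zero, zero_sub, zero_sub, neg_mul, neg_neg]
    at hftc
  unfold deGennesExcess
  rw [← hftc, ← intervalIntegral.integral_const_mul,
    ← intervalIntegral.integral_add (Continuous.intervalIntegrable (by fun_prop) _ _)
      (Continuous.intervalIntegrable (by fun_prop) _ _)]
  refine intervalIntegral.integral_mono_on hL (Continuous.intervalIntegrable (by fun_prop) _ _)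
    (Continuous.intervalIntegrable (by fun_prop) _ _) fun t _ => ?_
  linarith [neg_norm_sq_add_le_mul_inner (u t) (deriv u t) (t - p)]

lemma boundary_le_deGennesExcess_of_le (hu : ContDiff ℝ 1 u) (hL : 0 ≤ L)
    (hzero : ∀ t, L ≤ t → u t = 0) (hp : p ≤ √Theta0) :
    (p - √Theta0) ^ 2 * (p * ‖u 0‖ ^ 2) ≤ deGennesExcess p L u := by
  have hsqrt := Real.sq_sqrt Theta0_nonneg
  have hext := deGennesExcess_add_extension_nonneg (p := p) hu hL (sub_nonneg.2 hp) hzero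
  have hcoef : ((p + (√Theta0 - p)) ^ 3 - p ^ 3) / 3 - Theta0 * (√Theta0 - p) =
      -((p - √Theta0) ^ 2 * p) - 2 / 3 * (√Theta0 - p) ^ 3 := by
    linear_combination (√Theta0 - p) * hsqrt
  have hcube : 0 ≤ (√Theta0 - p) ^ 3 * ‖u 0‖ ^ 2 :=
    mul_nonneg (pow_nonneg (sub_nonneg.2 hp) 3) (sq_nonneg _)
  rw [hcoef] at hext
  linarith

lemma integral_add_mul_integral_le_deGennesExcess (hu : ContDiff ℝ 1 u)
    (hzero : ∀ t, L ≤ t → u t = 0) (hs : 0 ≤ s) (hsL : s ≤ L) (hsp : 2 * s ≤ p - √Theta0) :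
    (∫ t in (0 : ℝ)..s, ‖deriv u t‖ ^ 2) +
      (p - √Theta0) * p / 4 * (∫ t in (0 : ℝ)..s, ‖u t‖ ^ 2) ≤ deGennesExcess p L u := by
  have hcont := hu.continuous
  have := hu.continuous_deriv le_rfl
  have hsqrt := Real.sq_sqrt Theta0_nonneg
  have hpos := Real.sqrt_nonneg Theta0
  refine le_trans ?_ (deGennesExcess_mono hu hsL hzero)
  unfold deGennesExcess
  rw [← intervalIntegral.integral_const_mul,
    ← intervalIntegral.integral_add (Continuous.intervalIntegrable (by fun_prop) _ _)
      (Continuous.intervalIntegrable (by fun_prop) _ _)]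
  refine intervalIntegral.integral_mono_on hs (Continuous.intervalIntegrable (by fun_prop) _ _)
    (Continuous.intervalIntegrable (by fun_prop) _ _) fun t ht => ?_
  have hpotential : (p - √Theta0) * p / 4 ≤ (t - p) ^ 2 - Theta0 := by
    nlinarith [ht.1, ht.2]
  linarith [mul_le_mul_of_nonneg_right hpotential (sq_nonneg ‖u t‖)]

lemma boundary_le_deGennesExcess_of_lt (hu : ContDiff ℝ 1 u) (hL : 1 ≤ L)
    (hzero : ∀ t, L ≤ t → u t = 0) (hp : √Theta0 < p) :
    min ((p - √Theta0) ^ 2) 1 * (p * ‖u 0‖ ^ 2) ≤ 16 * deGennesExcess p L u := by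
  have hsqrt_le : √Theta0 ≤ 1 := Real.sqrt_le_one.2 Theta0_lt_one.le
  have hp₀ : 0 < p := (Real.sqrt_nonneg _).trans_lt hp
  set e := p - √Theta0
  have he₀ : 0 < e := sub_pos.2 hp
  set m := min (e ^ 2) 1
  have hm₀ : 0 ≤ m := le_min (sq_nonneg _) zero_le_one
  have hm₁ : m ≤ 1 := min_le_right _ _
  obtain ⟨s, hs⟩ : ∃ s, 2 * e * s = m := ⟨m / (2 * e), by field_simp⟩
  have hs₀ : 0 ≤ s := nonneg_of_mul_nonneg_right (hs ▸ hm₀) (by positivity)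
  have hse : 2 * s ≤ e := by
    have : m ≤ e ^ 2 := min_le_left _ _
    nlinarith
  have hs₁ : s ≤ 1 := by nlinarith
  have hbulk := integral_add_mul_integral_le_deGennesExcess hu hzero hs₀ (hs₁.trans hL) hse
  have htrace := mul_norm_sq_zero_le_integral hu hs₀
  have hcoef : 2 * e * p * s ^ 2 ≤ 16 := by
    have hps : p * s ≤ 16 := by nlinarith
    calc 2 * e * p * s ^ 2 = m * (p * s) := by rw [← hs]; ring
      _ ≤ 1 * (p * s) := by gcongr
      _ ≤ 16 := by linarith
  have hkin : 0 ≤ ∫ t in (0 : ℝ)..s, ‖deriv u t‖ ^ 2 :=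
    intervalIntegral.integral_nonneg hs₀ fun t _ => by positivity
  calc m * (p * ‖u 0‖ ^ 2) = 2 * e * p * (s * ‖u 0‖ ^ 2) := by rw [← hs]; ring
    _ ≤ 2 * e * p * (2 * (∫ t in (0 : ℝ)..s, ‖u t‖ ^ 2) +
        s ^ 2 * ∫ t in (0 : ℝ)..s, ‖deriv u t‖ ^ 2) := by gcongr
    _ ≤ 16 * deGennesExcess p L u := by nlinarith [mul_le_mul_of_nonneg_right hcoef hkin]

theorem deGennesExcess_gap (hu : ContDiff ℝ 1 u) (hL : 1 ≤ L) (hzero : ∀ t, L ≤ t → u t = 0) :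
    (1 - Theta0) / 17 * min ((p - √Theta0) ^ 2) 1 * (∫ t in (0 : ℝ)..L, ‖u t‖ ^ 2) ≤
      deGennesExcess p L u := by
  have hL₀ : 0 ≤ L := zero_le_one.trans hL
  have hexcess := deGennesExcess_nonneg (p := p) hu hL₀ hzero
  have hvirial := one_sub_Theta0_mul_integral_le hu hL₀ (hzero L le_rfl) p
  set m := min ((p - √Theta0) ^ 2) 1
  have hm₀ : 0 ≤ m := le_min (sq_nonneg _) zero_le_one
  have hm₁ : m ≤ 1 := min_le_right _ _
  have hboundary : m * (p * ‖u 0‖ ^ 2) ≤ 16 * deGennesExcess p L u := by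
    rcases lt_or_ge √Theta0 p with hp | hp
    · exact boundary_le_deGennesExcess_of_lt hu hL hzero hp
    rcases le_or_gt p 0 with hp₀ | hp₀
    · have hneg : p * ‖u 0‖ ^ 2 ≤ 0 := mul_nonpos_of_nonpos_of_nonneg hp₀ (sq_nonneg _)
      linarith [mul_nonpos_of_nonneg_of_nonpos hm₀ hneg]
    · calc m * (p * ‖u 0‖ ^ 2) ≤ (p - √Theta0) ^ 2 * (p * ‖u 0‖ ^ 2) := by
            gcongr; exact min_le_left _ _
        _ ≤ deGennesExcess p L u := boundary_le_deGennesExcess_of_le hu hL₀ hzero hp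
        _ ≤ 16 * deGennesExcess p L u := by linarith
  have hscaled := mul_le_mul_of_nonneg_left hvirial hm₀
  linarith [mul_le_mul_of_nonneg_right hm₁ hexcess]

/-- The magnetic strip form: the de Gennes form after the rescaling `t = √b r`. -/
def stripEnergy (b p : ℝ) (v : ℝ → ℂ) : ℝ :=
  ∫ t in (0 : ℝ)..1, (‖deriv v t‖ ^ 2 + (p - b * t) ^ 2 * ‖v t‖ ^ 2)

variable {b : ℝ} {v : ℝ → ℂ}

lemma stripEnergy_sub_eq (hv : ContDiff ℝ 1 v) (hb : 0 < b) (p : ℝ) :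
    stripEnergy b p v - b * Theta0 * (∫ t in (0 : ℝ)..1, ‖v t‖ ^ 2) =
      √b * deGennesExcess (p / √b) √b fun t => v (t / √b) := by
  have hcont := hv.continuous
  have := hv.continuous_deriv le_rfl
  have hsqrt : 0 < √b := Real.sqrt_pos.2 hb
  have hsq := Real.sq_sqrt hb.le
  have hderiv : ∀ t, deriv (fun t => v (t / √b)) t = (√b)⁻¹ • deriv v (t / √b) := fun t => by
    simp only [div_eq_inv_mul]
    exact deriv_comp_mul_left (√b)⁻¹ v t
  have hsubst := intervalIntegral.integral_comp_div (a := 0) (b := √b)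
    (fun t => ‖deriv v t‖ ^ 2 + (p - b * t) ^ 2 * ‖v t‖ ^ 2 - b * Theta0 * ‖v t‖ ^ 2) hsqrt.ne'
  rw [zero_div, div_self hsqrt.ne', smul_eq_mul] at hsubst
  unfold stripEnergy deGennesExcess
  rw [← intervalIntegral.integral_const_mul, ← intervalIntegral.integral_sub
    (Continuous.intervalIntegrable (by fun_prop) _ _)
    (Continuous.intervalIntegrable (by fun_prop) _ _)]
  refine mul_left_cancel₀ hsqrt.ne' (hsubst.symm.trans ?_)
  rw [← mul_assoc, ← sq, hsq, ← intervalIntegral.integral_const_mul]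
  refine intervalIntegral.integral_congr fun t _ => ?_
  simp only [hderiv]
  rw [norm_smul, mul_pow, Real.norm_eq_abs, sq_abs]
  field_simp
  rw [hsq]
  linear_combination (p ^ 2 - b * t ^ 2) * ‖v (t / √b)‖ ^ 2 * hsq

lemma mul_Theta0_mul_integral_le_stripEnergy (hv : ContDiff ℝ 1 v) (hb : 0 ≤ b)
    (hzero : ∀ t, 1 ≤ t → v t = 0) (p : ℝ) :
    b * Theta0 * (∫ t in (0 : ℝ)..1, ‖v t‖ ^ 2) ≤ stripEnergy b p v := by
  rcases hb.eq_or_lt with rfl | hb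
  · rw [zero_mul, zero_mul]
    exact intervalIntegral.integral_nonneg zero_le_one fun t _ => by positivity
  have hsqrt : 0 < √b := Real.sqrt_pos.2 hb
  rw [← sub_nonneg, stripEnergy_sub_eq hv hb]
  exact mul_nonneg hsqrt.le (deGennesExcess_nonneg (hv.comp (by fun_prop)) hsqrt.le
    fun t ht => hzero _ ((one_le_div hsqrt).2 ht))

theorem stripEnergy_gap (hv : ContDiff ℝ 1 v) (hb : 1 ≤ b) (hzero : ∀ t, 1 ≤ t → v t = 0) (p : ℝ) :
    b * (Theta0 + (1 - Theta0) / 17 * min ((p / √b - √Theta0) ^ 2) 1) *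
      (∫ t in (0 : ℝ)..1, ‖v t‖ ^ 2) ≤ stripEnergy b p v := by
  have hb₀ : 0 < b := zero_lt_one.trans_le hb
  have hsqrt : 1 ≤ √b := Real.one_le_sqrt.2 hb
  have hsqrt₀ : 0 < √b := zero_lt_one.trans_le hsqrt
  have hgap := deGennesExcess_gap (p := p / √b) (u := fun t => v (t / √b))
    (hv.comp (by fun_prop)) hsqrt fun t ht => hzero _ ((one_le_div hsqrt₀).2 ht)
  have hmass :=
    intervalIntegral.integral_comp_div (a := 0) (b := √b) (fun t => ‖v t‖ ^ 2) hsqrt₀.ne'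
  rw [zero_div, div_self hsqrt₀.ne', smul_eq_mul] at hmass
  have h := mul_le_mul_of_nonneg_left hgap hsqrt₀.le
  rw [hmass, ← stripEnergy_sub_eq hv hb₀] at h
  linear_combination h - (1 - Theta0) / 17 * min ((p / √b - √Theta0) ^ 2) 1 *
    (∫ t in (0 : ℝ)..1, ‖v t‖ ^ 2) * Real.sq_sqrt hb₀.le

end HalfLine

/-! ### The divergence theorem on the unit ball -/

section UnitBall

variable {E : Type*} [NormedAddCommGroup E]

lemma deriv_smoothTransition_of_notMem_Icc {t : ℝ} (ht : t ∉ Icc (0 : ℝ) 1) :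
    deriv smoothTransition t = 0 := by
  rw [mem_Icc, not_and_or, not_le, not_le] at ht
  rcases ht with ht | ht
  · have hlocal : smoothTransition =ᶠ[𝓝 t] fun _ => 0 := by
      filter_upwards [Iio_mem_nhds ht] with r hr
      exact smoothTransition.zero_of_nonpos (le_of_lt hr)
    rw [hlocal.deriv_eq, deriv_const]
  · have hlocal : smoothTransition =ᶠ[𝓝 t] fun _ => 1 := by
      filter_upwards [Ioi_mem_nhds ht] with r hr
      exact smoothTransition.one_of_one_le (le_of_lt hr)
    rw [hlocal.deriv_eq, deriv_const]

lemma continuous_deriv_smoothTransition : Continuous (deriv smoothTransition) :=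
  (smoothTransition.contDiff (n := 1)).continuous_deriv le_rfl

lemma exists_abs_deriv_smoothTransition_le : ∃ M, 0 ≤ M ∧ ∀ t, |deriv smoothTransition t| ≤ M := by
  obtain ⟨M, hM⟩ := (isCompact_Icc (a := (0 : ℝ)) (b := 1)).exists_bound_of_continuousOn
    continuous_deriv_smoothTransition.continuousOn
  refine ⟨max M 0, le_max_right _ _, fun t => ?_⟩
  by_cases ht : t ∈ Icc (0 : ℝ) 1
  · exact (hM t ht).trans (le_max_left _ _)
  · rw [deriv_smoothTransition_of_notMem_Icc ht, abs_zero]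
    exact le_max_right _ _

/-- A cutoff supported in the closed unit ball and increasing to `1` on the open ball as
`N → ∞`. -/
def ballCutoff (N : ℝ) (x : E) : ℝ := smoothTransition (N * (1 - ‖x‖ ^ 2))

lemma ballCutoff_of_one_le_norm {N : ℝ} (hN : 0 ≤ N) {x : E} (hx : 1 ≤ ‖x‖) :
    ballCutoff N x = 0 :=
  smoothTransition.zero_of_nonpos (mul_nonpos_of_nonneg_of_nonpos hN (by nlinarith))

lemma eventually_one_lt_mul_one_sub_norm_sq {x : E} (hx : x ∈ Metric.ball (0 : E) 1) :
    ∀ᶠ N : ℝ in atTop, 1 < N * (1 - ‖x‖ ^ 2) := by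
  rw [mem_ball_zero_iff] at hx
  have hpos : 0 < 1 - ‖x‖ ^ 2 := by nlinarith [norm_nonneg x]
  exact (tendsto_id.atTop_mul_const hpos).eventually_gt_atTop 1

variable [InnerProductSpace ℝ E]

lemma contDiff_ballCutoff (N : ℝ) : ContDiff ℝ 1 (ballCutoff N : E → ℝ) :=
  smoothTransition.contDiff.comp (contDiff_const.mul (contDiff_const.sub (contDiff_norm_sq ℝ)))

lemma fderiv_ballCutoff (N : ℝ) (x v : E) :
    fderiv ℝ (ballCutoff N) x v =
      -(2 * N * deriv smoothTransition (N * (1 - ‖x‖ ^ 2)) * inner ℝ x v) := by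
  have harg := ((hasStrictFDerivAt_norm_sq x).hasFDerivAt.const_sub 1).const_mul N
  have hcomp := ((smoothTransition.contDiff (n := 1)).differentiable one_ne_zero
    (N * (1 - ‖x‖ ^ 2))).hasDerivAt.comp_hasFDerivAt x harg
  rw [show (ballCutoff N : E → ℝ) = smoothTransition ∘ fun x => N * (1 - ‖x‖ ^ 2) from rfl,
    hcomp.fderiv]
  simp only [_root_.smul_apply, _root_.neg_apply, innerSL_apply_apply, smul_eq_mul, nsmul_eq_mul]
  push_cast
  ring

variable [FiniteDimensional ℝ E]

lemma hasCompactSupport_ballCutoff {N : ℝ} (hN : 0 ≤ N) :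
    HasCompactSupport (ballCutoff N : E → ℝ) := by
  refine HasCompactSupport.intro (isCompact_closedBall 0 1) fun x hx => ?_
  rw [mem_closedBall_zero_iff, not_le] at hx
  exact ballCutoff_of_one_le_norm hN hx.le

lemma exists_abs_le_mul_one_sub_norm {g : E → ℝ} (hg : ContDiff ℝ 1 g)
    (hsphere : ∀ x ∈ Metric.sphere (0 : E) 1, g x = 0) :
    ∃ K, 0 ≤ K ∧ ∀ x ∈ Metric.closedBall (0 : E) 1, |g x| ≤ K * (1 - ‖x‖) := by
  obtain ⟨K, hK⟩ := (isCompact_closedBall (0 : E) 1).exists_bound_of_continuousOn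
    (hg.continuous_fderiv one_ne_zero).continuousOn
  refine ⟨max K |g 0|, (abs_nonneg _).trans (le_max_right _ _), fun x hx => ?_⟩
  rcases eq_or_ne x 0 with rfl | hx₀
  · simp
  have hpos : 0 < ‖x‖ := norm_pos_iff.2 hx₀
  rw [mem_closedBall_zero_iff] at hx
  have hunit : ‖‖x‖⁻¹ • x‖ = 1 := by rw [norm_smul, norm_inv, norm_norm, inv_mul_cancel₀ hpos.ne']
  have hmvt := (convex_closedBall (0 : E) 1).norm_image_sub_le_of_norm_fderiv_le (𝕜 := ℝ) (f := g)
    (fun y _ => hg.differentiable one_ne_zero y) hK (x := ‖x‖⁻¹ • x) (y := x)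
    (by simp [hunit]) (by simpa using hx)
  have hdist : ‖x - ‖x‖⁻¹ • x‖ = 1 - ‖x‖ := by
    have hfactor : x - ‖x‖⁻¹ • x = (1 - ‖x‖⁻¹) • x := by rw [sub_smul, one_smul]
    have hinv : 1 - ‖x‖⁻¹ ≤ 0 := sub_nonpos.2 ((one_le_inv₀ hpos).2 hx)
    rw [hfactor, norm_smul, Real.norm_eq_abs, abs_of_nonpos hinv, neg_sub, sub_mul,
      inv_mul_cancel₀ hpos.ne', one_mul]
  rw [hsphere _ (mem_sphere_zero_iff_norm.2 hunit), sub_zero, hdist, Real.norm_eq_abs] at hmvt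
  exact hmvt.trans (mul_le_mul_of_nonneg_right (le_max_left _ _) (sub_nonneg.2 hx))

variable [MeasurableSpace E] [BorelSpace E]

lemma integrableOn_unitBall_of_continuous {F : Type*} [NormedAddCommGroup F] {f : E → F}
    (hf : Continuous f) (μ : Measure E) [IsFiniteMeasureOnCompacts μ] :
    IntegrableOn f (Metric.ball 0 1) μ :=
  (hf.continuousOn.integrableOn_compact (isCompact_closedBall 0 1)).mono_set
    Metric.ball_subset_closedBall

lemma tendsto_integral_ballCutoff_mul {f : E → ℝ} (hf : Continuous f) (μ : Measure E)
    [IsFiniteMeasureOnCompacts μ] :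
    Tendsto (fun N => ∫ x in Metric.ball (0 : E) 1, ballCutoff N x * f x ∂μ) atTop
      (𝓝 (∫ x in Metric.ball (0 : E) 1, f x ∂μ)) := by
  refine tendsto_integral_filter_of_dominated_convergence (fun x => ‖f x‖)
    (.of_forall fun N => ((contDiff_ballCutoff N).continuous.mul hf).aestronglyMeasurable)
    (.of_forall fun N => .of_forall fun x => ?_) (integrableOn_unitBall_of_continuous hf.norm μ) ?_
  · rw [norm_mul, Real.norm_eq_abs, ballCutoff, abs_of_nonneg (smoothTransition.nonneg _)]
    exact mul_le_of_le_one_left (norm_nonneg _) (smoothTransition.le_one _)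
  · rw [ae_restrict_iff' measurableSet_ball]
    filter_upwards with x hx
    refine tendsto_const_nhds.congr' ?_
    filter_upwards [eventually_one_lt_mul_one_sub_norm_sq hx] with N hN
    rw [ballCutoff, smoothTransition.one_of_one_le hN.le, one_mul]

lemma tendsto_integral_deriv_cutoff_mul {g : E → ℝ} (hg : ContDiff ℝ 1 g)
    (hsphere : ∀ x ∈ Metric.sphere (0 : E) 1, g x = 0) (μ : Measure E)
    [IsFiniteMeasureOnCompacts μ] :
    Tendsto (fun N => ∫ x in Metric.ball (0 : E) 1,
      2 * N * deriv smoothTransition (N * (1 - ‖x‖ ^ 2)) * g x ∂μ) atTop (𝓝 0) := by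
  obtain ⟨K, hK₀, hK⟩ := exists_abs_le_mul_one_sub_norm hg hsphere
  obtain ⟨M, hM₀, hM⟩ := exists_abs_deriv_smoothTransition_le
  have := continuous_deriv_smoothTransition
  have hgcont := hg.continuous
  have hlim := tendsto_integral_filter_of_dominated_convergence
    (μ := μ.restrict (Metric.ball 0 1)) (l := (atTop : Filter ℝ)) (f := fun _ => 0)
    (F := fun N x => 2 * N * deriv smoothTransition (N * (1 - ‖x‖ ^ 2)) * g x) (fun _ => 2 * M * K)
    (.of_forall fun N => Continuous.aestronglyMeasurable (by fun_prop)) ?_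
    (integrableOn_unitBall_of_continuous continuous_const μ) ?_
  · simpa using hlim
  · filter_upwards [eventually_gt_atTop 0] with N hN
    rw [ae_restrict_iff' measurableSet_ball]
    filter_upwards with x hx
    have hflux := hK x (Metric.ball_subset_closedBall hx)
    rw [mem_ball_zero_iff] at hx
    rcases lt_or_ge 1 (N * (1 - ‖x‖ ^ 2)) with hfar | hnear
    · rw [deriv_smoothTransition_of_notMem_Icc fun h => hfar.not_ge h.2, mul_zero, zero_mul,
        norm_zero]
      positivity
    · have hNg : N * |g x| ≤ K := calc
        N * |g x| ≤ N * (K * (1 - ‖x‖)) := by gcongr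
        _ = K * (N * (1 - ‖x‖)) := by ring
        _ ≤ K * (N * (1 - ‖x‖ ^ 2)) := by gcongr; nlinarith [norm_nonneg x]
        _ ≤ K := mul_le_of_le_one_right hK₀ hnear
      rw [Real.norm_eq_abs, abs_mul, abs_mul, abs_mul, abs_of_pos hN, abs_two]
      nlinarith [mul_le_mul (hM (N * (1 - ‖x‖ ^ 2))) hNg (by positivity) hM₀]
  · rw [ae_restrict_iff' measurableSet_ball]
    filter_upwards with x hx
    refine tendsto_const_nhds.congr' ?_
    filter_upwards [eventually_one_lt_mul_one_sub_norm_sq hx] with N hN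
    rw [deriv_smoothTransition_of_notMem_Icc fun h => hN.not_ge h.2, mul_zero, zero_mul]

end UnitBall

/-- The partial derivative in the `j`-th coordinate direction, the form in which `magD` and
divergences are expressed. -/
def partialDeriv {ι F : Type*} [Fintype ι] [DecidableEq ι] [NormedAddCommGroup F] [NormedSpace ℝ F]
    (j : ι) (f : EuclideanSpace ℝ ι → F) (x : EuclideanSpace ℝ ι) : F :=
  fderiv ℝ f x (EuclideanSpace.single j 1)

section Divergence

variable {ι : Type*} [Fintype ι] [DecidableEq ι] {X : ι → EuclideanSpace ℝ ι → ℝ}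

lemma continuous_partialDeriv {F : Type*} [NormedAddCommGroup F] [NormedSpace ℝ F]
    {f : EuclideanSpace ℝ ι → F} (hf : ContDiff ℝ 1 f) (j : ι) : Continuous (partialDeriv j f) := by
  have := hf.continuous_fderiv one_ne_zero
  unfold partialDeriv
  fun_prop

lemma integral_ballCutoff_mul_partialDeriv {N : ℝ} (hN : 0 ≤ N) {f : EuclideanSpace ℝ ι → ℝ}
    (hf : ContDiff ℝ 1 f) (j : ι) :
    ∫ x, ballCutoff N x * partialDeriv j f x =
      ∫ x : EuclideanSpace ℝ ι,
        2 * N * deriv smoothTransition (N * (1 - ‖x‖ ^ 2)) * (x j * f x) := by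
  have hcutoff := contDiff_ballCutoff (E := EuclideanSpace ℝ ι) N
  have hsupp := hasCompactSupport_ballCutoff (E := EuclideanSpace ℝ ι) hN
  have hint : ∀ {f g : EuclideanSpace ℝ ι → ℝ}, Continuous f → HasCompactSupport f → Continuous g →
      Integrable fun x => f x * g x := fun hf hsupp hg =>
    (hf.mul hg).integrable_of_hasCompactSupport hsupp.mul_right
  have hparts := integral_mul_fderiv_eq_neg_fderiv_mul_of_integrable (μ := volume)
    (v := EuclideanSpace.single j 1)
    (hint (continuous_partialDeriv hcutoff j) (hsupp.fderiv_apply ℝ _) hf.continuous)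
    (hint hcutoff.continuous hsupp (continuous_partialDeriv hf j))
    (hint hcutoff.continuous hsupp hf.continuous)
    (fun x _ => hcutoff.differentiable one_ne_zero x) (fun x _ => hf.differentiable one_ne_zero x)
  unfold partialDeriv
  rw [hparts, ← integral_neg]
  congr 1
  ext x
  rw [fderiv_ballCutoff, EuclideanSpace.inner_single_right]
  simp only [conj_trivial, one_mul]
  ring

lemma integral_ball_ballCutoff_mul_divergence {N : ℝ} (hN : 0 < N) (hX : ∀ j, ContDiff ℝ 1 (X j))
    (htangent : ∀ x ∈ Metric.sphere (0 : EuclideanSpace ℝ ι) 1, ∑ j, x j * X j x = 0) :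
    ∫ x in Metric.ball 0 1, ballCutoff N x * ∑ j, partialDeriv j (X j) x =
      ∫ x in Metric.ball 0 1,
        2 * N * deriv smoothTransition (N * (1 - ‖x‖ ^ 2)) * ∑ j, x j * X j x := by
  have hcutoff := contDiff_ballCutoff (E := EuclideanSpace ℝ ι) N
  have hsupp := hasCompactSupport_ballCutoff (E := EuclideanSpace ℝ ι) hN.le
  have := continuous_deriv_smoothTransition
  have hst_far : ∀ x : EuclideanSpace ℝ ι, 1 < ‖x‖ →
      deriv smoothTransition (N * (1 - ‖x‖ ^ 2)) = 0 := fun x hx =>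
    deriv_smoothTransition_of_notMem_Icc fun h => by nlinarith [h.1, mul_pos hN (sub_pos.2 hx)]
  rw [setIntegral_eq_integral_of_forall_compl_eq_zero fun x hx => ?_,
    setIntegral_eq_integral_of_forall_compl_eq_zero fun x hx => ?_]
  · simp_rw [Finset.mul_sum]
    rw [integral_finsetSum, integral_finsetSum]
    · exact Finset.sum_congr rfl fun j _ => integral_ballCutoff_mul_partialDeriv hN.le (hX j) j
    · intro j _
      have hXj := (hX j).continuous
      refine Continuous.integrable_of_hasCompactSupport (by fun_prop) ?_
      refine HasCompactSupport.intro (isCompact_closedBall 0 1) fun x hx => ?_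
      rw [mem_closedBall_zero_iff, not_le] at hx
      rw [hst_far x hx, mul_zero, zero_mul]
    · exact fun j _ => (hcutoff.continuous.mul
        (continuous_partialDeriv (hX j) j)).integrable_of_hasCompactSupport hsupp.mul_right
  · rw [mem_ball_zero_iff, not_lt] at hx
    rcases hx.eq_or_lt with hx | hx
    · rw [htangent x (mem_sphere_zero_iff_norm.2 hx.symm), mul_zero]
    · rw [hst_far x hx, mul_zero, zero_mul]
  · rw [mem_ball_zero_iff, not_lt] at hx
    rw [ballCutoff_of_one_le_norm hN.le hx, zero_mul]

theorem integral_ball_divergence_eq_zero (hX : ∀ j, ContDiff ℝ 1 (X j))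
    (htangent : ∀ x ∈ Metric.sphere (0 : EuclideanSpace ℝ ι) 1, ∑ j, x j * X j x = 0) :
    ∫ x in Metric.ball 0 1, ∑ j, partialDeriv j (X j) x = 0 := by
  have hpd := fun j => continuous_partialDeriv (hX j) j
  have hdiv := tendsto_integral_ballCutoff_mul (f := fun x => ∑ j, partialDeriv j (X j) x)
    (by fun_prop) volume
  have hflux := tendsto_integral_deriv_cutoff_mul (g := fun x => ∑ j, x j * X j x)
    (by fun_prop) htangent volume
  refine tendsto_nhds_unique hdiv (hflux.congr' ?_)
  filter_upwards [eventually_gt_atTop 0] with N hN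
  exact (integral_ball_ballCutoff_mul_divergence hN hX htangent).symm

end Divergence

/-! ### Magnetic derivatives -/

section PartialDeriv

lemma fderiv_coord {ι : Type*} [Finite ι] (i : ι) (x v : EuclideanSpace ℝ ι) :
    fderiv ℝ (fun y : EuclideanSpace ℝ ι => y i) x v = v i := by
  have := Fintype.ofFinite ι
  have hproj : HasFDerivAt (fun y : EuclideanSpace ℝ ι => y i)
      (EuclideanSpace.proj i : EuclideanSpace ℝ ι →L[ℝ] ℝ) x :=
    (EuclideanSpace.proj i : EuclideanSpace ℝ ι →L[ℝ] ℝ).hasFDerivAt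
  rw [hproj.fderiv]
  rfl

variable {ι : Type*} [Fintype ι] [DecidableEq ι] {f g : EuclideanSpace ℝ ι → ℝ}
  {x : EuclideanSpace ℝ ι}

lemma partialDeriv_add (hf : DifferentiableAt ℝ f x) (hg : DifferentiableAt ℝ g x) (j : ι) :
    partialDeriv j (fun y => f y + g y) x = partialDeriv j f x + partialDeriv j g x := by
  simp only [partialDeriv, fderiv_fun_add hf hg, _root_.add_apply]

lemma partialDeriv_sub (hf : DifferentiableAt ℝ f x) (hg : DifferentiableAt ℝ g x) (j : ι) :
    partialDeriv j (fun y => f y - g y) x = partialDeriv j f x - partialDeriv j g x := by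
  simp only [partialDeriv, fderiv_fun_sub hf hg, _root_.sub_apply]

lemma partialDeriv_mul (hf : DifferentiableAt ℝ f x) (hg : DifferentiableAt ℝ g x) (j : ι) :
    partialDeriv j (fun y => f y * g y) x =
      partialDeriv j f x * g x + f x * partialDeriv j g x := by
  simp only [partialDeriv, fderiv_fun_mul hf hg, _root_.add_apply, _root_.smul_apply, smul_eq_mul]
  ring

lemma partialDeriv_neg (f : EuclideanSpace ℝ ι → ℝ) (x : EuclideanSpace ℝ ι) (j : ι) :
    partialDeriv j (fun y => -f y) x = -partialDeriv j f x := by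
  simp only [partialDeriv, fderiv_fun_neg, _root_.neg_apply]

lemma partialDeriv_const (c : ℝ) (x : EuclideanSpace ℝ ι) (j : ι) :
    partialDeriv j (fun _ => c) x = 0 := by
  simp [partialDeriv]

lemma partialDeriv_coord (i j : ι) (x : EuclideanSpace ℝ ι) :
    partialDeriv j (fun y => y i) x = if i = j then 1 else 0 := by
  simp [partialDeriv, fderiv_coord]

variable {F : Type*} [NormedAddCommGroup F] [NormedSpace ℝ F] {u : EuclideanSpace ℝ ι → F}

lemma contDiff_partialDeriv (hu : ContDiff ℝ 2 u) (j : ι) : ContDiff ℝ 1 (partialDeriv j u) :=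
  (hu.fderiv_right (m := 1) (by norm_num)).clm_apply contDiff_const

lemma partialDeriv_comm (hu : ContDiff ℝ 2 u) (i j : ι) (x : EuclideanSpace ℝ ι) :
    partialDeriv i (partialDeriv j u) x = partialDeriv j (partialDeriv i u) x := by
  have hdiff : DifferentiableAt ℝ (fderiv ℝ u) x :=
    (hu.fderiv_right (m := 1) (by norm_num)).differentiable one_ne_zero x
  have hsnd : ∀ k l, partialDeriv k (partialDeriv l u) x =
      fderiv ℝ (fderiv ℝ u) x (EuclideanSpace.single k 1) (EuclideanSpace.single l 1) := by
    intro k l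
    change fderiv ℝ (fun y => fderiv ℝ u y (EuclideanSpace.single l 1)) x _ = _
    simp [(hdiff.hasFDerivAt.clm_apply (hasFDerivAt_const _ x)).fderiv]
  rw [hsnd, hsnd]
  exact hu.contDiffAt.isSymmSndFDerivAt (by simp) _ _

end PartialDeriv

lemma integrableOn_ball3_of_continuous {f : E3 → ℝ} (hf : Continuous f) : IntegrableOn f ball3 :=
  integrableOn_unitBall_of_continuous hf volume

lemma integral_ball3_add_divergence {f : E3 → ℝ} (hf : Continuous f) {X : Fin 3 → E3 → ℝ}
    (hX : ∀ j, ContDiff ℝ 1 (X j))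
    (htangent : ∀ x ∈ Metric.sphere (0 : E3) 1, ∑ j, x j * X j x = 0) :
    ∫ x in ball3, (f x + ∑ j, partialDeriv j (X j) x) = ∫ x in ball3, f x := by
  have hdiv : Continuous fun x => ∑ j, partialDeriv j (X j) x :=
    continuous_finsetSum _ fun j _ => continuous_partialDeriv (hX j) j
  have hzero : ∫ x in ball3, ∑ j, partialDeriv j (X j) x = 0 :=
    integral_ball_divergence_eq_zero hX htangent
  rw [integral_add (integrableOn_ball3_of_continuous hf) (integrableOn_ball3_of_continuous hdiv),
    hzero, add_zero]

section MagneticDerivative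

variable {B : ℝ} {u f g : E3 → ℂ} {x : E3}

lemma E3.norm_sq_eq (x : E3) : ‖x‖ ^ 2 = x 0 ^ 2 + x 1 ^ 2 + x 2 ^ 2 := by
  simpa [Fin.sum_univ_three] using EuclideanSpace.norm_sq_eq x

lemma contDiff_Avec (B : ℝ) (j : Fin 3) {n : WithTop ℕ∞} : ContDiff ℝ n fun x => Avec B x j := by
  match j with
  | 0 => exact (by fun_prop : ContDiff ℝ n fun x : E3 => -(B / 2) * x 1)
  | 1 => exact (by fun_prop : ContDiff ℝ n fun x : E3 => B / 2 * x 0)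
  | 2 => exact contDiff_const

lemma contDiff_magD (B : ℝ) (hu : ContDiff ℝ 2 u) (j : Fin 3) : ContDiff ℝ 1 (magD B u j) :=
  (contDiff_const.mul (contDiff_partialDeriv hu j)).add
    ((Complex.ofRealCLM.contDiff.comp (contDiff_Avec B j)).mul (hu.of_le one_le_two))

lemma continuous_magD (B : ℝ) (hu : ContDiff ℝ 1 u) (j : Fin 3) : Continuous (magD B u j) :=
  (continuous_const.mul (continuous_partialDeriv hu j)).add
    ((Complex.continuous_ofReal.comp (contDiff_Avec B j (n := 0)).continuous).mul hu.continuous)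

lemma continuous_magEnergyDensity (B : ℝ) (hu : ContDiff ℝ 1 u) :
    Continuous (magEnergyDensity B u) := by
  have hmagD := continuous_magD B hu
  unfold magEnergyDensity
  fun_prop

lemma magEnergyDensity_nonneg (B : ℝ) (u : E3 → ℂ) (x : E3) : 0 ≤ magEnergyDensity B u x :=
  Finset.sum_nonneg fun _ _ => sq_nonneg _

lemma magD_ofReal_mul (B : ℝ) {φ : E3 → ℝ} (hφ : DifferentiableAt ℝ φ x)
    (hu : DifferentiableAt ℝ u x) (j : Fin 3) :
    magD B (fun y => (φ y : ℂ) * u y) j x =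
      φ x * magD B u j x - partialDeriv j φ x * (Complex.I * u x) := by
  have hφ' : HasFDerivAt (fun y => (φ y : ℂ)) (Complex.ofRealCLM.comp (fderiv ℝ φ x)) x :=
    Complex.ofRealCLM.hasFDerivAt.comp x hφ.hasFDerivAt
  simp only [magD, partialDeriv, (hφ'.fun_mul hu.hasFDerivAt).fderiv, _root_.add_apply,
    _root_.smul_apply, ContinuousLinearMap.comp_apply, Complex.ofRealCLM_apply, smul_eq_mul]
  ring

lemma magD_const_mul (B : ℝ) (c : ℂ) (hu : DifferentiableAt ℝ u x) (j : Fin 3) :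
    magD B (fun y => c * u y) j x = c * magD B u j x := by
  simp only [magD, fderiv_const_mul hu, _root_.smul_apply, smul_eq_mul]
  ring

lemma partialDeriv_inner (hf : DifferentiableAt ℝ f x) (hg : DifferentiableAt ℝ g x) (B : ℝ)
    (j : Fin 3) :
    partialDeriv j (fun y => inner ℝ (f y) (g y)) x =
      inner ℝ (Complex.I * magD B f j x) (g x) + inner ℝ (f x) (Complex.I * magD B g j x) := by
  rw [partialDeriv, fderiv_inner_apply ℝ hf hg]
  simp only [Complex.inner, Complex.mul_re, Complex.conj_re, Complex.conj_im, mul_neg,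
    sub_neg_eq_add, magD, neg_mul, map_mul, Complex.conj_I, map_add, map_neg, neg_neg,
    Complex.conj_ofReal, Complex.neg_re, Complex.I_re, Complex.add_re, zero_mul, Complex.I_im,
    one_mul, zero_add, Complex.ofReal_re, Complex.ofReal_im, neg_zero, sub_zero, Complex.add_im,
    Complex.mul_im, add_zero, zero_sub, neg_add_rev, neg_sub, Complex.neg_im]
  ring

lemma partialDeriv_inner_I_mul (hf : DifferentiableAt ℝ f x) (hg : DifferentiableAt ℝ g x) (B : ℝ)
    (j : Fin 3) :
    partialDeriv j (fun y => inner ℝ (Complex.I * f y) (g y)) x =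
      inner ℝ (f x) (magD B g j x) - inner ℝ (magD B f j x) (g x) := by
  rw [partialDeriv_inner (by fun_prop) hg B, magD_const_mul B _ hf]
  simp only [Complex.inner, map_mul, Complex.conj_I, neg_mul, mul_neg, neg_neg, Complex.mul_re,
    Complex.I_re, Complex.conj_re, zero_mul, Complex.I_im, Complex.conj_im, one_mul, sub_neg_eq_add,
    zero_add, Complex.mul_im, neg_zero, zero_sub, Complex.neg_re, neg_sub]
  ring

lemma magEnergyDensity_ofReal_mul (B : ℝ) {φ : E3 → ℝ} (hφ : DifferentiableAt ℝ φ x)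
    (hu : DifferentiableAt ℝ u x) :
    magEnergyDensity B (fun y => (φ y : ℂ) * u y) x =
      φ x ^ 2 * magEnergyDensity B u x
        - 2 * φ x * (∑ j, partialDeriv j φ x * inner ℝ (Complex.I * u x) (magD B u j x))
        + (∑ j, partialDeriv j φ x ^ 2) * ‖u x‖ ^ 2 := by
  have hterm : ∀ j, ‖magD B (fun y => (φ y : ℂ) * u y) j x‖ ^ 2 =
      φ x ^ 2 * ‖magD B u j x‖ ^ 2
        - 2 * φ x * (partialDeriv j φ x * inner ℝ (Complex.I * u x) (magD B u j x))
        + partialDeriv j φ x ^ 2 * ‖u x‖ ^ 2 := by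
    intro j
    rw [magD_ofReal_mul B hφ hu, norm_sub_sq_real, ← Complex.real_smul, ← Complex.real_smul,
      inner_smul_left, inner_smul_right, norm_smul, norm_smul, norm_mul, Complex.norm_I, one_mul,
      mul_pow, mul_pow, Real.norm_eq_abs, Real.norm_eq_abs, sq_abs, sq_abs, real_inner_comm]
    simp only [conj_trivial]
    ring
  simp only [magEnergyDensity, hterm, Finset.sum_add_distrib, Finset.sum_sub_distrib,
    Finset.mul_sum, Finset.sum_mul]

lemma IsNeumannEigenfunction.sum_partialDeriv_flux {lam : ℝ} {Ψ : E3 → ℂ}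
    (hΨ : IsNeumannEigenfunction B lam Ψ) {φ : E3 → ℝ} (hφ : ContDiff ℝ 1 φ) (hx : x ∈ ball3) :
    ∑ j, partialDeriv j
        (fun y => φ y * φ y * inner ℝ (Complex.I * Ψ y) (magD B Ψ j y)) x =
      2 * φ x * (∑ j, partialDeriv j φ x * inner ℝ (Complex.I * Ψ x) (magD B Ψ j x))
        + φ x ^ 2 * (lam * ‖Ψ x‖ ^ 2 - magEnergyDensity B Ψ x) := by
  obtain ⟨hC, -, heigen, -⟩ := hΨ
  have hΨx : DifferentiableAt ℝ Ψ x := hC.differentiable two_ne_zero x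
  have hφx := hφ.differentiable one_ne_zero x
  have hDx := fun j => (contDiff_magD B hC j).differentiable one_ne_zero x
  have heigen_inner : ∑ j, inner ℝ (Ψ x) (magD B (magD B Ψ j) j x) = lam * ‖Ψ x‖ ^ 2 := by
    rw [← inner_sum, show ∑ j, magD B (magD B Ψ j) j x = lam * Ψ x from heigen x hx,
      ← Complex.real_smul, inner_smul_right, real_inner_self_eq_norm_sq]
  have hterm : ∀ j, partialDeriv j
        (fun y => φ y * φ y * inner ℝ (Complex.I * Ψ y) (magD B Ψ j y)) x =
      2 * φ x * (partialDeriv j φ x * inner ℝ (Complex.I * Ψ x) (magD B Ψ j x))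
        + φ x ^ 2 * (inner ℝ (Ψ x) (magD B (magD B Ψ j) j x) - ‖magD B Ψ j x‖ ^ 2) := by
    intro j
    rw [partialDeriv_mul (by fun_prop) (DifferentiableAt.inner ℝ (by fun_prop) (hDx j)),
      partialDeriv_mul hφx hφx,
      partialDeriv_inner_I_mul hΨx (hDx j) B, real_inner_self_eq_norm_sq]
    ring
  rw [Finset.sum_congr rfl fun j _ => hterm j, Finset.sum_add_distrib, ← Finset.mul_sum,
    ← Finset.mul_sum, Finset.sum_sub_distrib, heigen_inner, magEnergyDensity]

theorem IsNeumannEigenfunction.integral_magEnergyDensity_ofReal_mul {lam : ℝ} {Ψ : E3 → ℂ}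
    (hΨ : IsNeumannEigenfunction B lam Ψ) {φ : E3 → ℝ} (hφ : ContDiff ℝ 1 φ) :
    ∫ x in ball3, magEnergyDensity B (fun y => (φ y : ℂ) * Ψ y) x =
      ∫ x in ball3, (lam * φ x ^ 2 + ∑ j, partialDeriv j φ x ^ 2) * ‖Ψ x‖ ^ 2 := by
  have hC := hΨ.1
  have hC₁ : ContDiff ℝ 1 Ψ := hC.of_le one_le_two
  have hDC := contDiff_magD B hC
  have hIΨ : ContDiff ℝ 1 fun y => Complex.I * Ψ y := contDiff_const.mul hC₁
  have hφφ : ContDiff ℝ 1 fun y => φ y * φ y := hφ.mul hφ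
  set X : Fin 3 → E3 → ℝ := fun j y => φ y * φ y * inner ℝ (Complex.I * Ψ y) (magD B Ψ j y)
  have hX : ∀ j, ContDiff ℝ 1 (X j) := fun j => hφφ.mul (hIΨ.inner ℝ (hDC j))
  have htangent : ∀ x ∈ Metric.sphere (0 : E3) 1, ∑ j, x j * X j x = 0 := by
    intro x hx
    have hneumann := hΨ.2.2.2 x hx
    have hnormal : ∑ j, x j • magD B Ψ j x = 0 := by
      rw [← neg_eq_zero, ← hneumann, ← Finset.sum_neg_distrib]
      refine Finset.sum_congr rfl fun j _ => ?_
      rw [Complex.real_smul, Complex.ofReal_neg, neg_mul]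
    have hinner := congrArg (inner ℝ (Complex.I * Ψ x)) hnormal
    simp only [inner_sum, inner_smul_right, inner_zero_right] at hinner
    calc ∑ j, x j * X j x
        = φ x * φ x * ∑ j, x j * inner ℝ (Complex.I * Ψ x) (magD B Ψ j x) := by
          rw [Finset.mul_sum]
          exact Finset.sum_congr rfl fun j _ => by simp only [X]; ring
      _ = 0 := by rw [hinner, mul_zero]
  have hφΨ : ContDiff ℝ 1 fun y => (φ y : ℂ) * Ψ y := (Complex.ofRealCLM.contDiff.comp hφ).mul hC₁
  calc ∫ x in ball3, magEnergyDensity B (fun y => (φ y : ℂ) * Ψ y) x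
      = ∫ x in ball3, (magEnergyDensity B (fun y => (φ y : ℂ) * Ψ y) x
          + ∑ j, partialDeriv j (X j) x) :=
        (integral_ball3_add_divergence (continuous_magEnergyDensity B hφΨ) hX htangent).symm
    _ = _ := by
        refine setIntegral_congr_fun measurableSet_ball fun x hx => ?_
        rw [hΨ.sum_partialDeriv_flux hφ hx, magEnergyDensity_ofReal_mul B
          (hφ.differentiable one_ne_zero x) (hC₁.differentiable one_ne_zero x)]
        ring

end MagneticDerivative

/-! ### The spherical frame and the magnetic current -/

/-- The generator `∂_φ` of the rotations about the `x₃`-axis, as a vector field. -/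
def rotationField (x : E3) : E3 :=
  (-x 1) • EuclideanSpace.single 0 1 + x 0 • EuclideanSpace.single 1 1

/-- The field along the meridians completing `x` and `rotationField x` to an orthogonal frame off
the `x₃`-axis; its length is `‖x‖` times the distance from `x` to the axis. -/
def meridianField (x : E3) : E3 :=
  (-(x 2 * x 0)) • EuclideanSpace.single 0 1 + (-(x 2 * x 1)) • EuclideanSpace.single 1 1
    + (x 0 ^ 2 + x 1 ^ 2) • EuclideanSpace.single 2 1

/-- The squared distance to the `x₃`-axis. -/
def axisDistSq (x : E3) : ℝ := x 0 ^ 2 + x 1 ^ 2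

/-- The component `x₁D₂ - x₂D₁` of the magnetic gradient `D = -i∇ + A` along `rotationField`. -/
def magAngularD (B : ℝ) (u : E3 → ℂ) (x : E3) : ℂ :=
  -Complex.I * fderiv ℝ u x (rotationField x) + (B / 2 * axisDistSq x : ℝ) * u x

/-- The magnetic current `Re(ū Dⱼu)`, `D = -i∇ + A`. -/
def magCurrent (B : ℝ) (u : E3 → ℂ) (j : Fin 3) (x : E3) : ℝ := inner ℝ (u x) (magD B u j x)

/-- The components `Re Dᵢu · Im Dⱼu - Im Dᵢu · Re Dⱼu` of the cross product of the real and
imaginary parts of the magnetic gradient. -/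
def magCross (B : ℝ) (u : E3 → ℂ) (i j : Fin 3) (x : E3) : ℝ :=
  inner ℝ (Complex.I * magD B u i x) (magD B u j x)

/-- The inner product of `x` with the cross product of the real and imaginary parts of the
magnetic gradient. -/
def radialMagCross (B : ℝ) (u : E3 → ℂ) (x : E3) : ℝ :=
  x 0 * magCross B u 1 2 x + x 1 * magCross B u 2 0 x + x 2 * magCross B u 0 1 x

section SphericalFrame

variable (B : ℝ) (u : E3 → ℂ) (x : E3)

lemma axisDistSq_nonneg : 0 ≤ axisDistSq x := by
  unfold axisDistSq
  positivity

lemma E3.norm_sq_eq_axisDistSq_add : ‖x‖ ^ 2 = axisDistSq x + x 2 ^ 2 := E3.norm_sq_eq x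

lemma neg_I_mul_fderiv_self :
    -Complex.I * fderiv ℝ u x x = x 0 • magD B u 0 x + x 1 • magD B u 1 x + x 2 • magD B u 2 x := by
  have hx : x = x 0 • EuclideanSpace.single 0 1 + x 1 • EuclideanSpace.single 1 1
      + x 2 • EuclideanSpace.single 2 1 := by
    ext i
    fin_cases i <;> simp
  conv_lhs => rw [show fderiv ℝ u x x = fderiv ℝ u x _ from congrArg _ hx]
  simp only [map_add, map_smul, Complex.real_smul, neg_mul, magD, Avec, Matrix.cons_val_zero,
    Complex.ofReal_neg, Complex.ofReal_mul, Complex.ofReal_div, Complex.ofReal_ofNat, smul_add,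
    smul_neg, Matrix.cons_val_one, Matrix.cons_val, Complex.ofReal_zero, zero_mul, add_zero]
  ring

lemma neg_I_mul_fderiv_meridianField :
    -Complex.I * fderiv ℝ u x (meridianField x) =
      (-(x 2 * x 0)) • magD B u 0 x + (-(x 2 * x 1)) • magD B u 1 x
        + axisDistSq x • magD B u 2 x := by
  simp only [meridianField, neg_smul, map_add, map_neg, map_smul, Complex.real_smul,
    Complex.ofReal_mul, Complex.ofReal_add, Complex.ofReal_pow, neg_mul, magD, Avec,
    Matrix.cons_val_zero, Complex.ofReal_neg, Complex.ofReal_div, Complex.ofReal_ofNat, smul_add,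
    smul_neg, neg_neg, Matrix.cons_val_one, axisDistSq, Matrix.cons_val, Complex.ofReal_zero,
    zero_mul, add_zero]
  ring

lemma magAngularD_eq : magAngularD B u x = x 0 • magD B u 1 x - x 1 • magD B u 0 x := by
  simp only [magAngularD, rotationField, neg_smul, map_add, map_neg, map_smul, Complex.real_smul,
    neg_mul, axisDistSq, Complex.ofReal_mul, Complex.ofReal_div, Complex.ofReal_ofNat,
    Complex.ofReal_add, Complex.ofReal_pow, magD, Avec, Matrix.cons_val_one, Matrix.cons_val_zero,
    smul_add, smul_neg, Complex.ofReal_neg]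
  ring

lemma norm_sq_mul_axisDistSq_mul_magEnergyDensity :
    ‖x‖ ^ 2 * axisDistSq x * magEnergyDensity B u x =
      axisDistSq x * ‖fderiv ℝ u x x‖ ^ 2 + ‖x‖ ^ 2 * ‖magAngularD B u x‖ ^ 2
        + ‖fderiv ℝ u x (meridianField x)‖ ^ 2 := by
  have hI : ∀ z : ℂ, ‖z‖ = ‖-Complex.I * z‖ := fun z => by simp
  rw [hI (fderiv ℝ u x x), hI (fderiv ℝ u x (meridianField x)), neg_I_mul_fderiv_self B,
    neg_I_mul_fderiv_meridianField B, magAngularD_eq, E3.norm_sq_eq_axisDistSq_add,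
    magEnergyDensity, Fin.sum_univ_three]
  simp only [Complex.sq_norm, Complex.normSq_apply, Complex.add_re, Complex.add_im, Complex.sub_re,
    Complex.sub_im, Complex.smul_re, Complex.smul_im, smul_eq_mul, axisDistSq]
  ring

lemma axisDistSq_mul_radialMagCross :
    axisDistSq x * radialMagCross B u x =
      inner ℝ (magAngularD B u x) (-fderiv ℝ u x (meridianField x)) := by
  have hI : ∀ z : ℂ, -z = -Complex.I * (-Complex.I * z) := fun z => by
    linear_combination -z * Complex.I_sq
  rw [hI, neg_I_mul_fderiv_meridianField B, magAngularD_eq]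
  simp only [radialMagCross, magCross, axisDistSq, Complex.inner, map_mul, Complex.conj_I,
    Complex.mul_re, Complex.mul_im, Complex.neg_re, Complex.neg_im, Complex.I_re, Complex.I_im,
    Complex.add_re, Complex.add_im, Complex.sub_re, Complex.sub_im, Complex.conj_re,
    Complex.conj_im, Complex.smul_re, Complex.smul_im, smul_eq_mul]
  ring

variable {x}

lemma eq_zero_of_axisDistSq_eq_zero (h : axisDistSq x = 0) : x 0 = 0 ∧ x 1 = 0 := by
  rw [axisDistSq] at h
  constructor <;> nlinarith [sq_nonneg (x 0), sq_nonneg (x 1)]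

lemma two_mul_abs_magCross_le (i j : Fin 3) :
    2 * |magCross B u i j x| ≤ ‖magD B u i x‖ ^ 2 + ‖magD B u j x‖ ^ 2 := by
  have h := abs_real_inner_le_norm (Complex.I * magD B u i x) (magD B u j x)
  rw [norm_mul, Complex.norm_I, one_mul] at h
  rw [magCross]
  nlinarith [two_mul_le_add_sq ‖magD B u i x‖ ‖magD B u j x‖]

lemma sq_norm_fderiv_self_of_axisDistSq_eq_zero (h : axisDistSq x = 0) :
    ‖fderiv ℝ u x x‖ ^ 2 = x 2 ^ 2 * ‖magD B u 2 x‖ ^ 2 := by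
  obtain ⟨hx₀, hx₁⟩ := eq_zero_of_axisDistSq_eq_zero h
  have hself := neg_I_mul_fderiv_self B u x
  rw [hx₀, hx₁, zero_smul, zero_smul, zero_add, zero_add] at hself
  have hnorm := congrArg norm hself
  rw [norm_mul, norm_neg, Complex.norm_I, one_mul, norm_smul, Real.norm_eq_abs] at hnorm
  rw [hnorm, mul_pow, sq_abs]

lemma magAngularD_of_axisDistSq_eq_zero (h : axisDistSq x = 0) : magAngularD B u x = 0 := by
  obtain ⟨hx₀, hx₁⟩ := eq_zero_of_axisDistSq_eq_zero h
  rw [magAngularD_eq, hx₀, hx₁, zero_smul, zero_smul, sub_zero]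

lemma sq_norm_fderiv_frame_le_magEnergyDensity (hx : ‖x‖ ≤ 1) :
    ‖fderiv ℝ u x x‖ ^ 2 + ‖magAngularD B u x‖ ^ 2 + ‖fderiv ℝ u x (meridianField x)‖ ^ 2 ≤
      magEnergyDensity B u x := by
  have hr : axisDistSq x + x 2 ^ 2 ≤ 1 := by
    rw [← E3.norm_sq_eq_axisDistSq_add]
    exact pow_le_one₀ (norm_nonneg x) hx
  have hρ := axisDistSq_nonneg x
  rcases hρ.eq_or_lt with hρ₀ | hρ₀
  · obtain ⟨hx₀, hx₁⟩ := eq_zero_of_axisDistSq_eq_zero hρ₀.symm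
    have hmeridian : meridianField x = 0 := by simp [meridianField, hx₀, hx₁]
    rw [hmeridian, map_zero, magAngularD_of_axisDistSq_eq_zero B u hρ₀.symm,
      sq_norm_fderiv_self_of_axisDistSq_eq_zero B u hρ₀.symm, magEnergyDensity, Fin.sum_univ_three]
    simp only [norm_zero]
    nlinarith [sq_nonneg ‖magD B u 0 x‖, sq_nonneg ‖magD B u 1 x‖, sq_nonneg ‖magD B u 2 x‖]
  have hframe := norm_sq_mul_axisDistSq_mul_magEnergyDensity B u x
  rw [E3.norm_sq_eq_axisDistSq_add] at hframe
  have hradial : (axisDistSq x + x 2 ^ 2) * (axisDistSq x * ‖fderiv ℝ u x x‖ ^ 2) ≤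
      axisDistSq x * ‖fderiv ℝ u x x‖ ^ 2 := mul_le_of_le_one_left (by positivity) hr
  have hangular : axisDistSq x * ((axisDistSq x + x 2 ^ 2) * ‖magAngularD B u x‖ ^ 2) ≤
      (axisDistSq x + x 2 ^ 2) * ‖magAngularD B u x‖ ^ 2 :=
    mul_le_of_le_one_left (by positivity) (by nlinarith [sq_nonneg (x 2)])
  have hmeridian : (axisDistSq x + x 2 ^ 2) * axisDistSq x *
      ‖fderiv ℝ u x (meridianField x)‖ ^ 2 ≤ ‖fderiv ℝ u x (meridianField x)‖ ^ 2 :=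
    mul_le_of_le_one_left (sq_nonneg _)
      (mul_le_one₀ hr hρ (by nlinarith [sq_nonneg (x 2)]))
  have hpos : 0 < (axisDistSq x + x 2 ^ 2) * axisDistSq x := by positivity
  refine le_of_mul_le_mul_left ?_ hpos
  linarith

lemma sq_norm_fderiv_add_abs_radialMagCross_le_magEnergyDensity (hx : ‖x‖ ≤ 1) :
    ‖fderiv ℝ u x x‖ ^ 2 + ‖magAngularD B u x‖ ^ 2 + 2 * |x 2| * |radialMagCross B u x| ≤
      magEnergyDensity B u x := by
  have hr : axisDistSq x + x 2 ^ 2 ≤ 1 := by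
    rw [← E3.norm_sq_eq_axisDistSq_add]
    exact pow_le_one₀ (norm_nonneg x) hx
  have hρ := axisDistSq_nonneg x
  rcases hρ.eq_or_lt with hρ₀ | hρ₀
  · obtain ⟨hx₀, hx₁⟩ := eq_zero_of_axisDistSq_eq_zero hρ₀.symm
    have hcross : radialMagCross B u x = x 2 * magCross B u 0 1 x := by
      simp [radialMagCross, hx₀, hx₁]
    rw [magAngularD_of_axisDistSq_eq_zero B u hρ₀.symm, hcross, abs_mul,
      sq_norm_fderiv_self_of_axisDistSq_eq_zero B u hρ₀.symm, magEnergyDensity, Fin.sum_univ_three]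
    have hle := two_mul_abs_magCross_le B u (x := x) 0 1
    simp only [norm_zero]
    nlinarith [sq_nonneg ‖magD B u 2 x‖, abs_mul_abs_self (x 2),
      mul_nonneg (sub_nonneg.2 hr) (abs_nonneg (magCross B u 0 1 x))]
  have hframe := norm_sq_mul_axisDistSq_mul_magEnergyDensity B u x
  rw [E3.norm_sq_eq_axisDistSq_add] at hframe
  have hcross : axisDistSq x * |radialMagCross B u x| ≤
      ‖magAngularD B u x‖ * ‖fderiv ℝ u x (meridianField x)‖ := by
    rw [← abs_of_nonneg hρ, ← abs_mul, axisDistSq_mul_radialMagCross,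
      ← norm_neg (fderiv ℝ u x (meridianField x))]
    exact abs_real_inner_le_norm _ _
  set r := axisDistSq x + x 2 ^ 2
  have hradial : r * (axisDistSq x * ‖fderiv ℝ u x x‖ ^ 2) ≤
      axisDistSq x * ‖fderiv ℝ u x x‖ ^ 2 := mul_le_of_le_one_left (by positivity) hr
  have hangular : (axisDistSq x + r * |x 2| ^ 2) * (r * ‖magAngularD B u x‖ ^ 2) ≤
      r * ‖magAngularD B u x‖ ^ 2 := by
    refine mul_le_of_le_one_left (by positivity) ?_
    rw [sq_abs]
    nlinarith [sq_nonneg (x 2)]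
  have hyoung := two_mul_le_add_sq (r * |x 2| * ‖magAngularD B u x‖)
    ‖fderiv ℝ u x (meridianField x)‖
  have hweighted := mul_le_mul_of_nonneg_left hcross (by positivity : 0 ≤ 2 * (r * |x 2|))
  refine le_of_mul_le_mul_left ?_ (by positivity : 0 < r * axisDistSq x)
  rw [hframe]
  linarith

end SphericalFrame

section MagneticCurrent

variable (B : ℝ) {u : E3 → ℂ}

lemma contDiff_magCurrent (hu : ContDiff ℝ 2 u) (j : Fin 3) : ContDiff ℝ 1 (magCurrent B u j) :=
  (hu.of_le one_le_two).inner ℝ (contDiff_magD B hu j)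

lemma continuous_magCross (hu : ContDiff ℝ 1 u) (i j : Fin 3) : Continuous (magCross B u i j) :=
  (continuous_const.mul (continuous_magD B hu i)).inner (continuous_magD B hu j)

lemma continuous_fderiv_rotationField (hu : ContDiff ℝ 1 u) :
    Continuous fun y => fderiv ℝ u y (rotationField y) :=
  (hu.continuous_fderiv one_ne_zero).clm_apply (by unfold rotationField; fun_prop)

lemma continuous_magAngularD (hu : ContDiff ℝ 1 u) : Continuous (magAngularD B u) := by
  have hrot := continuous_fderiv_rotationField hu
  have hρ : Continuous axisDistSq := by unfold axisDistSq; fun_prop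
  have := hu.continuous
  unfold magAngularD
  fun_prop

lemma continuous_radialMagCross (hu : ContDiff ℝ 1 u) : Continuous (radialMagCross B u) := by
  have hcross := continuous_magCross B hu
  unfold radialMagCross
  fun_prop

lemma I_mul_magD_commutator (hu : ContDiff ℝ 2 u) (i j : Fin 3) (x : E3) :
    Complex.I * (magD B (magD B u j) i x - magD B (magD B u i) j x) =
      (partialDeriv i (fun y => Avec B y j) x - partialDeriv j (fun y => Avec B y i) x : ℝ)
        * u x := by
  have hiter : ∀ k l, magD B (magD B u l) k x = -partialDeriv k (partialDeriv l u) x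
      - Complex.I * (partialDeriv k (fun y => Avec B y l) x * u x
        + Avec B x l * partialDeriv k u x + Avec B x k * partialDeriv l u x)
      + Avec B x k * Avec B x l * u x := by
    intro k l
    have hA : HasFDerivAt (fun y => (Avec B y l : ℂ))
        (Complex.ofRealCLM.comp (fderiv ℝ (fun y => Avec B y l) x)) x :=
      Complex.ofRealCLM.hasFDerivAt.comp x
        ((contDiff_Avec B l).differentiable one_ne_zero x).hasFDerivAt
    have hux := (hu.differentiable two_ne_zero x).hasFDerivAt
    have hpd := ((contDiff_partialDeriv hu l).differentiable one_ne_zero x).hasFDerivAt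
    have hmagD : HasFDerivAt (magD B u l) _ x := (hpd.const_mul (-Complex.I)).add (hA.fun_mul hux)
    rw [magD, hmagD.fderiv]
    simp only [_root_.add_apply, _root_.smul_apply, smul_eq_mul, neg_mul,
      ContinuousLinearMap.comp_apply, Complex.ofRealCLM_apply, magD, partialDeriv]
    linear_combination fderiv ℝ (partialDeriv l u) x (EuclideanSpace.single k 1) * Complex.I_sq
  rw [hiter, hiter, partialDeriv_comm hu i j]
  push_cast
  linear_combination (partialDeriv j (fun y => Avec B y i) x - partialDeriv i
    (fun y => Avec B y j) x : ℂ) * u x * Complex.I_sq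

lemma partialDeriv_magCurrent_sub (hu : ContDiff ℝ 2 u) (i j : Fin 3) (x : E3) :
    partialDeriv i (magCurrent B u j) x - partialDeriv j (magCurrent B u i) x =
      (partialDeriv i (fun y => Avec B y j) x - partialDeriv j (fun y => Avec B y i) x) * ‖u x‖ ^ 2
        + 2 * magCross B u i j x := by
  have hux := hu.differentiable two_ne_zero x
  have hD := fun k => (contDiff_magD B hu k).differentiable one_ne_zero x
  have hcomm : inner ℝ (u x) (Complex.I * magD B (magD B u j) i x)
      - inner ℝ (u x) (Complex.I * magD B (magD B u i) j x) =
      (partialDeriv i (fun y => Avec B y j) x - partialDeriv j (fun y => Avec B y i) x)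
        * ‖u x‖ ^ 2 := by
    rw [← inner_sub_right, ← mul_sub, I_mul_magD_commutator B hu, ← Complex.real_smul,
      inner_smul_right, real_inner_self_eq_norm_sq]
  have hskew : inner ℝ (Complex.I * magD B u j x) (magD B u i x) = -magCross B u i j x := by
    simp only [Complex.inner, map_mul, Complex.conj_I, neg_mul, mul_neg, Complex.neg_re,
      Complex.mul_re, Complex.I_re, Complex.conj_re, zero_mul, Complex.I_im, Complex.conj_im,
      one_mul, sub_neg_eq_add, zero_add, Complex.mul_im, neg_zero, neg_sub, magCross]
    ring
  unfold magCurrent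
  rw [partialDeriv_inner hux (hD j) B, partialDeriv_inner hux (hD i) B, hskew]
  rw [magCross]
  linarith

lemma partialDeriv_Avec_sub (x : E3) :
    partialDeriv 0 (fun y => Avec B y 1) x - partialDeriv 1 (fun y => Avec B y 0) x = B ∧
    partialDeriv 1 (fun y => Avec B y 2) x - partialDeriv 2 (fun y => Avec B y 1) x = 0 ∧
    partialDeriv 2 (fun y => Avec B y 0) x - partialDeriv 0 (fun y => Avec B y 2) x = 0 := by
  have hA : ∀ k, partialDeriv k (fun y => Avec B y 0) x = (-(B / 2)) * (if 1 = k then 1 else 0) ∧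
      partialDeriv k (fun y => Avec B y 1) x = B / 2 * (if 0 = k then 1 else 0) ∧
      partialDeriv k (fun y => Avec B y 2) x = 0 := by
    intro k
    simp only [Avec, Matrix.cons_val_zero, Matrix.cons_val_one, Matrix.cons_val]
    rw [partialDeriv_mul (by fun_prop) (by fun_prop), partialDeriv_mul (by fun_prop) (by fun_prop),
      partialDeriv_coord, partialDeriv_coord, partialDeriv_const, partialDeriv_const,
      partialDeriv_const]
    simp
  simp [hA]

lemma curl_magCurrent (hu : ContDiff ℝ 2 u) (x : E3) :
    partialDeriv 0 (magCurrent B u 1) x - partialDeriv 1 (magCurrent B u 0) x =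
      B * ‖u x‖ ^ 2 + 2 * magCross B u 0 1 x ∧
    partialDeriv 1 (magCurrent B u 2) x - partialDeriv 2 (magCurrent B u 1) x =
      2 * magCross B u 1 2 x ∧
    partialDeriv 2 (magCurrent B u 0) x - partialDeriv 0 (magCurrent B u 2) x =
      2 * magCross B u 2 0 x := by
  obtain ⟨h₀₁, h₁₂, h₂₀⟩ := partialDeriv_Avec_sub B x
  refine ⟨?_, ?_, ?_⟩ <;> rw [partialDeriv_magCurrent_sub B hu]
  · rw [h₀₁]
  · rw [h₁₂, zero_mul, zero_add]
  · rw [h₂₀, zero_mul, zero_add]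

end MagneticCurrent

section CurlInequalities

variable (B : ℝ) {u : E3 → ℂ}

theorem mul_integral_norm_sq_le_of_eq_zero_on_sphere (hu : ContDiff ℝ 2 u)
    (hzero : ∀ x ∈ Metric.sphere (0 : E3) 1, u x = 0) :
    B * ∫ x in ball3, ‖u x‖ ^ 2 ≤ ∫ x in ball3, magEnergyDensity B u x := by
  have hu₁ : ContDiff ℝ 1 u := hu.of_le one_le_two
  have hJ := contDiff_magCurrent B hu
  have henergy := continuous_magEnergyDensity B hu₁
  have hnorm : Continuous fun x => B * ‖u x‖ ^ 2 := by have := hu.continuous; fun_prop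
  set X : Fin 3 → E3 → ℝ := ![magCurrent B u 1, fun x => -magCurrent B u 0 x, fun _ => 0]
  have hX : ∀ j, ContDiff ℝ 1 (X j) := fun j =>
    match j with
    | 0 => hJ 1
    | 1 => (hJ 0).neg
    | 2 => contDiff_const
  have htangent : ∀ x ∈ Metric.sphere (0 : E3) 1, ∑ j, x j * X j x = 0 := fun x hx => by
    simp [X, Fin.sum_univ_three, magCurrent, hzero x hx]
  have hdiv : ∀ x, ∑ j, partialDeriv j (X j) x = B * ‖u x‖ ^ 2 + 2 * magCross B u 0 1 x := by
    intro x
    simp only [X, Fin.sum_univ_three, Matrix.cons_val_zero, Matrix.cons_val_one, Matrix.cons_val]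
    rw [partialDeriv_neg, partialDeriv_const, ← (curl_magCurrent B hu x).1]
    ring
  rw [← integral_const_mul, ← sub_nonneg, ← integral_sub (integrableOn_ball3_of_continuous henergy)
    (integrableOn_ball3_of_continuous hnorm),
    ← integral_ball3_add_divergence (by fun_prop) hX htangent]
  refine integral_nonneg fun x => ?_
  have hcross := two_mul_abs_magCross_le B u (x := x) 0 1
  have hle := neg_abs_le (magCross B u 0 1 x)
  have hsq := sq_nonneg ‖magD B u 2 x‖
  simp only [Pi.zero_apply, hdiv, magEnergyDensity, Fin.sum_univ_three]
  linarith

lemma divergence_magCurrent_cross (hu : ContDiff ℝ 2 u) (x : E3) :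
    partialDeriv 0 (fun y => (magCurrent B u 1 y * y 2 - magCurrent B u 2 y * y 1) * y 2) x
        + partialDeriv 1 (fun y => (magCurrent B u 2 y * y 0 - magCurrent B u 0 y * y 2) * y 2) x
        + partialDeriv 2 (fun y => (magCurrent B u 0 y * y 1 - magCurrent B u 1 y * y 0) * y 2) x =
      x 2 ^ 2 * (B * ‖u x‖ ^ 2) + 2 * (x 2 * radialMagCross B u x)
        - inner ℝ (u x) (magAngularD B u x) := by
  have hJ := fun j => (contDiff_magCurrent B hu j).differentiable one_ne_zero x
  have := hJ 0
  have := hJ 1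
  have h₂ := hJ 2
  obtain ⟨h₀₁, h₁₂, h₂₀⟩ := curl_magCurrent B hu x
  have hangular : inner ℝ (u x) (magAngularD B u x) =
      x 0 * magCurrent B u 1 x - x 1 * magCurrent B u 0 x := by
    rw [magAngularD_eq, inner_sub_right, inner_smul_right, inner_smul_right, magCurrent, magCurrent]
  rw [partialDeriv_mul, partialDeriv_mul, partialDeriv_mul, partialDeriv_sub, partialDeriv_sub,
    partialDeriv_sub, partialDeriv_mul, partialDeriv_mul, partialDeriv_mul, partialDeriv_mul,
    partialDeriv_mul, partialDeriv_mul]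
  · simp only [partialDeriv_coord, radialMagCross, hangular, Fin.reduceEq, reduceIte]
    linear_combination x 2 ^ 2 * h₀₁ + x 2 * x 0 * h₁₂ + x 2 * x 1 * h₂₀
  all_goals fun_prop

lemma integral_ball3_add_divergence_magCurrent_cross (hu : ContDiff ℝ 2 u) {f : E3 → ℝ}
    (hf : Continuous f) :
    ∫ x in ball3, (f x + (x 2 ^ 2 * (B * ‖u x‖ ^ 2) + 2 * (x 2 * radialMagCross B u x)
      - inner ℝ (u x) (magAngularD B u x))) = ∫ x in ball3, f x := by
  set X : Fin 3 → E3 → ℝ :=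
    ![fun y => (magCurrent B u 1 y * y 2 - magCurrent B u 2 y * y 1) * y 2,
      fun y => (magCurrent B u 2 y * y 0 - magCurrent B u 0 y * y 2) * y 2,
      fun y => (magCurrent B u 0 y * y 1 - magCurrent B u 1 y * y 0) * y 2]
  have hX : ∀ j, ContDiff ℝ 1 (X j) := by
    have h₀ := contDiff_magCurrent B hu 0
    have h₁ := contDiff_magCurrent B hu 1
    have h₂ := contDiff_magCurrent B hu 2
    intro j
    match j with
    | 0 => exact ((h₁.mul (by fun_prop)).sub (h₂.mul (by fun_prop))).mul (by fun_prop)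
    | 1 => exact ((h₂.mul (by fun_prop)).sub (h₀.mul (by fun_prop))).mul (by fun_prop)
    | 2 => exact ((h₀.mul (by fun_prop)).sub (h₁.mul (by fun_prop))).mul (by fun_prop)
  have htangent : ∀ x ∈ Metric.sphere (0 : E3) 1, ∑ j, x j * X j x = 0 := fun x _ => by
    rw [Fin.sum_univ_three]
    change x 0 * ((_ - _) * x 2) + x 1 * ((_ - _) * x 2) + x 2 * ((_ - _) * x 2) = 0
    ring
  have hdiv : ∀ x, ∑ j, partialDeriv j (X j) x =
      x 2 ^ 2 * (B * ‖u x‖ ^ 2) + 2 * (x 2 * radialMagCross B u x)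
        - inner ℝ (u x) (magAngularD B u x) := fun x => by
    rw [Fin.sum_univ_three]
    exact divergence_magCurrent_cross B hu x
  simpa only [hdiv] using integral_ball3_add_divergence hf hX htangent

lemma inner_magAngularD_le (u : E3 → ℂ) {x : E3} (hx : ‖x‖ ≤ 1) {δ : ℝ} (hδ : 0 < δ) :
    inner ℝ (u x) (magAngularD B u x) ≤ δ * ‖u x‖ ^ 2 + δ⁻¹ * magEnergyDensity B u x := by
  calc inner ℝ (u x) (magAngularD B u x)
      ≤ ‖u x‖ * ‖magAngularD B u x‖ := real_inner_le_norm _ _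
    _ ≤ 2 * ‖u x‖ * ‖magAngularD B u x‖ := by
      nlinarith [mul_nonneg (norm_nonneg (u x)) (norm_nonneg (magAngularD B u x))]
    _ ≤ δ * ‖u x‖ ^ 2 + δ⁻¹ * ‖magAngularD B u x‖ ^ 2 := two_mul_le_add_mul_sq hδ
    _ ≤ δ * ‖u x‖ ^ 2 + δ⁻¹ * magEnergyDensity B u x := by
      gcongr
      nlinarith [sq_norm_fderiv_frame_le_magEnergyDensity B u hx, sq_nonneg ‖fderiv ℝ u x x‖,
        sq_nonneg ‖fderiv ℝ u x (meridianField x)‖]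

theorem mul_integral_height_sq_mul_norm_sq_le (hu : ContDiff ℝ 2 u) {δ : ℝ} (hδ : 0 < δ) :
    B * ∫ x in ball3, x 2 ^ 2 * ‖u x‖ ^ 2 ≤ (∫ x in ball3, 2 * |x 2| * |radialMagCross B u x|) +
      (δ * ∫ x in ball3, ‖u x‖ ^ 2) + δ⁻¹ * ∫ x in ball3, magEnergyDensity B u x := by
  have hu₁ : ContDiff ℝ 1 u := hu.of_le one_le_two
  have hucont := hu.continuous
  have henergy := continuous_magEnergyDensity B hu₁
  have hcross := continuous_radialMagCross B hu₁
  have := continuous_magAngularD B hu₁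
  rw [← integral_const_mul, ← integral_const_mul, ← integral_const_mul, ← integral_add,
    ← integral_add, ← sub_nonneg, ← integral_sub,
    ← integral_ball3_add_divergence_magCurrent_cross B hu (by fun_prop)]
  · refine setIntegral_nonneg measurableSet_ball fun x hx => ?_
    have hheight : -(x 2 * radialMagCross B u x) ≤ |x 2| * |radialMagCross B u x| := by
      rw [← abs_mul]
      exact neg_le_abs _
    linarith [inner_magAngularD_le B u (mem_ball_zero_iff.1 hx).le hδ]
  all_goals exact integrableOn_ball3_of_continuous (by fun_prop)

end CurlInequalities

/-! ### Fourier modes in the azimuthal angle -/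

section FourierCoeffOn

variable {E : Type*} [NormedAddCommGroup E] [NormedSpace ℂ E] {a b : ℝ} (hab : a < b) (n : ℤ)

lemma continuous_fourier_coe (T : ℝ) : Continuous fun t : ℝ => fourier n (t : AddCircle T) :=
  (map_continuous (fourier n)).comp (AddCircle.continuous_mk' T)

lemma fourierCoeffOn_add {f g : ℝ → E} (hf : Continuous f) (hg : Continuous g) :
    fourierCoeffOn hab (fun t => f t + g t) n =
      fourierCoeffOn hab f n + fourierCoeffOn hab g n := by
  have hint : ∀ {φ : ℝ → E}, Continuous φ →
      IntervalIntegrable (fun t => fourier (-n) (t : AddCircle (b - a)) • φ t) volume a b :=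
    fun hφ => ((continuous_fourier_coe (-n) (b - a)).smul hφ).intervalIntegrable _ _
  simp only [fourierCoeffOn_eq_integral, smul_add]
  rw [intervalIntegral.integral_add (hint hf) (hint hg), smul_add]

lemma fourierCoeffOn_eq_of_hasDerivAt {f f' : ℝ → ℂ} (hf : ∀ t, HasDerivAt f (f' t) t)
    (hf' : Continuous f') (hper : f b = f a) :
    fourierCoeffOn hab f' n = 2 * π * Complex.I * n / (b - a) * fourierCoeffOn hab f n := by
  have hba : ((b - a : ℝ) : ℂ) ≠ 0 := Complex.ofReal_ne_zero.mpr (sub_ne_zero.mpr hab.ne')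
  rcases eq_or_ne n 0 with rfl | hn
  · have hint := intervalIntegral.integral_eq_sub_of_hasDerivAt (a := a) (b := b) (fun t _ => hf t)
      (hf'.intervalIntegrable _ _)
    simp [fourierCoeffOn_eq_integral, hint, hper]
  · have hpi : (π : ℂ) ≠ 0 := Complex.ofReal_ne_zero.mpr pi_ne_zero
    have hn' : (n : ℂ) ≠ 0 := Int.cast_ne_zero.mpr hn
    rw [Complex.ofReal_sub] at hba
    rw [fourierCoeffOn_of_hasDerivAt hab hn (fun t _ => hf t) (hf'.intervalIntegrable _ _), hper,
      sub_self, mul_zero, zero_sub]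
    field_simp [Complex.I_ne_zero]

variable {H : Type*} {F : H → ℝ → E}

lemma continuous_fourierCoeffOn [TopologicalSpace H] (hF : Continuous (Function.uncurry F)) :
    Continuous fun x => fourierCoeffOn hab (F x) n := by
  simp only [fourierCoeffOn_eq_integral]
  refine Continuous.const_smul
    (intervalIntegral.continuous_parametric_intervalIntegral_of_continuous' ?_ a b) _
  exact ((continuous_fourier_coe (-n) (b - a)).comp continuous_snd).smul hF

variable [NormedAddCommGroup H] [NormedSpace ℝ H] {F' : H → ℝ → H →L[ℝ] E}

lemma fourierCoeffOn_clm_apply [CompleteSpace E] {L : ℝ → H →L[ℝ] E} (hL : Continuous L) (v : H) :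
    fourierCoeffOn hab L n v = fourierCoeffOn hab (fun t => L t v) n := by
  rw [fourierCoeffOn_eq_integral, fourierCoeffOn_eq_integral, _root_.smul_apply,
    ContinuousLinearMap.intervalIntegral_apply]
  · rfl
  · exact ((continuous_fourier_coe (-n) (b - a)).smul hL).intervalIntegrable _ _

lemma hasFDerivAt_fourierCoeffOn [ProperSpace H] (hF : ∀ x, Continuous (F x))
    (hF' : Continuous (Function.uncurry F'))
    (hderiv : ∀ x t, HasFDerivAt (fun y => F y t) (F' x t) x) (x : H) :
    HasFDerivAt (fun y => fourierCoeffOn hab (F y) n) (fourierCoeffOn hab (F' x) n) x := by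
  simp only [fourierCoeffOn_eq_integral]
  have hexp := continuous_fourier_coe (-n) (b - a)
  have hF'x : ∀ y, Continuous (F' y) := fun y => hF'.comp (by fun_prop : Continuous fun t => (y, t))
  obtain ⟨K, hK⟩ := ((isCompact_closedBall x 1).prod (isCompact_uIcc (a := a) (b := b))
    ).exists_bound_of_continuousOn hF'.continuousOn
  refine (intervalIntegral.hasFDerivAt_integral_of_dominated_of_fderiv_le (𝕜 := ℝ)
    (bound := fun _ => K) (Metric.ball_mem_nhds x one_pos)
    (.of_forall fun y => (hexp.smul (hF y)).aestronglyMeasurable)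
    ((hexp.smul (hF x)).intervalIntegrable _ _)
    (hexp.smul (hF'x x)).aestronglyMeasurable
    (.of_forall fun t ht y hy => ?_) intervalIntegrable_const
    (.of_forall fun t _ y _ => (hderiv y t).const_smul (fourier (-n) (t : AddCircle (b - a))))
    ).const_smul _
  rw [norm_smul, fourier_apply, Circle.norm_coe, one_mul]
  exact hK (y, t) ⟨Metric.ball_subset_closedBall hy, uIoc_subset_uIcc ht⟩

end FourierCoeffOn

/-- The rotation by the angle `α` about the `x₃`-axis. -/
def axisRotation (α : ℝ) : E3 →L[ℝ] E3 :=
  (EuclideanSpace.proj 0 : E3 →L[ℝ] ℝ).smulRight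
      (cos α • EuclideanSpace.single 0 1 + sin α • EuclideanSpace.single 1 1)
    + (EuclideanSpace.proj 1 : E3 →L[ℝ] ℝ).smulRight
      ((-sin α) • EuclideanSpace.single 0 1 + cos α • EuclideanSpace.single 1 1)
    + (EuclideanSpace.proj 2 : E3 →L[ℝ] ℝ).smulRight (EuclideanSpace.single 2 1)

section AxisRotation

variable (α : ℝ) (x : E3)

lemma axisRotation_apply : axisRotation α x =
    !₂[cos α * x 0 - sin α * x 1, sin α * x 0 + cos α * x 1, x 2] := by
  ext i
  fin_cases i <;> simp [axisRotation] <;> ring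

lemma rotationField_eq : rotationField x = !₂[-x 1, x 0, 0] := by
  ext i
  fin_cases i <;> simp [rotationField]

lemma meridianField_eq : meridianField x = !₂[-(x 2 * x 0), -(x 2 * x 1), axisDistSq x] := by
  ext i
  fin_cases i <;> simp [meridianField, axisDistSq]

lemma axisDistSq_axisRotation : axisDistSq (axisRotation α x) = axisDistSq x := by
  simp only [axisDistSq, axisRotation_apply, Matrix.cons_val_zero, Matrix.cons_val_one]
  linear_combination (x 0 ^ 2 + x 1 ^ 2) * cos_sq_add_sin_sq α

lemma norm_axisRotation : ‖axisRotation α x‖ = ‖x‖ := by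
  rw [← sq_eq_sq₀ (norm_nonneg _) (norm_nonneg _), E3.norm_sq_eq_axisDistSq_add,
    E3.norm_sq_eq_axisDistSq_add, axisDistSq_axisRotation]
  simp [axisRotation_apply]

lemma axisRotation_two_pi : axisRotation (2 * π) x = axisRotation 0 x := by
  simp [axisRotation_apply]

lemma axisRotation_meridianField :
    axisRotation α (meridianField x) = meridianField (axisRotation α x) := by
  rw [meridianField_eq (axisRotation α x), axisDistSq_axisRotation]
  ext i
  fin_cases i <;> simp [axisRotation_apply, meridianField_eq] <;> ring

lemma continuous_axisRotation : Continuous axisRotation := by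
  unfold axisRotation
  fun_prop

lemma continuous_uncurry_axisRotation : Continuous fun p : E3 × ℝ => axisRotation p.2 p.1 :=
  (continuous_axisRotation.comp continuous_snd).clm_apply continuous_fst

lemma hasDerivAt_axisRotation :
    HasDerivAt (fun β => axisRotation β x) (rotationField (axisRotation α x)) α := by
  suffices h : HasDerivAt (fun β => (axisRotation β x).ofLp)
      (rotationField (axisRotation α x)).ofLp α from
    (PiLp.continuousLinearEquiv 2 ℝ fun _ : Fin 3 => ℝ).symm.hasFDerivAt.comp_hasDerivAt α h
  refine hasDerivAt_pi.mpr fun i => ?_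
  have hcos := (hasDerivAt_cos α).mul_const
  have hsin := (hasDerivAt_sin α).mul_const
  simp only [axisRotation_apply, rotationField_eq]
  match i with
  | 0 => exact ((hcos (x 0)).sub (hsin (x 1))).congr_deriv (by simp; ring)
  | 1 => exact ((hsin (x 0)).add (hcos (x 1))).congr_deriv (by simp; ring)
  | 2 => exact hasDerivAt_const α (x 2)

lemma integral_ball3_axisRotation (g : E3 → ℝ) :
    ∫ x in ball3, g (axisRotation α x) = ∫ x in ball3, g x := by
  set L : E3 ≃ₗᵢ[ℝ] E3 :=
    LinearIsometry.toLinearIsometryEquiv ⟨axisRotation α, norm_axisRotation α⟩ rfl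
  have hball : L ⁻¹' ball3 = ball3 := by
    ext x
    simp [ball3]
  have h := L.measurePreserving.setIntegral_preimage_emb
    L.toHomeomorph.measurableEmbedding g ball3
  rwa [hball] at h

end AxisRotation

/-- The `m`-th Fourier mode of `h` in the azimuthal angle, evaluated at `x`; as a function of `x`
it is the component of `h` on which rotations about the `x₃`-axis act by the character `e^{imα}`. -/
def fourierMode (m : ℤ) (h : E3 → ℂ) (x : E3) : ℂ :=
  fourierCoeffOn two_pi_pos (fun α => h (axisRotation α x)) m

section FourierMode

variable (m : ℤ) {h u : E3 → ℂ}

lemma continuous_fourierMode (hh : Continuous h) : Continuous (fourierMode m h) :=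
  continuous_fourierCoeffOn _ m (hh.comp continuous_uncurry_axisRotation)

lemma continuous_comp_axisRotation {X : Type*} [TopologicalSpace X] {f : E3 → X}
    (hf : Continuous f) (x : E3) : Continuous fun α => f (axisRotation α x) :=
  hf.comp (continuous_axisRotation.clm_apply continuous_const)

lemma continuous_fderiv_comp_axisRotation (hu : ContDiff ℝ 1 u) :
    Continuous (Function.uncurry fun x α =>
      (fderiv ℝ u (axisRotation α x)).comp (axisRotation α)) :=
  ((hu.continuous_fderiv one_ne_zero).comp continuous_uncurry_axisRotation).clm_comp
    (continuous_axisRotation.comp continuous_snd)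

lemma hasFDerivAt_fourierMode (hu : ContDiff ℝ 1 u) (x : E3) :
    HasFDerivAt (fourierMode m u) (fourierCoeffOn two_pi_pos
      (fun α => (fderiv ℝ u (axisRotation α x)).comp (axisRotation α)) m) x :=
  hasFDerivAt_fourierCoeffOn two_pi_pos m
    (fun y => continuous_comp_axisRotation hu.continuous y)
    (continuous_fderiv_comp_axisRotation hu)
    (fun y α => (hu.differentiable one_ne_zero (axisRotation α y)).hasFDerivAt.comp y
      (axisRotation α).hasFDerivAt) x

lemma contDiff_fourierMode (hu : ContDiff ℝ 1 u) : ContDiff ℝ 1 (fourierMode m u) := by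
  refine contDiff_one_iff_fderiv.mpr
    ⟨fun x => (hasFDerivAt_fourierMode m hu x).differentiableAt, ?_⟩
  rw [funext fun x => (hasFDerivAt_fourierMode m hu x).fderiv]
  exact continuous_fourierCoeffOn _ m (continuous_fderiv_comp_axisRotation hu)

lemma fderiv_fourierMode (hu : ContDiff ℝ 1 u) (x v : E3) :
    fderiv ℝ (fourierMode m u) x v = fourierCoeffOn two_pi_pos
      (fun α => fderiv ℝ u (axisRotation α x) (axisRotation α v)) m := by
  have hx : Continuous fun α => (fderiv ℝ u (axisRotation α x)).comp (axisRotation α) :=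
    (continuous_comp_axisRotation (hu.continuous_fderiv one_ne_zero) x).clm_comp
      continuous_axisRotation
  rw [(hasFDerivAt_fourierMode m hu x).fderiv, fourierCoeffOn_clm_apply _ m hx]
  rfl

lemma fderiv_fourierMode_self (hu : ContDiff ℝ 1 u) (x : E3) :
    fderiv ℝ (fourierMode m u) x x = fourierMode m (fun y => fderiv ℝ u y y) x :=
  fderiv_fourierMode m hu x x

lemma fderiv_fourierMode_meridianField (hu : ContDiff ℝ 1 u) (x : E3) :
    fderiv ℝ (fourierMode m u) x (meridianField x) =
      fourierMode m (fun y => fderiv ℝ u y (meridianField y)) x := by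
  simp only [fderiv_fourierMode m hu, axisRotation_meridianField, fourierMode]

lemma fourierMode_fderiv_rotationField (hu : ContDiff ℝ 1 u) (x : E3) :
    fourierMode m (fun y => fderiv ℝ u y (rotationField y)) x =
      Complex.I * m * fourierMode m u x := by
  have hderiv : ∀ α, HasDerivAt (fun β => u (axisRotation β x))
      (fderiv ℝ u (axisRotation α x) (rotationField (axisRotation α x))) α := fun α =>
    (hu.differentiable one_ne_zero (axisRotation α x)).hasFDerivAt.comp_hasDerivAt α
      (hasDerivAt_axisRotation α x)
  have hpi : (π : ℂ) ≠ 0 := Complex.ofReal_ne_zero.mpr pi_ne_zero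
  rw [fourierMode, fourierMode, fourierCoeffOn_eq_of_hasDerivAt two_pi_pos m hderiv
    (continuous_comp_axisRotation (continuous_fderiv_rotationField hu) x)
    (by rw [axisRotation_two_pi])]
  push_cast
  field_simp
  ring

lemma fourierMode_magAngularD (B : ℝ) (hu : ContDiff ℝ 1 u) (x : E3) :
    fourierMode m (magAngularD B u) x = (m + B / 2 * axisDistSq x : ℝ) * fourierMode m u x := by
  have hrot : Continuous fun α => -Complex.I *
      fderiv ℝ u (axisRotation α x) (rotationField (axisRotation α x)) :=
    continuous_const.mul (continuous_comp_axisRotation (continuous_fderiv_rotationField hu) x)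
  have hux : Continuous fun α => ((B / 2 * axisDistSq x : ℝ) : ℂ) * u (axisRotation α x) :=
    continuous_const.mul (continuous_comp_axisRotation hu.continuous x)
  calc fourierMode m (magAngularD B u) x
      = -Complex.I * fourierMode m (fun y => fderiv ℝ u y (rotationField y)) x
          + (B / 2 * axisDistSq x : ℝ) * fourierMode m u x := by
        simp only [fourierMode, magAngularD, axisDistSq_axisRotation]
        rw [fourierCoeffOn_add two_pi_pos m hrot hux, fourierCoeffOn.const_mul,
          fourierCoeffOn.const_mul]
    _ = (m + B / 2 * axisDistSq x : ℝ) * fourierMode m u x := by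
        rw [fourierMode_fderiv_rotationField m hu]
        push_cast
        linear_combination (-m * fourierMode m u x) * Complex.I_mul_I

lemma hasSum_sq_norm_fourierMode (hh : Continuous h) (x : E3) :
    HasSum (fun m => ‖fourierMode m h x‖ ^ 2)
      ((2 * π)⁻¹ * ∫ α in 0..2 * π, ‖h (axisRotation α x)‖ ^ 2) := by
  have hc := continuous_comp_axisRotation hh x
  have hL : MemLp (fun α => h (axisRotation α x)) 2 (volume.restrict (Ioc 0 (2 * π))) := by
    rw [memLp_two_iff_integrable_sq_norm hc.aestronglyMeasurable]
    exact ((hc.norm.pow 2).integrableOn_Icc).mono_set Ioc_subset_Icc_self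
  have hsum := hasSum_sq_fourierCoeffOn two_pi_pos hL
  rwa [sub_zero, smul_eq_mul] at hsum

end FourierMode

section Parseval

variable {h : E3 → ℂ} {W : E3 → ℝ}

lemma integral_ball3_mul_average_axisRotation (hh : Continuous h) (hW : Continuous W)
    (hrot : ∀ α x, W (axisRotation α x) = W x) :
    ∫ x in ball3, W x * ((2 * π)⁻¹ * ∫ α in 0..2 * π, ‖h (axisRotation α x)‖ ^ 2) =
      ∫ x in ball3, W x * ‖h x‖ ^ 2 := by
  have hint : IntegrableOn (Function.uncurry fun x α => W x * ‖h (axisRotation α x)‖ ^ 2)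
      (ball3 ×ˢ Ioc 0 (2 * π)) (volume.prod volume) := by
    have hF : Continuous (Function.uncurry fun x α => W x * ‖h (axisRotation α x)‖ ^ 2) :=
      (hW.comp continuous_fst).mul ((hh.comp continuous_uncurry_axisRotation).norm.pow 2)
    refine IntegrableOn.mono_set ?_
      (prod_mono Metric.ball_subset_closedBall Ioc_subset_Icc_self)
    exact hF.continuousOn.integrableOn_compact ((isCompact_closedBall _ _).prod isCompact_Icc)
  rw [IntegrableOn, ← Measure.prod_restrict] at hint
  have hinv : ∀ α, ∫ x in ball3, W x * ‖h (axisRotation α x)‖ ^ 2 =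
      ∫ x in ball3, W x * ‖h x‖ ^ 2 := fun α => by
    rw [← integral_ball3_axisRotation α fun x => W x * ‖h x‖ ^ 2]
    simp only [hrot]
  calc ∫ x in ball3, W x * ((2 * π)⁻¹ * ∫ α in 0..2 * π, ‖h (axisRotation α x)‖ ^ 2)
      = (2 * π)⁻¹ * ∫ x in ball3, ∫ α in Ioc 0 (2 * π), W x * ‖h (axisRotation α x)‖ ^ 2 := by
        simp only [mul_left_comm _ (2 * π)⁻¹, integral_const_mul,
          intervalIntegral.integral_of_le two_pi_pos.le]
    _ = (2 * π)⁻¹ * ∫ _ in Ioc 0 (2 * π), ∫ x in ball3, W x * ‖h x‖ ^ 2 := by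
        rw [integral_integral_swap hint]
        simp only [hinv]
    _ = ∫ x in ball3, W x * ‖h x‖ ^ 2 := by
        rw [setIntegral_const, Real.volume_real_Ioc_of_le two_pi_pos.le, sub_zero, smul_eq_mul,
          inv_mul_cancel_left₀ two_pi_pos.ne']

theorem hasSum_integral_ball3_mul_sq_norm_fourierMode (hh : Continuous h) (hW : Continuous W)
    (hrot : ∀ α x, W (axisRotation α x) = W x) :
    HasSum (fun m => ∫ x in ball3, W x * ‖fourierMode m h x‖ ^ 2)
      (∫ x in ball3, W x * ‖h x‖ ^ 2) := by
  have haverage : Continuous fun x => (2 * π)⁻¹ * ∫ α in 0..2 * π, ‖h (axisRotation α x)‖ ^ 2 :=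
    continuous_const.mul <|
      intervalIntegral.continuous_parametric_intervalIntegral_of_continuous'
        ((hh.comp continuous_uncurry_axisRotation).norm.pow 2) _ _
  have hpoint := hasSum_sq_norm_fourierMode hh
  rw [← integral_ball3_mul_average_axisRotation hh hW hrot]
  refine hasSum_integral_of_dominated_convergence (fun m x => |W x| * ‖fourierMode m h x‖ ^ 2)
    (fun m => ?_) (fun m => .of_forall fun x => ?_)
    (.of_forall fun x => (hpoint x).summable.mul_left _) ?_
    (.of_forall fun x => (hpoint x).mul_left _)
  · have := continuous_fourierMode m hh
    exact (by fun_prop : Continuous _).aestronglyMeasurable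
  · rw [norm_mul, Real.norm_eq_abs, norm_pow, norm_norm]
  · rw [funext fun x => ((hpoint x).mul_left |W x|).tsum_eq]
    exact integrableOn_ball3_of_continuous (hW.abs.mul haverage)

end Parseval

/-! ### Reduction to the rays -/

section Polar

lemma integral_volumeIoiPow (n : ℕ) (g : ℝ → ℝ) :
    ∫ r : Ioi (0 : ℝ), g r ∂Measure.volumeIoiPow n = ∫ r in Ioi (0 : ℝ), r ^ n * g r := by
  simp only [Measure.volumeIoiPow, ENNReal.ofReal]
  rw [integral_withDensity_eq_integral_smul (measurable_subtype_coe.pow_const _).real_toNNReal,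
    integral_subtype_comap measurableSet_Ioi fun r : ℝ => Real.toNNReal (r ^ n) • g r]
  refine setIntegral_congr_fun measurableSet_Ioi fun r (hr : 0 < r) => ?_
  simp only [NNReal.smul_def, smul_eq_mul]
  rw [Real.coe_toNNReal _ (by positivity)]

variable {E : Type*} [NormedAddCommGroup E] [NormedSpace ℝ E] [FiniteDimensional ℝ E]
  [MeasurableSpace E] [BorelSpace E] [Nontrivial E] (μ : Measure E) [μ.IsAddHaarMeasure]

lemma integral_eq_integral_toSphere_prod_volumeIoiPow (f : E → ℝ) :
    ∫ x, f x ∂μ = ∫ q : Metric.sphere (0 : E) 1 × Ioi (0 : ℝ), f ((q.2:ℝ) • (q.1:E))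
      ∂(μ.toSphere.prod (.volumeIoiPow (Module.finrank ℝ E - 1))) := by
  have hpres := μ.measurePreserving_homeomorphUnitSphereProd.integral_comp
    (Homeomorph.measurableEmbedding _)
    fun q : Metric.sphere (0 : E) 1 × Ioi (0 : ℝ) => f ((q.2:ℝ) • (q.1:E))
  have hpunctured : ∫ x, f x ∂μ = ∫ x : ({0}ᶜ : Set E), f x ∂(μ.comap (↑)) := by
    rw [integral_subtype_comap (measurableSet_singleton _).compl f, restrict_compl_singleton]
  rw [hpunctured, ← hpres]
  refine integral_congr_ae (Eventually.of_forall fun x => congrArg f ?_)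
  simp only [homeomorphUnitSphereProd_apply_snd_coe, homeomorphUnitSphereProd_apply_fst_coe]
  rw [smul_smul, mul_inv_cancel₀ (norm_ne_zero_iff.mpr x.2), one_smul]

lemma integral_unitBall_nonneg_of_forall_ray {f : E → ℝ}
    (h : ∀ σ : E, ‖σ‖ = 1 → 0 ≤ ∫ r in (0 : ℝ)..1, r ^ (Module.finrank ℝ E - 1) * f (r • σ)) :
    0 ≤ ∫ x in Metric.ball 0 1, f x ∂μ := by
  rw [← integral_indicator Metric.isOpen_ball.measurableSet,
    integral_eq_integral_toSphere_prod_volumeIoiPow]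
  set g := (Metric.ball (0 : E) 1).indicator f with hg
  by_cases hint : Integrable
      (fun q : Metric.sphere (0 : E) 1 × Ioi (0 : ℝ) => g ((q.2:ℝ) • (q.1:E)))
      (μ.toSphere.prod (.volumeIoiPow (Module.finrank ℝ E - 1)))
  · rw [integral_prod _ hint]
    refine integral_nonneg fun σ => ?_
    have hσ : ‖(σ:E)‖ = 1 := mem_sphere_zero_iff_norm.mp σ.2
    have hmem : ∀ r ∈ Ioi (0 : ℝ), r • (σ:E) ∈ Metric.ball (0 : E) 1 ↔ r ∈ Iio 1 := fun r hr => by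
      rw [mem_ball_zero_iff, norm_smul, hσ, mul_one, Real.norm_of_nonneg (le_of_lt hr), mem_Iio]
    simp only [Pi.zero_apply, integral_volumeIoiPow _ fun r => g (r • (σ:E))]
    have hray := h σ hσ
    rw [intervalIntegral.integral_of_le zero_le_one, integral_Ioc_eq_integral_Ioo,
      ← Ioi_inter_Iio, ← setIntegral_indicator measurableSet_Iio] at hray
    refine hray.trans_eq (setIntegral_congr_fun measurableSet_Ioi fun r hr => ?_)
    by_cases hr1 : r ∈ Iio (1 : ℝ)
    · simp only [hg, indicator_of_mem hr1, indicator_of_mem ((hmem r hr).2 hr1)]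
    · simp only [hg, indicator_of_notMem hr1, indicator_of_notMem (mt (hmem r hr).1 hr1), mul_zero]
  · rw [integral_undef hint]

end Polar

section SoftSign

/-- A smooth increasing approximation of the sign of `p` at scale `s > 0`, used to localise
without leaving the class of `C¹` multipliers. -/
def softSign (s p : ℝ) : ℝ := p / √(s ^ 2 + p ^ 2)

variable {s : ℝ}

lemma softSign_sq (s p : ℝ) : softSign s p ^ 2 = p ^ 2 / (s ^ 2 + p ^ 2) := by
  rw [softSign, div_pow, Real.sq_sqrt (by positivity)]

lemma softSign_sq_le_one (s p : ℝ) : softSign s p ^ 2 ≤ 1 := by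
  rw [softSign_sq]
  exact div_le_one_of_le₀ (by nlinarith only [sq_nonneg s]) (by positivity)

lemma abs_softSign_le_one (s p : ℝ) : |softSign s p| ≤ 1 :=
  abs_le_one_iff_mul_self_le_one.mpr (by rw [← sq]; exact softSign_sq_le_one s p)

lemma softSign_sq_le (hs : 0 < s) (p : ℝ) : softSign s p ^ 2 ≤ (p / s) ^ 2 := by
  rw [softSign_sq, div_pow]
  gcongr
  nlinarith only [sq_nonneg p]

lemma mul_softSign (s p : ℝ) : p * softSign s p = |p| ^ 2 / √(s ^ 2 + p ^ 2) := by
  rw [softSign, sq_abs]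
  ring

lemma mul_softSign_nonneg (s p : ℝ) : 0 ≤ p * softSign s p := by
  rw [mul_softSign]
  positivity

lemma mul_softSign_le_abs (s p : ℝ) : p * softSign s p ≤ |p| := by
  refine (le_abs_self _).trans ?_
  rw [abs_mul]
  exact mul_le_of_le_one_right (abs_nonneg p) (abs_softSign_le_one s p)

lemma abs_sub_le_mul_softSign (hs : 0 < s) (p : ℝ) : |p| - s ≤ p * softSign s p := by
  have hroot : 0 < √(s ^ 2 + p ^ 2) := Real.sqrt_pos.mpr (by positivity)
  have hle : √(s ^ 2 + p ^ 2) ≤ |p| + s := by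
    rw [Real.sqrt_le_iff]
    refine ⟨by positivity, ?_⟩
    nlinarith only [sq_abs p, mul_nonneg (abs_nonneg p) hs.le]
  rw [mul_softSign, le_div_iff₀ hroot]
  rcases le_total s |p| with h | h
  · nlinarith only [mul_le_mul_of_nonneg_left hle (sub_nonneg.mpr h), sq_nonneg s]
  · nlinarith only [h, hroot, sq_nonneg |p|]

lemma contDiff_softSign (hs : 0 < s) : ContDiff ℝ 1 (softSign s) :=
  contDiff_id.div (ContDiff.sqrt (by fun_prop) fun p => by positivity) fun p => by positivity

lemma sqrt_one_sub_softSign_sq (hs : 0 < s) (p : ℝ) :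
    √(1 - softSign s p ^ 2) = s / √(s ^ 2 + p ^ 2) := by
  rw [Real.sqrt_eq_iff_eq_sq (sub_nonneg.mpr (softSign_sq_le_one s p)) (by positivity), softSign_sq,
    div_pow, Real.sq_sqrt (by positivity)]
  field_simp
  ring

lemma hasDerivAt_softSign (hs : 0 < s) (p : ℝ) :
    HasDerivAt (softSign s) (√(1 - softSign s p ^ 2) ^ 3 / s) p := by
  have hpos : 0 < s ^ 2 + p ^ 2 := by positivity
  have hroot : 0 < √(s ^ 2 + p ^ 2) := Real.sqrt_pos.mpr hpos
  have hsq : HasDerivAt (fun p : ℝ => s ^ 2 + p ^ 2) (2 * p) p :=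
    ((hasDerivAt_pow 2 p).const_add (s ^ 2)).congr_deriv (by norm_num)
  refine ((hasDerivAt_id p).div (hsq.sqrt hpos.ne') hroot.ne').congr_deriv ?_
  rw [sqrt_one_sub_softSign_sq hs]
  have hroot_sq : √(s ^ 2 + p ^ 2) ^ 2 = s ^ 2 + p ^ 2 := Real.sq_sqrt hpos.le
  simp only [id]
  generalize √(s ^ 2 + p ^ 2) = r at hroot hroot_sq
  field_simp
  linear_combination hroot_sq

end SoftSign

section RayProfile

lemma hasDerivAt_max_zero_pow_three (t : ℝ) :
    HasDerivAt (fun t : ℝ => max t 0 ^ 3) (3 * max t 0 ^ 2) t := by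
  have habs := (hasDerivAt_abs_rpow t (p := 3) (by norm_num)).const_mul (1 / 2)
  have hcube := ((hasDerivAt_pow 3 t).const_mul (1 / 2 : ℝ)).add habs
  have hrpow : ∀ s : ℝ, |s| ^ (3 : ℝ) = |s| ^ 3 := fun s => by
    exact_mod_cast Real.rpow_natCast |s| 3
  have hmax : (fun t : ℝ => max t 0 ^ 3) =
      (fun t => 1 / 2 * t ^ 3) + fun t => 1 / 2 * |t| ^ (3 : ℝ) := by
    funext s
    rw [Pi.add_apply, hrpow]
    rcases le_total 0 s with h | h
    · rw [max_eq_left h, abs_of_nonneg h]; ring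
    · rw [max_eq_right h, abs_of_nonpos h]; ring
  rw [hmax]
  refine hcube.congr_deriv ?_
  norm_num
  rcases le_total 0 t with h | h
  · rw [max_eq_left h, abs_of_nonneg h]; ring
  · rw [max_eq_right h, abs_of_nonpos h]; ring

/-- The restriction of `u` to the ray through `σ`, as a function of the distance `t` to the unit
sphere. The factor `max (1 - t) 0 ^ 3` makes it a `C¹` function vanishing for `t ≥ 1`. -/
def rayProfile (u : E3 → ℂ) (σ : E3) (t : ℝ) : ℂ :=
  ((max (1 - t) 0 ^ 3 : ℝ) : ℂ) * u ((1 - t) • σ)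

variable {u : E3 → ℂ} {σ : E3}

lemma contDiff_rayProfile (hu : ContDiff ℝ 1 u) (σ : E3) : ContDiff ℝ 1 (rayProfile u σ) := by
  have hcube : ContDiff ℝ 1 fun t : ℝ => max t 0 ^ 3 := by
    rw [contDiff_one_iff_deriv, funext fun t => (hasDerivAt_max_zero_pow_three t).deriv]
    exact ⟨fun t => (hasDerivAt_max_zero_pow_three t).differentiableAt, by fun_prop⟩
  exact (Complex.ofRealCLM.contDiff.comp (hcube.comp (by fun_prop))).mul (hu.comp (by fun_prop))

lemma rayProfile_of_one_le (u : E3 → ℂ) (σ : E3) {t : ℝ} (ht : 1 ≤ t) : rayProfile u σ t = 0 := by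
  simp [rayProfile, max_eq_right (sub_nonpos.mpr ht)]

lemma norm_rayProfile_sq (u : E3 → ℂ) (σ : E3) {t : ℝ} (ht : t ≤ 1) :
    ‖rayProfile u σ t‖ ^ 2 = (1 - t) ^ 6 * ‖u ((1 - t) • σ)‖ ^ 2 := by
  have hr := sub_nonneg.mpr ht
  rw [rayProfile, max_eq_left hr, norm_mul, mul_pow, Complex.norm_real,
    Real.norm_of_nonneg (by positivity)]
  ring

lemma norm_deriv_rayProfile_le (hu : ContDiff ℝ 1 u) (σ : E3) {t : ℝ} (ht : t ≤ 1) :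
    ‖deriv (rayProfile u σ) t‖ ≤ (1 - t) ^ 2 *
      (‖fderiv ℝ u ((1 - t) • σ) ((1 - t) • σ)‖ + 3 * ‖u ((1 - t) • σ)‖) := by
  have hr := sub_nonneg.mpr ht
  have hsub : HasDerivAt (fun t : ℝ => 1 - t) (-1) t := (hasDerivAt_id t).const_sub 1
  have hcube := ((hasDerivAt_max_zero_pow_three (1 - t)).comp t hsub).ofReal_comp
  have hray := (hu.differentiable one_ne_zero ((1 - t) • σ)).hasFDerivAt.comp_hasDerivAt t
    (hsub.smul_const σ)
  have hderiv : deriv (rayProfile u σ) t = -((((1 - t) ^ 2 : ℝ) : ℂ) *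
      (fderiv ℝ u ((1 - t) • σ) ((1 - t) • σ) + 3 * u ((1 - t) • σ))) := by
    refine (hcube.mul hray).deriv.trans ?_
    simp only [Function.comp, max_eq_left hr, map_smul, Complex.real_smul]
    push_cast
    ring
  rw [hderiv, norm_neg, norm_mul, Complex.norm_real, Real.norm_of_nonneg (by positivity)]
  gcongr
  refine (norm_add_le _ _).trans_eq ?_
  rw [norm_mul, Complex.norm_ofNat]

end RayProfile

/-- The spectral gap constant: a momentum at distance `≥ 1` from the optimal one costs at least
this multiple of the field strength, up to the geometric factors of the reduction to rays. -/
def gapConst : ℝ := (1 - Theta0) / 68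

lemma gapConst_pos : 0 < gapConst := by
  have := Theta0_lt_one
  unfold gapConst
  linarith

/-- The deviation of the momentum of the `m`-th Fourier mode from the optimal momentum of the
half-line problem, in the field `B = a⁴`. It is normalised so as to be a polynomial in `x`:
on the ray through a unit vector `σ` it equals `‖x‖²` times its value at `σ`. -/
def momentumDefect (a m : ℝ) (x : E3) : ℝ :=
  m * ‖x‖ ^ 2 + a ^ 4 / 2 * axisDistSq x - √Theta0 * a ^ 2 * ‖x‖ ^ 2

/-- The momentum defect in units of `√B = a²`, truncated to `(-1, 1)`. -/
def truncatedDefect (a m : ℝ) (x : E3) : ℝ := softSign (a ^ 2) (momentumDefect a m x)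

/-- The energy density of the `m`-th Fourier mode without its meridional part, including the
errors due to the curvature of the sphere. -/
def rayEnergyDensity (a m : ℝ) (u : E3 → ℂ) (x : E3) : ℝ :=
  (1 + (a ^ 2)⁻¹) * (‖fderiv ℝ u x x‖ ^ 2 + (m + a ^ 4 / 2 * axisDistSq x) ^ 2 * ‖u x‖ ^ 2)
    + (18 * a ^ 2 + a ^ 10 * (1 - ‖x‖ ^ 2) ^ 4) * ‖u x‖ ^ 2

/-- The lower bound for the energy per unit mass given by the half-line problems on the rays. -/
def rayWeight (a m : ℝ) (x : E3) : ℝ :=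
  Theta0 * a ^ 4 * ‖x‖ ^ 2 * axisDistSq x
    + gapConst * a ^ 4 * (‖x‖ ^ 4 * truncatedDefect a m x ^ 2 - 2 * x 2 ^ 2 * ‖x‖ ^ 2)

section RayEstimate

lemma add_sq_le_mul_sq_add {s : ℝ} (hs : 0 < s) (x y : ℝ) :
    (x + y) ^ 2 ≤ (1 + s⁻¹) * x ^ 2 + (1 + s) * y ^ 2 := by
  have h := two_mul_le_add_mul_sq (a := y) (b := x) hs
  linarith [add_sq x y]

lemma min_sq_one_le_of_slope {c q θ : ℝ} (hc₀ : 0 ≤ c) (hc₁ : c ≤ 1) (hθ₀ : 0 ≤ θ) (hθ₁ : θ ≤ 1) :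
    min ((c * q - θ * (1 - c)) ^ 2) 1 ≤ 2 * min (q ^ 2) 1 + 2 * (1 - c ^ 2) := by
  rcases le_total (q ^ 2) 1 with h | h
  · have hq : (c * q) ^ 2 ≤ q ^ 2 := by
      rw [mul_pow]
      exact mul_le_of_le_one_left (sq_nonneg q) (pow_le_one₀ hc₀ hc₁)
    have hθ : (θ * (1 - c)) ^ 2 ≤ 1 - c ^ 2 := by
      rw [mul_pow]
      refine (mul_le_of_le_one_left (sq_nonneg _) (pow_le_one₀ hθ₀ hθ₁)).trans ?_
      nlinarith only [hc₀, hc₁]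
    refine (min_le_left _ _).trans ?_
    rw [min_eq_left h]
    nlinarith only [hq, hθ, sq_nonneg (c * q + θ * (1 - c))]
  · refine (min_le_right _ _).trans ?_
    rw [min_eq_right h]
    nlinarith only [hc₀, hc₁]

variable {a ζ r : ℝ}

lemma mul_integral_norm_sq_le_stripEnergy_of_slope {v : ℝ → ℂ} (hv : ContDiff ℝ 1 v)
    (hzero : ∀ t, 1 ≤ t → v t = 0) (ha : 2 ≤ a) (hζ : ζ ^ 2 ≤ 1) (p : ℝ) :
    (Theta0 * (a ^ 4 * (1 - ζ ^ 2))
        + gapConst * a ^ 4 * (min ((p / a ^ 2 - √Theta0) ^ 2) 1 - 2 * ζ ^ 2)) *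
      (∫ t in (0 : ℝ)..1, ‖v t‖ ^ 2) ≤ stripEnergy (a ^ 4 * (1 - ζ ^ 2)) p v := by
  have : 0 < a := by linarith
  have hmass : 0 ≤ ∫ t in (0 : ℝ)..1, ‖v t‖ ^ 2 :=
    intervalIntegral.integral_nonneg zero_le_one fun t _ => by positivity
  have hgap := mul_nonneg gapConst_pos.le (by positivity : 0 ≤ a ^ 4)
  rcases le_total (1 / 2) (1 - ζ ^ 2) with hflat | hsteep
  · have ha16 : 16 ≤ a ^ 4 := by
      calc (16 : ℝ) = 2 ^ 4 := by norm_num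
        _ ≤ a ^ 4 := by gcongr
    refine le_trans (mul_le_mul_of_nonneg_right ?_ hmass)
      (stripEnergy_gap hv (by nlinarith only [ha16, hflat]) hzero p)
    set c := √(1 - ζ ^ 2)
    have hc_sq : c ^ 2 = 1 - ζ ^ 2 := Real.sq_sqrt (by linarith)
    have hc : 0 < c := Real.sqrt_pos.mpr (by linarith)
    have hroot : √(a ^ 4 * (1 - ζ ^ 2)) = a ^ 2 * c := by
      rw [← hc_sq, show a ^ 4 * c ^ 2 = (a ^ 2 * c) ^ 2 by ring, Real.sqrt_sq (by positivity)]
    have hshift : p / a ^ 2 - √Theta0 =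
        c * (p / √(a ^ 4 * (1 - ζ ^ 2)) - √Theta0) - √Theta0 * (1 - c) := by
      rw [hroot]
      field_simp
      ring
    have hmin := min_sq_one_le_of_slope (q := p / √(a ^ 4 * (1 - ζ ^ 2)) - √Theta0) hc.le
      (Real.sqrt_le_one.mpr (by linarith [sq_nonneg ζ])) (Real.sqrt_nonneg Theta0)
      (Real.sqrt_le_one.mpr Theta0_lt_one.le)
    rw [← hshift, hc_sq] at hmin
    set M := min ((p / √(a ^ 4 * (1 - ζ ^ 2)) - √Theta0) ^ 2) 1
    have hM : 0 ≤ M := le_min (sq_nonneg _) zero_le_one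
    have hgap_eq : (1 - Theta0) / 17 = 4 * gapConst := by rw [gapConst]; ring
    have hflat' := mul_le_mul_of_nonneg_left hflat (mul_nonneg hgap hM)
    rw [hgap_eq]
    nlinarith only [mul_le_mul_of_nonneg_left hmin hgap, hflat']
  · refine le_trans (mul_le_mul_of_nonneg_right ?_ hmass) (mul_Theta0_mul_integral_le_stripEnergy
      hv (mul_nonneg (by positivity) (sub_nonneg.mpr hζ)) hzero p)
    have hmin := min_le_right ((p / a ^ 2 - √Theta0) ^ 2) 1
    nlinarith only [mul_nonneg hgap (by linarith :
      0 ≤ 2 * ζ ^ 2 - min ((p / a ^ 2 - √Theta0) ^ 2) 1)]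

lemma radial_young {s X W : ℝ} (hs : 1 ≤ s) (hr₀ : 0 ≤ r) (hr₁ : r ≤ 1) :
    (r ^ 2 * (X + 3 * W)) ^ 2 ≤ r ^ 2 * ((1 + s⁻¹) * X ^ 2 + 18 * s * W ^ 2) := by
  calc (r ^ 2 * (X + 3 * W)) ^ 2 = r ^ 2 * (r ^ 2 * (X + 3 * W) ^ 2) := by ring
    _ ≤ r ^ 2 * (X + 3 * W) ^ 2 := by
      gcongr
      exact mul_le_of_le_one_left (sq_nonneg _) (pow_le_one₀ hr₀ hr₁)
    _ ≤ r ^ 2 * ((1 + s⁻¹) * X ^ 2 + (1 + s) * (3 * W) ^ 2) := by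
      gcongr
      exact add_sq_le_mul_sq_add (by linarith) X (3 * W)
    _ ≤ r ^ 2 * ((1 + s⁻¹) * X ^ 2 + 18 * s * W ^ 2) := by
      refine mul_le_mul_of_nonneg_left ?_ (sq_nonneg r)
      nlinarith only [sq_nonneg W, hs]

lemma momentum_young {b s : ℝ} (m : ℝ) (hs : 1 ≤ s) (hb₀ : 0 ≤ b) (hb : b ≤ s ^ 2)
    (hr₀ : 0 ≤ r) (hr₁ : r ≤ 1) :
    (m + b / 2 - b * (1 - r)) ^ 2 ≤
      (1 + s⁻¹) * (m + b / 2 * r ^ 2) ^ 2 + s ^ 5 * (1 - r ^ 2) ^ 4 := by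
  have hdist : (1 - r) ^ 4 ≤ (1 - r ^ 2) ^ 4 :=
    pow_le_pow_left₀ (sub_nonneg.mpr hr₁) (by nlinarith only [hr₀, hr₁]) 4
  calc (m + b / 2 - b * (1 - r)) ^ 2
      = (m + b / 2 * r ^ 2 + -(b * (1 - r) ^ 2 / 2)) ^ 2 := by ring
    _ ≤ (1 + s⁻¹) * (m + b / 2 * r ^ 2) ^ 2 + (1 + s) * (-(b * (1 - r) ^ 2 / 2)) ^ 2 :=
      add_sq_le_mul_sq_add (by linarith) _ _
    _ = (1 + s⁻¹) * (m + b / 2 * r ^ 2) ^ 2 + (1 + s) / 4 * (b ^ 2 * (1 - r) ^ 4) := by ring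
    _ ≤ (1 + s⁻¹) * (m + b / 2 * r ^ 2) ^ 2 + s * ((s ^ 2) ^ 2 * (1 - r ^ 2) ^ 4) := by
      gcongr
      linarith
    _ = (1 + s⁻¹) * (m + b / 2 * r ^ 2) ^ 2 + s ^ 5 * (1 - r ^ 2) ^ 4 := by ring

variable {σ : E3} {m t : ℝ} {u : E3 → ℂ}

lemma axisDistSq_smul (r : ℝ) (σ : E3) : axisDistSq (r • σ) = r ^ 2 * axisDistSq σ := by
  simp only [axisDistSq, PiLp.smul_apply, smul_eq_mul]
  ring

lemma norm_smul_sq_of_norm_eq_one (hσ : ‖σ‖ = 1) (r : ℝ) : ‖r • σ‖ ^ 2 = r ^ 2 := by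
  rw [norm_smul, hσ, mul_one, Real.norm_eq_abs, sq_abs]

lemma axisDistSq_of_norm_eq_one (hσ : ‖σ‖ = 1) : axisDistSq σ = 1 - σ 2 ^ 2 := by
  have := E3.norm_sq_eq_axisDistSq_add σ
  rw [hσ] at this
  linarith

lemma rayProfile_energy_le (hu : ContDiff ℝ 1 u) (ha : 1 ≤ a) (hσ : ‖σ‖ = 1)
    (ht : t ∈ Icc (0 : ℝ) 1) :
    ‖deriv (rayProfile u σ) t‖ ^ 2
        + (m + a ^ 4 * (1 - σ 2 ^ 2) / 2 - a ^ 4 * (1 - σ 2 ^ 2) * t) ^ 2 * ‖rayProfile u σ t‖ ^ 2 ≤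
      (1 - t) ^ 2 * rayEnergyDensity a m u ((1 - t) • σ) := by
  obtain ⟨r, rfl⟩ : ∃ r, t = 1 - r := ⟨1 - t, by ring⟩
  have hkin := norm_deriv_rayProfile_le hu σ ht.2
  have hnorm := norm_rayProfile_sq u σ ht.2
  rw [sub_sub_cancel] at *
  have hr₀ : 0 ≤ r := by linarith [ht.2]
  have hr₁ : r ≤ 1 := by linarith [ht.1]
  have ha_sq : 1 ≤ a ^ 2 := one_le_pow₀ ha
  have hζ : 0 ≤ 1 - σ 2 ^ 2 := by rw [← axisDistSq_of_norm_eq_one hσ]; exact axisDistSq_nonneg σ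
  have hb : a ^ 4 * (1 - σ 2 ^ 2) ≤ (a ^ 2) ^ 2 := by
    rw [← pow_mul]
    exact mul_le_of_le_one_right (by positivity) (by linarith [sq_nonneg (σ 2)])
  have hkin' := (pow_le_pow_left₀ (norm_nonneg _) hkin 2).trans (radial_young ha_sq hr₀ hr₁)
  have hpot := momentum_young m ha_sq (mul_nonneg (by positivity) hζ) hb hr₀ hr₁
  have hr6 : r ^ 6 ≤ r ^ 2 := pow_le_pow_of_le_one hr₀ hr₁ (by norm_num)
  have hpot' := mul_le_mul hpot (mul_le_mul_of_nonneg_right hr6 (sq_nonneg ‖u (r • σ)‖))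
    (by positivity) (by positivity)
  rw [hnorm, rayEnergyDensity, axisDistSq_smul, axisDistSq_of_norm_eq_one hσ,
    norm_smul_sq_of_norm_eq_one hσ]
  refine (add_le_add hkin' hpot').trans_eq ?_
  ring

lemma truncatedDefect_smul_sq_le (ha : 0 < a) (hσ : ‖σ‖ = 1) (hr₀ : 0 ≤ r) (hr₁ : r ≤ 1) :
    truncatedDefect a m (r • σ) ^ 2 ≤
      min (((m + a ^ 4 * (1 - σ 2 ^ 2) / 2) / a ^ 2 - √Theta0) ^ 2) 1 := by
  refine le_min ((softSign_sq_le (by positivity) _).trans ?_) (softSign_sq_le_one _ _)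
  have hdefect : momentumDefect a m (r • σ) / a ^ 2 =
      r ^ 2 * ((m + a ^ 4 * (1 - σ 2 ^ 2) / 2) / a ^ 2 - √Theta0) := by
    rw [momentumDefect, axisDistSq_smul, axisDistSq_of_norm_eq_one hσ,
      norm_smul_sq_of_norm_eq_one hσ]
    field_simp
  rw [hdefect, mul_pow]
  exact mul_le_of_le_one_left (sq_nonneg _) (pow_le_one₀ (sq_nonneg r) (pow_le_one₀ hr₀ hr₁))

lemma rayWeight_mul_le (ha : 0 < a) (hσ : ‖σ‖ = 1) (ht : t ∈ Icc (0 : ℝ) 1) :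
    (1 - t) ^ 2 * (rayWeight a m ((1 - t) • σ) * ‖u ((1 - t) • σ)‖ ^ 2) ≤
      (Theta0 * (a ^ 4 * (1 - σ 2 ^ 2)) + gapConst * a ^ 4 *
        (min (((m + a ^ 4 * (1 - σ 2 ^ 2) / 2) / a ^ 2 - √Theta0) ^ 2) 1 - 2 * σ 2 ^ 2)) *
        ‖rayProfile u σ t‖ ^ 2 := by
  have hnorm := norm_rayProfile_sq u σ ht.2
  have hdefect := truncatedDefect_smul_sq_le (m := m) ha hσ (sub_nonneg.mpr ht.2)
    (sub_le_self 1 ht.1)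
  have hgap := gapConst_pos
  rw [hnorm]
  refine le_trans (le_of_eq ?_) (mul_le_mul_of_nonneg_right (add_le_add_right
    (mul_le_mul_of_nonneg_left (sub_le_sub_right hdefect _) (by positivity)) _) (by positivity))
  rw [rayWeight, axisDistSq_smul, axisDistSq_of_norm_eq_one hσ,
    show ‖(1 - t) • σ‖ ^ 4 = (‖(1 - t) • σ‖ ^ 2) ^ 2 by ring, norm_smul_sq_of_norm_eq_one hσ]
  simp only [PiLp.smul_apply, smul_eq_mul]
  ring

lemma contDiff_momentumDefect (a m : ℝ) : ContDiff ℝ 1 (momentumDefect a m) := by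
  have := contDiff_norm_sq ℝ (E := E3) (n := 1)
  unfold momentumDefect axisDistSq
  fun_prop

lemma contDiff_truncatedDefect (ha : 0 < a) (m : ℝ) : ContDiff ℝ 1 (truncatedDefect a m) :=
  (contDiff_softSign (by positivity)).comp (contDiff_momentumDefect a m)

lemma continuous_axisDistSq : Continuous axisDistSq := by
  unfold axisDistSq
  fun_prop

lemma continuous_rayWeight (ha : 0 < a) (m : ℝ) : Continuous (rayWeight a m) := by
  have := (contDiff_truncatedDefect ha m).continuous
  have := continuous_axisDistSq
  unfold rayWeight
  fun_prop

lemma continuous_rayEnergyDensity (a m : ℝ) (hu : ContDiff ℝ 1 u) :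
    Continuous (rayEnergyDensity a m u) := by
  have := hu.continuous
  have := hu.continuous_fderiv one_ne_zero
  have := continuous_axisDistSq
  unfold rayEnergyDensity
  fun_prop

lemma integral_ray_rayEnergyDensity_sub_nonneg (ha : 2 ≤ a) (m : ℝ) (hu : ContDiff ℝ 1 u)
    (hσ : ‖σ‖ = 1) :
    0 ≤ ∫ r in (0 : ℝ)..1, r ^ 2 *
      (rayEnergyDensity a m u (r • σ) - rayWeight a m (r • σ) * ‖u (r • σ)‖ ^ 2) := by
  have ha₀ : 0 < a := by linarith
  set F : ℝ → ℝ := fun r => r ^ 2 * rayEnergyDensity a m u (r • σ)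
  set G : ℝ → ℝ := fun r => r ^ 2 * (rayWeight a m (r • σ) * ‖u (r • σ)‖ ^ 2)
  have hζ : σ 2 ^ 2 ≤ 1 := by
    linarith [axisDistSq_of_norm_eq_one hσ, axisDistSq_nonneg σ]
  have hv := contDiff_rayProfile hu σ
  have hstrip := mul_integral_norm_sq_le_stripEnergy_of_slope hv
    (fun t ht => rayProfile_of_one_le u σ ht) ha hζ (m + a ^ 4 * (1 - σ 2 ^ 2) / 2)
  have hv_cont := hv.continuous
  have := hv.continuous_deriv le_rfl
  have hu_cont := hu.continuous
  have hE := continuous_rayEnergyDensity a m hu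
  have hW := continuous_rayWeight ha₀ m
  have hF : Continuous F := by fun_prop
  have hG : Continuous G := by fun_prop
  have hupper : stripEnergy (a ^ 4 * (1 - σ 2 ^ 2)) (m + a ^ 4 * (1 - σ 2 ^ 2) / 2)
      (rayProfile u σ) ≤ ∫ t in (0 : ℝ)..1, F (1 - t) :=
    intervalIntegral.integral_mono_on zero_le_one
      (Continuous.intervalIntegrable (by fun_prop) _ _)
      (Continuous.intervalIntegrable (by fun_prop) _ _)
      fun t ht => rayProfile_energy_le hu (by linarith) hσ ht
  have hlower := intervalIntegral.integral_mono_on (μ := volume) zero_le_one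
    (Continuous.intervalIntegrable (by fun_prop : Continuous fun t => G (1 - t)) _ _)
    (Continuous.intervalIntegrable (by fun_prop) _ _)
    fun t ht => rayWeight_mul_le (m := m) (u := u) ha₀ hσ ht
  rw [intervalIntegral.integral_const_mul] at hlower
  rw [intervalIntegral.integral_comp_sub_left, sub_self, sub_zero] at hupper hlower
  simp_rw [mul_sub]
  rw [intervalIntegral.integral_sub (hF.intervalIntegrable _ _) (hG.intervalIntegrable _ _)]
  linarith

theorem integral_rayWeight_mul_norm_sq_le (ha : 2 ≤ a) (m : ℝ) (hu : ContDiff ℝ 1 u) :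
    ∫ x in ball3, rayWeight a m x * ‖u x‖ ^ 2 ≤ ∫ x in ball3, rayEnergyDensity a m u x := by
  have hu_cont := hu.continuous
  have hE := continuous_rayEnergyDensity a m hu
  have hW := continuous_rayWeight (by linarith : 0 < a) m
  rw [← sub_nonneg, ← integral_sub (integrableOn_ball3_of_continuous hE)
    (integrableOn_ball3_of_continuous (by fun_prop))]
  refine integral_unitBall_nonneg_of_forall_ray volume fun σ hσ => ?_
  rw [finrank_euclideanSpace_fin]
  exact integral_ray_rayEnergyDensity_sub_nonneg ha m hu hσ

end RayEstimate

/-! ### The uncertainty inequality along the meridians -/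

section MeridianDerivative

variable {a : ℝ} (m : ℝ) (x : E3)

lemma contDiff_meridianField_apply (j : Fin 3) : ContDiff ℝ 1 fun x => meridianField x j :=
  contDiff_euclidean.1 (by unfold meridianField; fun_prop) j

lemma continuous_meridianField : Continuous meridianField := by
  unfold meridianField
  fun_prop

lemma fderiv_norm_sq_meridianField : fderiv ℝ (fun y : E3 => ‖y‖ ^ 2) x (meridianField x) = 0 := by
  rw [fderiv_norm_sq_apply]
  simp only [meridianField_eq, axisDistSq, _root_.smul_apply, coe_innerSL_apply, PiLp.inner_apply,
    RCLike.inner_apply, ringHom_apply, Fin.sum_univ_three, Matrix.cons_val_zero, neg_mul,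
    Matrix.cons_val_one, Matrix.cons_val, smul_add, smul_neg, nsmul_eq_mul, Nat.cast_ofNat]
  ring

lemma fderiv_axisDistSq_meridianField :
    fderiv ℝ axisDistSq x (meridianField x) = -(2 * x 2 * axisDistSq x) := by
  unfold axisDistSq
  rw [fderiv_fun_add (by fun_prop) (by fun_prop), fderiv_fun_pow 2 (by fun_prop),
    fderiv_fun_pow 2 (by fun_prop)]
  simp only [Nat.add_one_sub_one, pow_one, nsmul_eq_mul, Nat.cast_ofNat, meridianField_eq,
    _root_.add_apply, _root_.smul_apply, fderiv_coord, Matrix.cons_val_zero, smul_eq_mul, mul_neg,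
    Matrix.cons_val_one]
  ring

lemma fderiv_momentumDefect_meridianField (a : ℝ) :
    fderiv ℝ (momentumDefect a m) x (meridianField x) = -(a ^ 4 * x 2 * axisDistSq x) := by
  have hnorm : DifferentiableAt ℝ (fun y : E3 => ‖y‖ ^ 2) x :=
    (contDiff_norm_sq ℝ).differentiable one_ne_zero x
  have haxis : DifferentiableAt ℝ axisDistSq x := by unfold axisDistSq; fun_prop
  unfold momentumDefect
  rw [fderiv_fun_sub (by fun_prop) (by fun_prop), fderiv_fun_add (by fun_prop) (by fun_prop),
    fderiv_const_mul hnorm, fderiv_const_mul haxis, fderiv_const_mul hnorm]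
  simp only [_root_.add_apply, _root_.sub_apply, _root_.smul_apply, smul_eq_mul,
    fderiv_norm_sq_meridianField, fderiv_axisDistSq_meridianField]
  ring

lemma fderiv_truncatedDefect_meridianField (ha : 0 < a) :
    fderiv ℝ (truncatedDefect a m) x (meridianField x) =
      -(√(1 - truncatedDefect a m x ^ 2) ^ 3 * a ^ 2 * x 2 * axisDistSq x) := by
  have hdefect := ((contDiff_momentumDefect a m).differentiable one_ne_zero x).hasFDerivAt
  have hcomp : HasFDerivAt (truncatedDefect a m) _ x :=
    (hasDerivAt_softSign (by positivity) (momentumDefect a m x)).comp_hasFDerivAt x hdefect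
  rw [hcomp.fderiv, _root_.smul_apply, fderiv_momentumDefect_meridianField, smul_eq_mul,
    truncatedDefect]
  field_simp

lemma fderiv_softSign_height_meridianField {s : ℝ} (hs : 0 < s) :
    fderiv ℝ (fun y : E3 => softSign s (y 2)) x (meridianField x) =
      √(1 - softSign s (x 2) ^ 2) ^ 3 / s * axisDistSq x := by
  have hcoord : HasFDerivAt (fun y : E3 => y 2) (fderiv ℝ (fun y : E3 => y 2) x) x :=
    DifferentiableAt.hasFDerivAt (by fun_prop)
  have hcomp : HasFDerivAt (fun y : E3 => softSign s (y 2)) _ x :=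
    HasDerivAt.comp_hasFDerivAt (f := fun y : E3 => y 2) x (hasDerivAt_softSign hs (x 2)) hcoord
  rw [hcomp.fderiv, _root_.smul_apply, fderiv_coord, smul_eq_mul, meridianField_eq]
  simp

lemma sum_coord_mul_meridianField : ∑ j, x j * meridianField x j = 0 := by
  simp only [meridianField_eq, axisDistSq, Fin.sum_univ_three, Matrix.cons_val_zero, mul_neg,
    Matrix.cons_val_one, Matrix.cons_val]
  ring

lemma sum_partialDeriv_mul_meridianField {f : E3 → ℝ} (hf : ContDiff ℝ 1 f) :
    ∑ j, partialDeriv j (fun y => f y * meridianField y j) x =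
      fderiv ℝ f x (meridianField x) - 2 * x 2 * f x := by
  have hf' := hf.differentiable one_ne_zero x
  have hT := fun j => (contDiff_meridianField_apply j).differentiable one_ne_zero x
  have hdiv : ∑ j, partialDeriv j (fun y => meridianField y j) x = -(2 * x 2) := by
    simp only [Fin.sum_univ_three, meridianField_eq, axisDistSq, sq, Matrix.cons_val_zero,
      Matrix.cons_val_one, Matrix.cons_val]
    rw [partialDeriv_neg, partialDeriv_neg, partialDeriv_mul, partialDeriv_mul, partialDeriv_add,
      partialDeriv_mul, partialDeriv_mul]
    · simp only [partialDeriv_coord, Fin.reduceEq, reduceIte]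
      ring
    all_goals fun_prop
  have hdir : fderiv ℝ f x (meridianField x) = ∑ j, partialDeriv j f x * meridianField x j := by
    rw [meridianField]
    simp only [neg_smul, map_add, map_neg, map_smul, smul_eq_mul, partialDeriv, PiLp.add_apply,
      PiLp.neg_apply, PiLp.smul_apply, PiLp.single_apply, mul_ite, mul_one, mul_zero,
      Fin.sum_univ_three, ↓reduceIte, zero_ne_one, neg_zero, add_zero, Fin.reduceEq, mul_neg,
      one_ne_zero, zero_add]
    ring
  simp only [partialDeriv_mul hf' (hT _), Finset.sum_add_distrib, ← Finset.mul_sum, hdiv, hdir]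
  ring

end MeridianDerivative

section MeridianAlgebra

variable {a n z q G S s : ℝ}

lemma half_le_one_sub_sq_add_cube (hq₀ : 0 ≤ q) (hq₁ : q ≤ 1) : 1 / 2 ≤ 1 - q ^ 2 + q ^ 3 := by
  have h : q * (1 - q) ≤ 1 / 4 := by nlinarith only [sq_nonneg (q - 1 / 2)]
  have hq : q * (q * (1 - q)) ≤ 1 * (1 / 4) :=
    mul_le_mul hq₁ h (mul_nonneg hq₀ (by linarith)) zero_le_one
  nlinarith only [hq]

lemma two_mul_sub_one_sub_sq_le (n z : ℝ) (hn : n ≤ 1) :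
    2 * n - 1 - z ^ 2 ≤ n * (n - z ^ 2) := by
  nlinarith only [sq_nonneg (n - 1), mul_nonneg (sub_nonneg.mpr hn) (sq_nonneg z)]

lemma meridian_gain (hn₀ : 0 ≤ n) (hn₁ : n ≤ 1) (hz : z ^ 2 ≤ n) (hq₀ : 0 ≤ q) (hq₁ : q ≤ 1)
    (hS₀ : 0 ≤ z * S) (hS : z * S ≤ |z|) :
    (z * S - 2 * (1 - n) - z ^ 2) / 2 ≤
      n ^ 2 * (1 - q ^ 2) + n * (n - z ^ 2) * (z * S) * q ^ 3 := by
  have hS₁ : z * S ≤ 1 := hS.trans (abs_le_one_iff_mul_self_le_one.mpr (by linarith [sq z]))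
  have hρ₀ : 0 ≤ n * (n - z ^ 2) := mul_nonneg hn₀ (sub_nonneg.mpr hz)
  have hweight : n * (n - z ^ 2) * (z * S) ≤ n ^ 2 :=
    (mul_le_of_le_one_right hρ₀ hS₁).trans (by nlinarith only [mul_nonneg hn₀ (sq_nonneg z)])
  have hq : 0 ≤ 1 - q ^ 2 := sub_nonneg.mpr (pow_le_one₀ hq₀ hq₁)
  have hboundary : z * S - 2 * (1 - n) - z ^ 2 ≤ n * (n - z ^ 2) * (z * S) := by
    have hloss : (2 * (1 - n) + z ^ 2) * (z * S) ≤ 2 * (1 - n) + z ^ 2 :=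
      mul_le_of_le_one_right (by nlinarith only [sq_nonneg z, hn₁]) hS₁
    have := mul_le_mul_of_nonneg_right (two_mul_sub_one_sub_sq_le n z hn₁) hS₀
    linarith
  have hhalf := mul_le_mul_of_nonneg_left (half_le_one_sub_sq_add_cube hq₀ hq₁)
    (mul_nonneg hρ₀ hS₀)
  nlinarith only [hboundary, hhalf, mul_le_mul_of_nonneg_right hweight hq]

lemma meridian_loss (hn₀ : 0 ≤ n) (hn₁ : n ≤ 1) (hz : z ^ 2 ≤ n) (hG : |G| ≤ 1)
    (hS₀ : 0 ≤ z * S) (hS : z * S ≤ |z|) (hs₀ : 0 ≤ s) (hs : s ≤ a) :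
    n * G * (s * (n - z ^ 2)) - 2 * z * (n * G * S) ≤ a + 2 := by
  have hS₁ : z * S ≤ 1 := hS.trans (abs_le_one_iff_mul_self_le_one.mpr (by linarith [sq z]))
  obtain ⟨hG₀, hG₁⟩ := abs_le.mp hG
  have hρ : n * (n - z ^ 2) ≤ 1 :=
    mul_le_one₀ hn₁ (sub_nonneg.mpr hz) (by linarith [sq_nonneg z])
  have hslope : n * (n - z ^ 2) * s ≤ a :=
    (mul_le_of_le_one_left hs₀ hρ).trans hs
  have hdrift : n * (z * S) ≤ 1 := mul_le_one₀ hn₁ hS₀ hS₁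
  have hslope₀ : 0 ≤ n * (n - z ^ 2) * s := mul_nonneg (mul_nonneg hn₀ (sub_nonneg.mpr hz)) hs₀
  have hdrift₀ : 0 ≤ n * (z * S) := mul_nonneg hn₀ hS₀
  nlinarith only [mul_nonneg (sub_nonneg.mpr hG₁) hslope₀,
    mul_nonneg (neg_le_iff_add_nonneg.mp hG₀) hdrift₀, hslope, hdrift]

lemma meridian_young {τ W N : ℝ} (hn : 0 ≤ n) (hS : |S| ≤ 1) (hN : |N| ≤ 2 * (W * τ)) :
    a ^ 2 * (n * G * S * N) ≤ τ ^ 2 + a ^ 4 * n ^ 2 * G ^ 2 * W ^ 2 := by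
  calc a ^ 2 * (n * G * S * N) ≤ |a ^ 2 * (n * G * S * N)| := le_abs_self _
    _ = a ^ 2 * (n * |G| * (|S| * |N|)) := by
      simp only [abs_mul, abs_of_nonneg hn, abs_of_nonneg (sq_nonneg a)]
      ring
    _ ≤ a ^ 2 * (n * |G| * (1 * (2 * (W * τ)))) := by gcongr
    _ = 2 * τ * (a ^ 2 * n * |G| * W) := by ring
    _ ≤ τ ^ 2 + (a ^ 2 * n * |G| * W) ^ 2 := two_mul_le_add_sq _ _
    _ = τ ^ 2 + a ^ 4 * n ^ 2 * G ^ 2 * W ^ 2 := by rw [← sq_abs G]; ring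

lemma meridian_pointwise {τ W N : ℝ} (ha : 1 ≤ a) (hn₀ : 0 ≤ n) (hn₁ : n ≤ 1) (hz : z ^ 2 ≤ n)
    (hG : |G| ≤ 1) (hS₀ : 0 ≤ z * S) (hS : z * S ≤ |z|) (hS₁ : |S| ≤ 1) (hzS : |z| - a⁻¹ ≤ z * S)
    (hs₀ : 0 ≤ s) (hs : s ≤ a) (hN : |N| ≤ 2 * (W * τ)) :
    (a ^ 4 * (|z| / 2 - (1 - n) - z ^ 2 / 2) - 4 * a ^ 3) * W ^ 2 ≤
      τ ^ 2 + 2 * a ^ 4 * n ^ 2 * G ^ 2 * W ^ 2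
        - a ^ 2 * (n * (G * (S * N + s * (n - z ^ 2) * W ^ 2)
          - √(1 - G ^ 2) ^ 3 * a ^ 2 * z * (n - z ^ 2) * (S * W ^ 2))
          - 2 * z * (n * (G * (S * W ^ 2)))) := by
  have hG_sq : 0 ≤ 1 - G ^ 2 := sub_nonneg.mpr ((sq_le_one_iff_abs_le_one G).mpr hG)
  have hgain := meridian_gain hn₀ hn₁ hz (Real.sqrt_nonneg (1 - G ^ 2))
    (Real.sqrt_le_one.mpr (by linarith [sq_nonneg G])) hS₀ hS
  rw [Real.sq_sqrt hG_sq] at hgain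
  have hyoung := meridian_young (a := a) (G := G) hn₀ hS₁ hN
  have hmass : a ^ 4 * (|z| / 2 - (1 - n) - z ^ 2 / 2) - 4 * a ^ 3 ≤
      a ^ 4 * n ^ 2 * G ^ 2 - a ^ 2 * (n * G * (s * (n - z ^ 2)) - 2 * z * (n * G * S))
        + a ^ 4 * (n * (n - z ^ 2) * (z * S) * √(1 - G ^ 2) ^ 3) := by
    have hgain' := mul_le_mul_of_nonneg_left hgain (by positivity : 0 ≤ a ^ 4)
    have hloss := mul_le_mul_of_nonneg_left (meridian_loss hn₀ hn₁ hz hG hS₀ hS hs₀ hs)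
      (sq_nonneg a)
    have hzS' : a ^ 4 * |z| - a ^ 3 ≤ a ^ 4 * (z * S) := by
      calc a ^ 4 * |z| - a ^ 3 = a ^ 4 * (|z| - a⁻¹) := by field_simp
        _ ≤ a ^ 4 * (z * S) := by gcongr
    have hpow : a ^ 2 ≤ a ^ 3 := pow_le_pow_right₀ ha (by norm_num)
    have hcube : 0 ≤ a ^ 3 := by positivity
    linarith
  have := mul_le_mul_of_nonneg_right hmass (sq_nonneg W)
  linarith

end MeridianAlgebra

section MeridianUncertainty

variable {a : ℝ} {u : E3 → ℂ}

/-- The multiplier transported along the meridians in the uncertainty inequality: the truncated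
momentum defect times a smooth sign of the height, weighted by the mass. -/
def meridianMultiplier (a m : ℝ) (u : E3 → ℂ) (x : E3) : ℝ :=
  ‖x‖ ^ 2 * (truncatedDefect a m x * (softSign a⁻¹ (x 2) * ‖u x‖ ^ 2))

lemma contDiff_meridianMultiplier (ha : 0 < a) (m : ℝ) (hu : ContDiff ℝ 1 u) :
    ContDiff ℝ 1 (meridianMultiplier a m u) := by
  have hheight : ContDiff ℝ 1 fun x : E3 => softSign a⁻¹ (x 2) :=
    (contDiff_softSign (by positivity)).comp (f := fun x : E3 => x 2) (by fun_prop)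
  exact (contDiff_norm_sq ℝ).mul
    ((contDiff_truncatedDefect ha m).mul (hheight.mul (hu.norm_sq ℝ)))

lemma fderiv_meridianMultiplier_meridianField (ha : 0 < a) (m : ℝ) (hu : ContDiff ℝ 1 u) (x : E3) :
    fderiv ℝ (meridianMultiplier a m u) x (meridianField x) =
      ‖x‖ ^ 2 * (truncatedDefect a m x *
          (softSign a⁻¹ (x 2) * (2 * inner ℝ (u x) (fderiv ℝ u x (meridianField x)))
            + √(1 - softSign a⁻¹ (x 2) ^ 2) ^ 3 / a⁻¹ * axisDistSq x * ‖u x‖ ^ 2)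
        - √(1 - truncatedDefect a m x ^ 2) ^ 3 * a ^ 2 * x 2 * axisDistSq x *
          (softSign a⁻¹ (x 2) * ‖u x‖ ^ 2)) := by
  have hnorm : DifferentiableAt ℝ (fun y : E3 => ‖y‖ ^ 2) x :=
    (contDiff_norm_sq ℝ).differentiable one_ne_zero x
  have hdefect := (contDiff_truncatedDefect ha m).differentiable one_ne_zero x
  have hheight : DifferentiableAt ℝ (fun x : E3 => softSign a⁻¹ (x 2)) x :=
    ((contDiff_softSign (by positivity : 0 < a⁻¹)).differentiable one_ne_zero).comp
      (f := fun x : E3 => x 2) (by fun_prop) |>.differentiableAt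
  have hmass := (hu.norm_sq ℝ).differentiable one_ne_zero x
  have hmass' : fderiv ℝ (fun y => ‖u y‖ ^ 2) x (meridianField x) =
      2 * inner ℝ (u x) (fderiv ℝ u x (meridianField x)) := by
    rw [(hu.differentiable one_ne_zero x).hasFDerivAt.norm_sq.fderiv]
    simp only [_root_.smul_apply, ContinuousLinearMap.comp_apply, innerSL_apply_apply, nsmul_eq_mul,
      Nat.cast_ofNat]
  unfold meridianMultiplier
  rw [fderiv_fun_mul hnorm (hdefect.fun_mul (hheight.fun_mul hmass)),
    fderiv_fun_mul hdefect (hheight.fun_mul hmass), fderiv_fun_mul hheight hmass]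
  simp only [_root_.add_apply, _root_.smul_apply, smul_eq_mul, hmass',
    fderiv_norm_sq_meridianField, fderiv_truncatedDefect_meridianField m x ha,
    fderiv_softSign_height_meridianField x (by positivity : 0 < a⁻¹)]
  ring

lemma height_mass_le_sub_divergence (ha : 1 ≤ a) (m : ℝ) (hu : ContDiff ℝ 1 u) {x : E3}
    (hx : ‖x‖ ≤ 1) :
    (a ^ 4 * (|x 2| / 2 - (1 - ‖x‖ ^ 2) - x 2 ^ 2 / 2) - 4 * a ^ 3) * ‖u x‖ ^ 2 ≤
      ‖fderiv ℝ u x (meridianField x)‖ ^ 2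
        + 2 * a ^ 4 * ‖x‖ ^ 4 * truncatedDefect a m x ^ 2 * ‖u x‖ ^ 2
        + ∑ j, partialDeriv j
          (fun y => -a ^ 2 * meridianMultiplier a m u y * meridianField y j) x := by
  have ha₀ : 0 < a := by linarith
  have haxis : ‖x‖ ^ 2 - x 2 ^ 2 = axisDistSq x := by
    linarith [E3.norm_sq_eq_axisDistSq_add x]
  have hΦ := contDiff_meridianMultiplier ha₀ m hu
  have hroot : √(1 - softSign a⁻¹ (x 2) ^ 2) ≤ 1 :=
    Real.sqrt_le_one.mpr (by linarith [sq_nonneg (softSign a⁻¹ (x 2))])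
  have hpoint := meridian_pointwise (G := truncatedDefect a m x) (S := softSign a⁻¹ (x 2))
    (s := √(1 - softSign a⁻¹ (x 2) ^ 2) ^ 3 / a⁻¹)
    (N := 2 * inner ℝ (u x) (fderiv ℝ u x (meridianField x)))
    ha (sq_nonneg ‖x‖) (pow_le_one₀ (norm_nonneg x) hx)
    (by linarith [axisDistSq_nonneg x]) (abs_softSign_le_one _ _) (mul_softSign_nonneg _ _)
    (mul_softSign_le_abs _ _) (abs_softSign_le_one _ _)
    (abs_sub_le_mul_softSign (by positivity) _) (by positivity)
    (by
      rw [div_inv_eq_mul]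
      exact mul_le_of_le_one_left ha₀.le (pow_le_one₀ (Real.sqrt_nonneg _) hroot))
    (by
      rw [abs_mul, abs_two]
      exact mul_le_mul_of_nonneg_left (abs_real_inner_le_norm _ _) zero_le_two)
  rw [haxis] at hpoint
  refine hpoint.trans_eq ?_
  rw [sum_partialDeriv_mul_meridianField x (contDiff_const.mul hΦ),
    fderiv_const_mul (hΦ.differentiable one_ne_zero x), _root_.smul_apply, smul_eq_mul,
    fderiv_meridianMultiplier_meridianField ha₀ m hu, meridianMultiplier]
  ring

theorem integral_height_mass_le (ha : 1 ≤ a) (m : ℝ) (hu : ContDiff ℝ 1 u) :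
    ∫ x in ball3,
        (a ^ 4 * (|x 2| / 2 - (1 - ‖x‖ ^ 2) - x 2 ^ 2 / 2) - 4 * a ^ 3) * ‖u x‖ ^ 2 ≤
      ∫ x in ball3, (‖fderiv ℝ u x (meridianField x)‖ ^ 2
        + 2 * a ^ 4 * ‖x‖ ^ 4 * truncatedDefect a m x ^ 2 * ‖u x‖ ^ 2) := by
  have ha₀ : 0 < a := by linarith
  have hu_cont := hu.continuous
  have := hu.continuous_fderiv one_ne_zero
  have hT := continuous_meridianField
  have hG := (contDiff_truncatedDefect ha₀ m).continuous
  have hX : ∀ j, ContDiff ℝ 1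
      fun y => -a ^ 2 * meridianMultiplier a m u y * meridianField y j := fun j =>
    (contDiff_const.mul (contDiff_meridianMultiplier ha₀ m hu)).mul (contDiff_meridianField_apply j)
  have hdiv : Continuous fun x => ∑ j, partialDeriv j
      (fun y => -a ^ 2 * meridianMultiplier a m u y * meridianField y j) x :=
    continuous_finsetSum _ fun j _ => continuous_partialDeriv (hX j) j
  have htangent : ∀ x ∈ Metric.sphere (0 : E3) 1,
      ∑ j, x j * (-a ^ 2 * meridianMultiplier a m u x * meridianField x j) = 0 := fun x _ => by
    simp_rw [mul_left_comm (x _), ← Finset.mul_sum, sum_coord_mul_meridianField, mul_zero]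
  rw [← integral_ball3_add_divergence (f := fun x => ‖fderiv ℝ u x (meridianField x)‖ ^ 2
    + 2 * a ^ 4 * ‖x‖ ^ 4 * truncatedDefect a m x ^ 2 * ‖u x‖ ^ 2) (by fun_prop) hX htangent]
  refine setIntegral_mono_on (integrableOn_ball3_of_continuous (by fun_prop))
    (integrableOn_ball3_of_continuous (by fun_prop)) Metric.isOpen_ball.measurableSet fun x hx => ?_
  exact height_mass_le_sub_divergence ha m hu (mem_ball_zero_iff.mp hx).le

end MeridianUncertainty

/-! ### The lower bound for the magnetic energy -/

/-- The mass weight obtained from the half-line problems on the rays and the uncertainty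
inequality along the meridians, for the field `B = a⁴`. -/
def heightWeight (a : ℝ) (x : E3) : ℝ :=
  Theta0 * a ^ 4 * ‖x‖ ^ 2 * axisDistSq x - 2 * gapConst * a ^ 4 * x 2 ^ 2 * ‖x‖ ^ 2
    + gapConst / 2 * (a ^ 4 * (|x 2| / 2 - (1 - ‖x‖ ^ 2) - x 2 ^ 2 / 2) - 4 * a ^ 3)

/-- The energy density in the spherical frame that controls `heightWeight`, for the field
`B = a⁴`. -/
def frameEnergyDensity (a : ℝ) (u : E3 → ℂ) (x : E3) : ℝ :=
  (1 + (a ^ 2)⁻¹) * (‖fderiv ℝ u x x‖ ^ 2 + ‖magAngularD (a ^ 4) u x‖ ^ 2)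
    + gapConst / 2 * ‖fderiv ℝ u x (meridianField x)‖ ^ 2
    + (18 * a ^ 2 + a ^ 10 * (1 - ‖x‖ ^ 2) ^ 4) * ‖u x‖ ^ 2

section LowerBound

variable {a : ℝ} {u : E3 → ℂ}

lemma continuous_heightWeight (a : ℝ) : Continuous (heightWeight a) := by
  have := continuous_axisDistSq
  unfold heightWeight
  fun_prop

lemma continuous_frameEnergyDensity (a : ℝ) (hu : ContDiff ℝ 1 u) :
    Continuous (frameEnergyDensity a u) := by
  have := hu.continuous
  have := hu.continuous_fderiv one_ne_zero
  have := continuous_magAngularD (a ^ 4) hu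
  have := continuous_meridianField
  unfold frameEnergyDensity
  fun_prop

lemma integral_ball3_add_four {f g h k : E3 → ℝ} (hf : Continuous f) (hg : Continuous g)
    (hh : Continuous h) (hk : Continuous k) :
    ∫ x in ball3, (f x + g x + h x + k x) = (∫ x in ball3, f x) + (∫ x in ball3, g x)
      + (∫ x in ball3, h x) + ∫ x in ball3, k x := by
  rw [integral_add (f := fun x => f x + g x + h x)
      (integrableOn_ball3_of_continuous (by fun_prop)) (integrableOn_ball3_of_continuous hk),
    integral_add (f := fun x => f x + g x)
      (integrableOn_ball3_of_continuous (by fun_prop)) (integrableOn_ball3_of_continuous hh),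
    integral_add (integrableOn_ball3_of_continuous hf) (integrableOn_ball3_of_continuous hg)]

lemma hasSum_integral_fourierMode_energy (a : ℝ) (hu : ContDiff ℝ 1 u) :
    HasSum (fun m : ℤ => ∫ x in ball3, (rayEnergyDensity a m (fourierMode m u) x
        + gapConst / 2 * ‖fderiv ℝ (fourierMode m u) x (meridianField x)‖ ^ 2))
      (∫ x in ball3, frameEnergyDensity a u x) := by
  have hu_cont := hu.continuous
  have := hu.continuous_fderiv one_ne_zero
  have hT := continuous_meridianField
  have hL := continuous_magAngularD (a ^ 4) hu
  have hparseval := (((hasSum_integral_ball3_mul_sq_norm_fourierMode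
    (h := fun x => fderiv ℝ u x x) (W := fun _ => 1 + (a ^ 2)⁻¹) (by fun_prop) (by fun_prop)
      fun _ _ => rfl).add
    (hasSum_integral_ball3_mul_sq_norm_fourierMode hL (W := fun _ => 1 + (a ^ 2)⁻¹) (by fun_prop)
      fun _ _ => rfl)).add
    (hasSum_integral_ball3_mul_sq_norm_fourierMode
    (h := fun x => fderiv ℝ u x (meridianField x)) (W := fun _ => gapConst / 2)
      (by fun_prop) (by fun_prop) fun _ _ => rfl)).add
    (hasSum_integral_ball3_mul_sq_norm_fourierMode hu_cont
      (W := fun x => 18 * a ^ 2 + a ^ 10 * (1 - ‖x‖ ^ 2) ^ 4) (by fun_prop)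
      fun α x => by simp only [norm_axisRotation])
  convert hparseval using 1
  · ext m
    have hm := contDiff_fourierMode m hu
    have hm_cont := hm.continuous
    have := hm.continuous_fderiv one_ne_zero
    have hρ := continuous_axisDistSq
    simp_rw [← fderiv_fourierMode_self m hu, ← fderiv_fourierMode_meridianField m hu,
      fourierMode_magAngularD m _ hu]
    rw [← integral_ball3_add_four (by fun_prop) (by fun_prop) (by fun_prop) (by fun_prop)]
    refine integral_congr_ae (Eventually.of_forall fun x => ?_)
    simp only [rayEnergyDensity, norm_mul, Complex.norm_real, mul_pow, Real.norm_eq_abs, sq_abs]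
    ring
  · rw [← integral_ball3_add_four (by fun_prop) (by fun_prop) (by fun_prop) (by fun_prop)]
    refine integral_congr_ae (Eventually.of_forall fun x => ?_)
    simp only [frameEnergyDensity]
    ring

lemma integral_heightWeight_le_of_mode (ha : 2 ≤ a) (m : ℝ) (hu : ContDiff ℝ 1 u) :
    ∫ x in ball3, heightWeight a x * ‖u x‖ ^ 2 ≤ ∫ x in ball3, (rayEnergyDensity a m u x
      + gapConst / 2 * ‖fderiv ℝ u x (meridianField x)‖ ^ 2) := by
  have hu_cont := hu.continuous
  have := hu.continuous_fderiv one_ne_zero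
  have hT := continuous_meridianField
  have hG := (contDiff_truncatedDefect (by linarith : 0 < a) m).continuous
  have hW := continuous_rayWeight (by linarith : 0 < a) m
  have hE := continuous_rayEnergyDensity a m hu
  have hH := continuous_heightWeight a
  have hray := integral_rayWeight_mul_norm_sq_le ha m hu
  have hmeridian := mul_le_mul_of_nonneg_left (integral_height_mass_le (by linarith : 1 ≤ a) m hu)
    (half_pos gapConst_pos).le
  rw [← integral_const_mul, ← integral_const_mul] at hmeridian
  rw [← sub_nonneg, ← integral_sub (integrableOn_ball3_of_continuous (by fun_prop))
    (integrableOn_ball3_of_continuous (by fun_prop))] at hray hmeridian ⊢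
  have hsum := add_nonneg hray hmeridian
  rw [← integral_add (integrableOn_ball3_of_continuous (by fun_prop))
    (integrableOn_ball3_of_continuous (by fun_prop))] at hsum
  refine hsum.trans_eq (integral_congr_ae (Eventually.of_forall fun x => ?_))
  simp only [rayWeight, heightWeight]
  ring

lemma integral_heightWeight_le (ha : 2 ≤ a) (hu : ContDiff ℝ 1 u) :
    ∫ x in ball3, heightWeight a x * ‖u x‖ ^ 2 ≤ ∫ x in ball3, frameEnergyDensity a u x := by
  have hmass := hasSum_integral_ball3_mul_sq_norm_fourierMode hu.continuous
    (continuous_heightWeight a) fun α x => by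
      have hheight : axisRotation α x 2 = x 2 := by rw [axisRotation_apply]; rfl
      simp only [heightWeight, norm_axisRotation, axisDistSq_axisRotation, hheight]
  exact hasSum_le (fun m : ℤ => integral_heightWeight_le_of_mode ha m (contDiff_fourierMode m hu))
    hmass (hasSum_integral_fourierMode_energy a hu)

lemma energyWeight_le_heightWeight (ha : 1 ≤ a) {x : E3} (hx : ‖x‖ ≤ 1) :
    Theta0 * a ^ 4 + gapConst / 4 * a ^ 4 * |x 2| - 3 * a ^ 4 * (1 - ‖x‖ ^ 2) - 21 * a ^ 3 ≤
      heightWeight a x + (1 - gapConst / 2) * a ^ 4 * x 2 ^ 2 - 18 * a ^ 2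
        - (1 - gapConst / 2) * a ^ 2 := by
  have hΘ₀ := Theta0_nonneg
  have hκ₀ := gapConst_pos
  have hκ : 68 * gapConst = 1 - Theta0 := by unfold gapConst; ring
  have hn : ‖x‖ ^ 2 ≤ 1 := pow_le_one₀ (norm_nonneg x) hx
  have hρ := E3.norm_sq_eq_axisDistSq_add x
  have hboundary : Theta0 * a ^ 4 * (2 * ‖x‖ ^ 2 - 1 - x 2 ^ 2) ≤
      Theta0 * a ^ 4 * (‖x‖ ^ 2 * axisDistSq x) := by
    rw [eq_sub_of_add_eq hρ.symm]
    have := two_mul_sub_one_sub_sq_le (‖x‖ ^ 2) (x 2) hn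
    gcongr
  have hsteep : gapConst * a ^ 4 * x 2 ^ 2 * ‖x‖ ^ 2 ≤ gapConst * a ^ 4 * x 2 ^ 2 :=
    mul_le_of_le_one_right (by positivity) hn
  have hpow : a ^ 2 ≤ a ^ 3 := pow_le_pow_right₀ ha (by norm_num)
  have hheight : 0 ≤ (1 - Theta0 - 11 / 4 * gapConst) * (a ^ 4 * x 2 ^ 2) :=
    mul_nonneg (by linarith) (by positivity)
  have hdist : 0 ≤ (3 - 2 * Theta0 - gapConst / 2) * (a ^ 4 * (1 - ‖x‖ ^ 2)) :=
    mul_nonneg (by linarith) (mul_nonneg (by positivity) (sub_nonneg.mpr hn))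
  have hcube : 0 ≤ (2 - 2 * gapConst) * a ^ 3 := mul_nonneg (by linarith) (by positivity)
  have hsq : 0 ≤ gapConst * a ^ 2 := by positivity
  unfold heightWeight
  linarith

lemma frameEnergyDensity_add_le (ha : 0 < a) {x : E3} (hx : ‖x‖ ≤ 1) :
    frameEnergyDensity a u x + (1 - gapConst / 2) * (2 * |x 2| * |radialMagCross (a ^ 4) u x|
        + (a ^ 2)⁻¹ * magEnergyDensity (a ^ 4) u x) ≤
      (1 + 2 * (a ^ 2)⁻¹) * magEnergyDensity (a ^ 4) u x
        + (18 * a ^ 2 + a ^ 10 * (1 - ‖x‖ ^ 2) ^ 4) * ‖u x‖ ^ 2 := by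
  have hκ₀ := gapConst_pos
  have hκ : gapConst ≤ 1 := by unfold gapConst; linarith [Theta0_nonneg]
  have hframe := sq_norm_fderiv_frame_le_magEnergyDensity (a ^ 4) u hx
  have hcross := sq_norm_fderiv_add_abs_radialMagCross_le_magEnergyDensity (a ^ 4) u hx
  have hmeridian := sq_nonneg ‖fderiv ℝ u x (meridianField x)‖
  have hframe' : (a ^ 2)⁻¹ * (‖fderiv ℝ u x x‖ ^ 2 + ‖magAngularD (a ^ 4) u x‖ ^ 2) ≤
      (a ^ 2)⁻¹ * magEnergyDensity (a ^ 4) u x := by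
    gcongr
    linarith
  have hE : 0 ≤ gapConst / 2 * ((a ^ 2)⁻¹ * magEnergyDensity (a ^ 4) u x) := by
    have := magEnergyDensity_nonneg (a ^ 4) u x
    positivity
  have hcross' := mul_le_mul_of_nonneg_left hcross (by linarith : 0 ≤ 1 - gapConst / 2)
  have hframe'' := mul_le_mul_of_nonneg_left hframe (half_pos hκ₀).le
  unfold frameEnergyDensity
  linarith

theorem integral_energyWeight_mul_norm_sq_le (ha : 2 ≤ a) (hu : ContDiff ℝ 2 u) :
    ∫ x in ball3, (Theta0 * a ^ 4 + gapConst / 4 * a ^ 4 * |x 2| - 3 * a ^ 4 * (1 - ‖x‖ ^ 2)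
        - 21 * a ^ 3 - a ^ 10 * (1 - ‖x‖ ^ 2) ^ 4) * ‖u x‖ ^ 2 ≤
      (1 + 2 * (a ^ 2)⁻¹) * ∫ x in ball3, magEnergyDensity (a ^ 4) u x := by
  have ha₀ : 0 < a := by linarith
  have hu₁ : ContDiff ℝ 1 u := hu.of_le one_le_two
  have hu_cont := hu.continuous
  have hE := continuous_magEnergyDensity (a ^ 4) hu₁
  have hC := continuous_radialMagCross (a ^ 4) hu₁
  have hH := continuous_heightWeight a
  have hF := continuous_frameEnergyDensity a hu₁
  have hκ : 0 ≤ 1 - gapConst / 2 := by unfold gapConst; linarith [Theta0_nonneg]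
  have hray := integral_heightWeight_le ha hu₁
  have hcurl := mul_le_mul_of_nonneg_left
    (mul_integral_height_sq_mul_norm_sq_le (a ^ 4) hu (by positivity : 0 < a ^ 2)) hκ
  simp only [mul_add, ← integral_const_mul] at hcurl
  rw [← integral_add (integrableOn_ball3_of_continuous (by fun_prop))
      (integrableOn_ball3_of_continuous (by fun_prop)),
    ← integral_add (integrableOn_ball3_of_continuous (by fun_prop))
      (integrableOn_ball3_of_continuous (by fun_prop))] at hcurl
  rw [← integral_const_mul]
  rw [← sub_nonneg, ← integral_sub (integrableOn_ball3_of_continuous (by fun_prop))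
    (integrableOn_ball3_of_continuous (by fun_prop))] at hray hcurl ⊢
  have hsum := add_nonneg hray hcurl
  rw [← integral_add (integrableOn_ball3_of_continuous (by fun_prop))
    (integrableOn_ball3_of_continuous (by fun_prop))] at hsum
  refine hsum.trans (setIntegral_mono_on (integrableOn_ball3_of_continuous (by fun_prop))
    (integrableOn_ball3_of_continuous (by fun_prop)) Metric.isOpen_ball.measurableSet
    fun x hx => ?_)
  have hx : ‖x‖ ≤ 1 := (mem_ball_zero_iff.mp hx).le
  have hweight := mul_le_mul_of_nonneg_right
    (energyWeight_le_heightWeight (by linarith : 1 ≤ a) hx) (sq_nonneg ‖u x‖)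
  have henergy := frameEnergyDensity_add_le (u := u) ha₀ hx
  linarith

end LowerBound

/-! ### Moments of eigenfunctions -/

/-- The weight `(1 - |x|²)ʲ x₃ᵏ`. Near the sphere `1 - |x|²` is comparable to the distance to the
boundary and `|x₃|` to the distance to the equator, while the weight stays polynomial. -/
def momentWeight (j k : ℕ) (x : E3) : ℝ := (1 - ‖x‖ ^ 2) ^ j * x 2 ^ k

/-- The squared `L²` norm of `momentWeight j k` times `u` on the ball. -/
def moment (j k : ℕ) (u : E3 → ℂ) : ℝ := ∫ x in ball3, momentWeight j k x ^ 2 * ‖u x‖ ^ 2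

/-- The bound for the squared `L²` norm of `u` times the gradient of `momentWeight j k`; the
truncated indices are harmless because they carry the factors `j²` and `k²`. -/
def gradientMoment (j k : ℕ) (u : E3 → ℂ) : ℝ :=
  8 * j ^ 2 * moment (j - 1) k u + 2 * k ^ 2 * moment j (k - 1) u

section Moment

variable (j k : ℕ) {B L : ℝ} {u Ψ : E3 → ℂ}

lemma contDiff_momentWeight {n : WithTop ℕ∞} : ContDiff ℝ n (momentWeight j k) := by
  have hnorm : ContDiff ℝ n fun x : E3 => ‖x‖ ^ 2 := contDiff_norm_sq ℝ
  unfold momentWeight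
  fun_prop

lemma contDiff_momentWeight_mul (hu : ContDiff ℝ 2 u) :
    ContDiff ℝ 2 fun x => (momentWeight j k x : ℂ) * u x :=
  (Complex.ofRealCLM.contDiff.comp (contDiff_momentWeight j k)).mul hu

lemma sq_norm_momentWeight_mul (u : E3 → ℂ) (x : E3) :
    ‖(momentWeight j k x : ℂ) * u x‖ ^ 2 = momentWeight j k x ^ 2 * ‖u x‖ ^ 2 := by
  rw [norm_mul, mul_pow, Complex.norm_real, Real.norm_eq_abs, sq_abs]

lemma moment_nonneg (u : E3 → ℂ) : 0 ≤ moment j k u :=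
  integral_nonneg fun _ => by positivity

lemma moment_zero_zero (u : E3 → ℂ) : moment 0 0 u = ∫ x in ball3, ‖u x‖ ^ 2 := by
  simp [moment, momentWeight]

lemma gradientMoment_nonneg (u : E3 → ℂ) : 0 ≤ gradientMoment j k u := by
  have := moment_nonneg (j - 1) k u
  have := moment_nonneg j (k - 1) u
  unfold gradientMoment
  positivity

lemma partialDeriv_momentWeight (i : Fin 3) (x : E3) :
    partialDeriv i (momentWeight j k) x =
      k * momentWeight j (k - 1) x * (if 2 = i then 1 else 0)
        - 2 * (j * momentWeight (j - 1) k x) * x i := by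
  have hnorm : DifferentiableAt ℝ (fun y : E3 => 1 - ‖y‖ ^ 2) x :=
    (contDiff_const.sub (contDiff_norm_sq ℝ (n := 1))).differentiable one_ne_zero x
  have hunfold : momentWeight j k = fun y => (1 - ‖y‖ ^ 2) ^ j * y 2 ^ k := rfl
  rw [← partialDeriv_coord 2 i x, hunfold, partialDeriv_mul (by fun_prop) (by fun_prop)]
  simp only [partialDeriv, momentWeight, fderiv_fun_pow j hnorm,
    fderiv_fun_pow k (by fun_prop : DifferentiableAt ℝ (fun y : E3 => y 2) x), fderiv_const_sub,
    fderiv_norm_sq_apply, _root_.smul_apply, _root_.neg_apply, innerSL_apply_apply,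
    EuclideanSpace.inner_single_right, nsmul_eq_mul, smul_eq_mul, conj_trivial, one_mul]
  push_cast
  ring

lemma sum_sq_partialDeriv_momentWeight_le {x : E3} (hx : ‖x‖ ≤ 1) :
    ∑ i, partialDeriv i (momentWeight j k) x ^ 2 ≤
      8 * j ^ 2 * momentWeight (j - 1) k x ^ 2 + 2 * k ^ 2 * momentWeight j (k - 1) x ^ 2 := by
  have hnorm : x 0 ^ 2 + x 1 ^ 2 + x 2 ^ 2 ≤ 1 := by
    rw [← E3.norm_sq_eq]
    exact pow_le_one₀ (norm_nonneg x) hx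
  simp only [partialDeriv_momentWeight, Fin.sum_univ_three, Fin.reduceEq, if_false, if_true]
  set p := j * momentWeight (j - 1) k x
  set q := k * momentWeight j (k - 1) x
  have hsplit : (q - 2 * p * x 2) ^ 2 ≤ 2 * q ^ 2 + 2 * (2 * p * x 2) ^ 2 := by
    linarith [sq_nonneg (q + 2 * p * x 2), add_sq q (2 * p * x 2), sub_sq q (2 * p * x 2)]
  have hradial := mul_le_mul_of_nonneg_left hnorm (by positivity : 0 ≤ 8 * p ^ 2)
  have htransverse : 0 ≤ 4 * (p * x 0) ^ 2 + 4 * (p * x 1) ^ 2 := by positivity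
  linear_combination hsplit + hradial + htransverse

lemma integral_sum_sq_partialDeriv_momentWeight_le (hu : Continuous u) :
    ∫ x in ball3, (∑ i, partialDeriv i (momentWeight j k) x ^ 2) * ‖u x‖ ^ 2 ≤
      gradientMoment j k u := by
  have hw := fun j k => (contDiff_momentWeight j k (n := 1)).continuous
  have hw' := fun i => continuous_partialDeriv (contDiff_momentWeight j k) i
  rw [gradientMoment, moment, moment, ← integral_const_mul, ← integral_const_mul,
    ← integral_add (integrableOn_ball3_of_continuous (by fun_prop))
      (integrableOn_ball3_of_continuous (by fun_prop))]
  refine setIntegral_mono_on (integrableOn_ball3_of_continuous (by fun_prop))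
    (integrableOn_ball3_of_continuous (by fun_prop)) Metric.isOpen_ball.measurableSet
    fun x hx => ?_
  have := mul_le_mul_of_nonneg_right (sum_sq_partialDeriv_momentWeight_le j k
    (mem_ball_zero_iff.mp hx).le) (sq_nonneg ‖u x‖)
  linarith

/-- A Neumann eigenfunction of field strength `B` with eigenvalue at most `L`. -/
def IsNeumannEigenfunctionBelow (B L : ℝ) (Ψ : E3 → ℂ) : Prop :=
  ∃ lam ≤ L, IsNeumannEigenfunction B lam Ψ

lemma integral_magEnergyDensity_momentWeight_mul_le (hΨ : IsNeumannEigenfunctionBelow B L Ψ) :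
    ∫ x in ball3, magEnergyDensity B (fun y => (momentWeight j k y : ℂ) * Ψ y) x ≤
      L * moment j k Ψ + gradientMoment j k Ψ := by
  obtain ⟨lam, hlam, hΨ⟩ := hΨ
  have hcont := hΨ.1.continuous
  have hw := (contDiff_momentWeight j k (n := 1)).continuous
  have hw' := fun i => continuous_partialDeriv (contDiff_momentWeight j k) i
  rw [hΨ.integral_magEnergyDensity_ofReal_mul (contDiff_momentWeight j k)]
  calc ∫ x in ball3, (lam * momentWeight j k x ^ 2
        + ∑ i, partialDeriv i (momentWeight j k) x ^ 2) * ‖Ψ x‖ ^ 2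
      = lam * moment j k Ψ
          + ∫ x in ball3, (∑ i, partialDeriv i (momentWeight j k) x ^ 2) * ‖Ψ x‖ ^ 2 := by
        rw [moment, ← integral_const_mul,
          ← integral_add (integrableOn_ball3_of_continuous (by fun_prop))
            (integrableOn_ball3_of_continuous (by fun_prop))]
        simp only [add_mul, mul_assoc]
    _ ≤ L * moment j k Ψ + gradientMoment j k Ψ :=
        add_le_add (mul_le_mul_of_nonneg_right hlam (moment_nonneg j k Ψ))
          (integral_sum_sq_partialDeriv_momentWeight_le j k hcont)

lemma sub_mul_moment_succ_le (hΨ : IsNeumannEigenfunctionBelow B L Ψ) :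
    (B - L) * moment (j + 1) k Ψ ≤ gradientMoment (j + 1) k Ψ := by
  have henergy := integral_magEnergyDensity_momentWeight_mul_le (j + 1) k hΨ
  obtain ⟨lam, -, hΨ⟩ := hΨ
  have hdirichlet := mul_integral_norm_sq_le_of_eq_zero_on_sphere B
    (contDiff_momentWeight_mul (j + 1) k hΨ.1) fun x hx => by
      simp [momentWeight, mem_sphere_zero_iff_norm.mp hx]
  simp only [sq_norm_momentWeight_mul] at hdirichlet
  change B * moment (j + 1) k Ψ ≤ _ at hdirichlet
  linarith

lemma sq_mul_magEnergyDensity_le (B : ℝ) {φ : E3 → ℝ} {x : E3} (hφ : DifferentiableAt ℝ φ x)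
    (hu : DifferentiableAt ℝ u x) :
    φ x ^ 2 * magEnergyDensity B u x ≤ 2 * magEnergyDensity B (fun y => (φ y : ℂ) * u y) x
      + 2 * ((∑ i, partialDeriv i φ x ^ 2) * ‖u x‖ ^ 2) := by
  have hterm : ∀ i, φ x ^ 2 * ‖magD B u i x‖ ^ 2 ≤
      2 * ‖magD B (fun y => (φ y : ℂ) * u y) i x‖ ^ 2
        + 2 * (partialDeriv i φ x ^ 2 * ‖u x‖ ^ 2) := by
    intro i
    have hsplit : (φ x : ℂ) * magD B u i x = magD B (fun y => (φ y : ℂ) * u y) i x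
        + partialDeriv i φ x * (Complex.I * u x) := by
      rw [magD_ofReal_mul B hφ hu]
      ring
    have hnorm := pow_le_pow_left₀ (norm_nonneg _) (norm_add_le
      (magD B (fun y => (φ y : ℂ) * u y) i x) (partialDeriv i φ x * (Complex.I * u x))) 2
    rw [← hsplit, norm_mul, norm_mul, norm_mul, Complex.norm_I, one_mul, Complex.norm_real,
      Complex.norm_real, Real.norm_eq_abs, Real.norm_eq_abs, mul_pow, sq_abs] at hnorm
    have hconvex := add_sq_le (a := ‖magD B (fun y => (φ y : ℂ) * u y) i x‖)
      (b := |partialDeriv i φ x| * ‖u x‖)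
    rw [mul_pow |partialDeriv i φ x|, sq_abs] at hconvex
    linarith
  simp only [magEnergyDensity, Finset.sum_mul, Finset.mul_sum, ← Finset.sum_add_distrib]
  exact Finset.sum_le_sum fun i _ => hterm i

lemma integral_sq_momentWeight_mul_magEnergyDensity_le (hΨ : IsNeumannEigenfunctionBelow B L Ψ) :
    ∫ x in ball3, momentWeight j k x ^ 2 * magEnergyDensity B Ψ x ≤
      2 * L * moment j k Ψ + 4 * gradientMoment j k Ψ := by
  have henergy := integral_magEnergyDensity_momentWeight_mul_le j k hΨ
  obtain ⟨lam, -, hΨ⟩ := hΨ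
  have hΨ₁ : ContDiff ℝ 1 Ψ := hΨ.1.of_le one_le_two
  have hcont := hΨ.1.continuous
  have hw := (contDiff_momentWeight j k (n := 1)).continuous
  have hw' := fun i => continuous_partialDeriv (contDiff_momentWeight j k) i
  have hE := continuous_magEnergyDensity B hΨ₁
  have hwE := continuous_magEnergyDensity B
    ((contDiff_momentWeight_mul j k hΨ.1).of_le one_le_two)
  have hgrad := integral_sum_sq_partialDeriv_momentWeight_le j k hcont
  calc ∫ x in ball3, momentWeight j k x ^ 2 * magEnergyDensity B Ψ x
      ≤ ∫ x in ball3, (2 * magEnergyDensity B (fun y => (momentWeight j k y : ℂ) * Ψ y) x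
          + 2 * ((∑ i, partialDeriv i (momentWeight j k) x ^ 2) * ‖Ψ x‖ ^ 2)) :=
        integral_mono (integrableOn_ball3_of_continuous (by fun_prop))
          (integrableOn_ball3_of_continuous (by fun_prop)) fun x =>
          sq_mul_magEnergyDensity_le B ((contDiff_momentWeight j k).differentiable one_ne_zero x)
            (hΨ₁.differentiable one_ne_zero x)
    _ = 2 * (∫ x in ball3, magEnergyDensity B (fun y => (momentWeight j k y : ℂ) * Ψ y) x)
          + 2 * ∫ x in ball3, (∑ i, partialDeriv i (momentWeight j k) x ^ 2) * ‖Ψ x‖ ^ 2 := by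
        rw [← integral_const_mul, ← integral_const_mul,
          ← integral_add (integrableOn_ball3_of_continuous (by fun_prop))
            (integrableOn_ball3_of_continuous (by fun_prop))]
    _ ≤ 2 * L * moment j k Ψ + 4 * gradientMoment j k Ψ := by linarith

end Moment

/-- The squared `L²` norm of `|x₃|^(k + 1/2) u` on the ball. -/
def heightMoment (k : ℕ) (u : E3 → ℂ) : ℝ :=
  ∫ x in ball3, |x 2| * (momentWeight 0 k x ^ 2 * ‖u x‖ ^ 2)

section HeightMoment

variable (k : ℕ) {a ω t : ℝ} {u Ψ : E3 → ℂ}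

lemma moment_succ_le_heightMoment_add (ht : 0 < t) (hu : Continuous u) :
    moment 0 (k + 1) u ≤ t * heightMoment (k + 1) u + t⁻¹ ^ 2 * moment 0 k u := by
  have hw := fun k => (contDiff_momentWeight 0 k (n := 1)).continuous
  rw [moment, moment, heightMoment, ← integral_const_mul, ← integral_const_mul,
    ← integral_add (integrableOn_ball3_of_continuous (by fun_prop))
      (integrableOn_ball3_of_continuous (by fun_prop))]
  refine integral_mono (integrableOn_ball3_of_continuous (by fun_prop))
    (integrableOn_ball3_of_continuous (by fun_prop)) fun x => ?_
  have hcube : x 2 ^ 2 ≤ t * |x 2| * x 2 ^ 2 + t⁻¹ ^ 2 := by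
    rcases le_total 1 (t * |x 2|) with hlarge | hsmall
    · linarith [le_mul_of_one_le_left (sq_nonneg (x 2)) hlarge, sq_nonneg t⁻¹]
    · have hle : |x 2| ≤ t⁻¹ := by rwa [← one_div, le_div_iff₀' ht]
      have hsq : x 2 ^ 2 ≤ t⁻¹ ^ 2 := by
        rw [← sq_abs (x 2)]
        exact pow_le_pow_left₀ (abs_nonneg _) hle 2
      linarith [show 0 ≤ t * |x 2| * x 2 ^ 2 by positivity]
  have hsucc : momentWeight 0 (k + 1) x ^ 2 = x 2 ^ 2 * momentWeight 0 k x ^ 2 := by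
    simp only [momentWeight]
    ring
  have := mul_le_mul_of_nonneg_right hcube
    (by positivity : 0 ≤ momentWeight 0 k x ^ 2 * ‖u x‖ ^ 2)
  simp only [hsucc]
  linarith

lemma heightMoment_add_moment_le (ha : 2 ≤ a) (hu : ContDiff ℝ 2 u) :
    gapConst / 4 * a ^ 4 * heightMoment k u + (Theta0 * a ^ 4 - 24 * a ^ 3) * moment 0 k u
        - 3 * a ^ 6 * moment 1 k u - a ^ 10 * moment 2 k u ≤
      (1 + 2 * (a ^ 2)⁻¹) *
        ∫ x in ball3, magEnergyDensity (a ^ 4) (fun y => (momentWeight 0 k y : ℂ) * u y) x := by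
  have hmain := integral_energyWeight_mul_norm_sq_le ha (contDiff_momentWeight_mul 0 k hu)
  have hw := fun j => (contDiff_momentWeight j k (n := 1)).continuous
  have hcont := hu.continuous
  refine le_trans ?_ hmain
  simp only [heightMoment, moment, ← integral_const_mul]
  rw [← integral_add (integrableOn_ball3_of_continuous (by fun_prop))
      (integrableOn_ball3_of_continuous (by fun_prop)),
    ← integral_sub (integrableOn_ball3_of_continuous (by fun_prop))
      (integrableOn_ball3_of_continuous (by fun_prop)),
    ← integral_sub (integrableOn_ball3_of_continuous (by fun_prop))
      (integrableOn_ball3_of_continuous (by fun_prop))]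
  refine integral_mono (integrableOn_ball3_of_continuous (by fun_prop))
    (integrableOn_ball3_of_continuous (by fun_prop)) fun x => ?_
  have hyoung : a ^ 4 * (1 - ‖x‖ ^ 2) ≤ a ^ 3 + a ^ 6 * (1 - ‖x‖ ^ 2) ^ 2 := by
    have hsq := two_mul_le_add_sq a (a ^ 3 * (1 - ‖x‖ ^ 2))
    have hpow : a ^ 2 ≤ a ^ 3 := pow_le_pow_right₀ (by linarith) (by norm_num)
    have : 0 ≤ a ^ 6 * (1 - ‖x‖ ^ 2) ^ 2 := by positivity
    have : 0 ≤ a ^ 3 := by positivity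
    linarith
  have := mul_le_mul_of_nonneg_right hyoung
    (by positivity : 0 ≤ momentWeight 0 k x ^ 2 * ‖u x‖ ^ 2)
  simp only [sq_norm_momentWeight_mul]
  simp only [momentWeight] at this ⊢
  linarith

lemma heightMoment_le (hω : 0 ≤ ω) (ha : 2 ≤ a)
    (hΨ : IsNeumannEigenfunctionBelow (a ^ 4) (Theta0 * a ^ 4 + ω * a ^ 3) Ψ) :
    gapConst / 4 * a ^ 4 * heightMoment k Ψ ≤
      (26 + 3 * ω) * a ^ 3 * moment 0 k Ψ + 3 * a ^ 6 * moment 1 k Ψ + a ^ 10 * moment 2 k Ψ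
        + 3 * gradientMoment 0 k Ψ := by
  have : 0 < a := by linarith
  have henergy := integral_magEnergyDensity_momentWeight_mul_le 0 k hΨ
  obtain ⟨lam, -, hΨ⟩ := hΨ
  have hlower := heightMoment_add_moment_le k ha hΨ.1
  have hinv : (a ^ 2)⁻¹ ≤ 1 := inv_le_one_of_one_le₀ (one_le_pow₀ (by linarith))
  have hupper := mul_le_mul_of_nonneg_left henergy (by positivity : 0 ≤ 1 + 2 * (a ^ 2)⁻¹)
  have hthreshold : (1 + 2 * (a ^ 2)⁻¹) * (Theta0 * a ^ 4 + ω * a ^ 3) ≤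
      Theta0 * a ^ 4 + (2 + 3 * ω) * a ^ 3 := by
    have hΘ : Theta0 * a ^ 2 ≤ 1 * a ^ 3 :=
      mul_le_mul Theta0_lt_one.le (pow_le_pow_right₀ (by linarith) (by norm_num))
        (by positivity) zero_le_one
    have hω' := mul_le_mul_of_nonneg_right hinv (by positivity : 0 ≤ ω * a ^ 3)
    have hcancel : (a ^ 2)⁻¹ * a ^ 4 = a ^ 2 := by field_simp
    linear_combination 2 * hΘ + 2 * hω' + 2 * Theta0 * hcancel
  have hmass := mul_le_mul_of_nonneg_right hthreshold (moment_nonneg 0 k Ψ)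
  have hgrad := mul_le_mul_of_nonneg_right (by linarith : 1 + 2 * (a ^ 2)⁻¹ ≤ 3)
    (gradientMoment_nonneg 0 k Ψ)
  linarith

end HeightMoment

/-! ### Uniform bounds for the scaled moments -/

/-- The filter of pairs `(a, Ψ)` with `a → ∞` in which `Ψ` is an eigenfunction of field strength
`a⁴` with eigenvalue at most `Θ₀a⁴ + ωa³`. Bounds along it are uniform in the eigenfunction. -/
def lowEnergyFilter (ω : ℝ) : Filter (ℝ × (E3 → ℂ)) :=
  comap Prod.fst atTop ⊓
    𝓟 {p | IsNeumannEigenfunctionBelow (p.1 ^ 4) (Theta0 * p.1 ^ 4 + ω * p.1 ^ 3) p.2}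

/-- The moment of the weight `(a²(1 - |x|²))ʲ (a x₃)ᵏ`, in which lengths are measured in the decay
scales `a⁻²` normal to the boundary and `a⁻¹` tangential to it. -/
def scaledMoment (j k : ℕ) (p : ℝ × (E3 → ℂ)) : ℝ :=
  p.1 ^ (2 * (2 * j + k)) * moment j k p.2

/-- The `heightMoment` in the tangential scale `a⁻¹`. -/
def scaledHeightMoment (k : ℕ) (p : ℝ × (E3 → ℂ)) : ℝ :=
  p.1 ^ (2 * k + 1) * heightMoment k p.2

/-- The energy `|Ψ|² + a⁻⁴|(-i∇ + A)Ψ|²` integrated against the squared weight of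
`scaledMoment j k`. -/
def scaledEnergyMoment (j k : ℕ) (p : ℝ × (E3 → ℂ)) : ℝ :=
  p.1 ^ (2 * (2 * j + k)) * ∫ x in ball3,
    momentWeight j k x ^ 2 * (‖p.2 x‖ ^ 2 + (p.1 ^ 4)⁻¹ * magEnergyDensity (p.1 ^ 4) p.2 x)

section ScaledMoment

open Asymptotics

variable {ω : ℝ} {k : ℕ}

lemma eventually_lowEnergyFilter_iff {P : ℝ × (E3 → ℂ) → Prop} :
    (∀ᶠ p in lowEnergyFilter ω, P p) ↔ ∃ A, ∀ a, A ≤ a → ∀ Ψ,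
      IsNeumannEigenfunctionBelow (a ^ 4) (Theta0 * a ^ 4 + ω * a ^ 3) Ψ → P (a, Ψ) := by
  simp only [lowEnergyFilter, eventually_inf_principal, eventually_comap, eventually_atTop,
    Set.mem_ofPred_eq, Prod.forall]
  exact exists_congr fun A => ⟨fun h a ha Ψ hΨ => h a ha a Ψ rfl hΨ,
    fun h _ ha a Ψ hb hΨ => h a (hb ▸ ha) Ψ hΨ⟩

lemma eventually_le_and_isNeumannEigenfunctionBelow (ω A : ℝ) :
    ∀ᶠ p in lowEnergyFilter ω, A ≤ p.1 ∧
      IsNeumannEigenfunctionBelow (p.1 ^ 4) (Theta0 * p.1 ^ 4 + ω * p.1 ^ 3) p.2 :=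
  eventually_lowEnergyFilter_iff.mpr ⟨A, fun _ ha _ hΨ => ⟨ha, hΨ⟩⟩

lemma scaledMoment_nonneg (j k : ℕ) (p : ℝ × (E3 → ℂ)) : 0 ≤ scaledMoment j k p :=
  mul_nonneg ((even_two_mul _).pow_nonneg _) (moment_nonneg j k p.2)

lemma pow_mul_gradientMoment (j k : ℕ) (p : ℝ × (E3 → ℂ)) :
    p.1 ^ (2 * (2 * j + k)) * gradientMoment j k p.2 =
      8 * j ^ 2 * p.1 ^ 4 * scaledMoment (j - 1) k p
        + 2 * k ^ 2 * p.1 ^ 2 * scaledMoment j (k - 1) p := by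
  unfold gradientMoment scaledMoment
  rcases j with - | j <;> rcases k with - | k <;> push_cast [Nat.add_sub_cancel] <;> ring

lemma isBigO_of_eventually_le {α : Type*} {l : Filter α} {f g : α → ℝ} {c : ℝ} (hc : 0 < c)
    (hf : ∀ᶠ x in l, 0 ≤ f x) (h : ∀ᶠ x in l, c * f x ≤ g x) : f =O[l] g := by
  refine (isBigO_self_const_mul hc.ne' f l).trans (.of_norm_eventuallyLE ?_)
  filter_upwards [hf, h] with x hfx hx
  rwa [Real.norm_of_nonneg (mul_nonneg hc.le hfx)]

lemma isBigO_sq_mul_scaledMoment_pred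
    (hlower : ∀ i < k, ∀ j, scaledMoment j i =O[lowEnergyFilter ω] scaledMoment 0 0) (j : ℕ) :
    (fun p => k ^ 2 * scaledMoment j (k - 1) p) =O[lowEnergyFilter ω] scaledMoment 0 0 := by
  rcases k.eq_zero_or_pos with rfl | hk
  · simpa using isBigO_zero _ _
  · exact (hlower _ (Nat.sub_one_lt_of_lt hk) j).const_mul_left _

lemma eventually_mul_scaledMoment_succ_le (ω : ℝ) (j k : ℕ) :
    ∀ᶠ p in lowEnergyFilter ω, 34 * gapConst * scaledMoment (j + 1) k p ≤
      8 * (j + 1) ^ 2 * scaledMoment j k p + 2 * (k ^ 2 * scaledMoment (j + 1) (k - 1) p) := by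
  filter_upwards [eventually_le_and_isNeumannEigenfunctionBelow ω (max 1 (ω / (34 * gapConst)))]
    with p ⟨ha, hΨ⟩
  obtain ⟨ha₁, haω⟩ := max_le_iff.mp ha
  have hgap : 34 * gapConst * p.1 ^ 4 ≤ p.1 ^ 4 - (Theta0 * p.1 ^ 4 + ω * p.1 ^ 3) := by
    have hω := mul_le_mul_of_nonneg_right ((div_le_iff₀ (by linarith [gapConst_pos])).mp haω)
      (by positivity : 0 ≤ p.1 ^ 3)
    unfold gapConst at hω ⊢
    linarith
  have hdecay := mul_le_mul_of_nonneg_left (sub_mul_moment_succ_le j k hΨ)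
    (by positivity : 0 ≤ p.1 ^ (2 * (2 * (j + 1) + k)))
  rw [pow_mul_gradientMoment, mul_left_comm] at hdecay
  change _ * scaledMoment (j + 1) k p ≤ _ at hdecay
  have hlower := mul_le_mul_of_nonneg_right hgap (scaledMoment_nonneg (j + 1) k p)
  have hpow := mul_le_mul_of_nonneg_right
    (pow_le_pow_right₀ ha₁ (by norm_num) : p.1 ^ 2 ≤ p.1 ^ 4)
    (mul_nonneg (sq_nonneg (k : ℝ)) (scaledMoment_nonneg (j + 1) (k - 1) p))
  refine le_of_mul_le_mul_left ?_ (by positivity : 0 < p.1 ^ 4)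
  push_cast [Nat.add_sub_cancel] at hdecay
  linarith

lemma isBigO_scaledMoment_add (k : ℕ) :
    scaledMoment 0 k =O[lowEnergyFilter ω] (fun p => scaledMoment 0 k p + scaledMoment 0 0 p) ∧
      scaledMoment 0 0 =O[lowEnergyFilter ω]
        fun p => scaledMoment 0 k p + scaledMoment 0 0 p := by
  constructor <;> refine isBigO_of_eventually_le one_pos (.of_forall (scaledMoment_nonneg 0 _))
    (.of_forall ?_)
    <;> intro p <;> linarith [scaledMoment_nonneg 0 k p, scaledMoment_nonneg 0 0 p]

lemma scaledMoment_isBigO_add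
    (hlower : ∀ i < k, ∀ j, scaledMoment j i =O[lowEnergyFilter ω] scaledMoment 0 0) (j : ℕ) :
    scaledMoment j k =O[lowEnergyFilter ω] fun p => scaledMoment 0 k p + scaledMoment 0 0 p := by
  obtain ⟨hle_left, hle_right⟩ := isBigO_scaledMoment_add (ω := ω) k
  induction j with
  | zero => exact hle_left
  | succ j ih =>
    exact (isBigO_of_eventually_le (mul_pos (by norm_num) gapConst_pos)
      (.of_forall (scaledMoment_nonneg _ _)) (eventually_mul_scaledMoment_succ_le ω j k)).trans
        ((ih.const_mul_left _).add
          (((isBigO_sq_mul_scaledMoment_pred hlower (j + 1)).trans hle_right).const_mul_left 2))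

lemma scaledHeightMoment_nonneg {p : ℝ × (E3 → ℂ)} (k : ℕ) (hp : 0 ≤ p.1) :
    0 ≤ scaledHeightMoment k p :=
  mul_nonneg (by positivity) (integral_nonneg fun _ => by positivity)

lemma eventually_mul_scaledHeightMoment_le (hω : 0 ≤ ω) (k : ℕ) :
    ∀ᶠ p in lowEnergyFilter ω, gapConst / 4 * scaledHeightMoment k p ≤
      (26 + 3 * ω) * scaledMoment 0 k p + 3 * scaledMoment 1 k p + scaledMoment 2 k p
        + 6 * (k ^ 2 * scaledMoment 0 (k - 1) p) := by
  filter_upwards [eventually_le_and_isNeumannEigenfunctionBelow ω 2] with p ⟨ha, hΨ⟩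
  have hheight := mul_le_mul_of_nonneg_left (heightMoment_le k hω ha hΨ)
    (by positivity : 0 ≤ p.1 ^ (2 * (2 * 0 + k)))
  have hgradient := pow_mul_gradientMoment 0 k p
  have hpow : ∀ j k, p.1 ^ 2 * scaledMoment j k p ≤ p.1 ^ 3 * scaledMoment j k p := fun j k =>
    mul_le_mul_of_nonneg_right (pow_le_pow_right₀ (by linarith) (by norm_num))
      (scaledMoment_nonneg j k p)
  have hpow_pred := mul_le_mul_of_nonneg_left (hpow 0 (k - 1)) (sq_nonneg (k : ℝ))
  have hpow_one := hpow 1 k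
  have hpow_two := hpow 2 k
  refine le_of_mul_le_mul_left ?_ (by positivity : 0 < p.1 ^ 3)
  simp only [scaledHeightMoment, scaledMoment] at hgradient hpow_pred hpow_one hpow_two ⊢
  push_cast at hgradient
  linear_combination hheight + 3 * hgradient + 6 * hpow_pred + 3 * hpow_one + hpow_two

lemma scaledHeightMoment_isBigO_add (hω : 0 ≤ ω)
    (hlower : ∀ i < k, ∀ j, scaledMoment j i =O[lowEnergyFilter ω] scaledMoment 0 0) :
    scaledHeightMoment k =O[lowEnergyFilter ω]
      fun p => scaledMoment 0 k p + scaledMoment 0 0 p := by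
  have hX := scaledMoment_isBigO_add hlower
  have hpred := (isBigO_sq_mul_scaledMoment_pred hlower 0).trans
    (isBigO_scaledMoment_add (ω := ω) k).2
  exact (isBigO_of_eventually_le (by linarith [gapConst_pos])
    ((eventually_le_and_isNeumannEigenfunctionBelow ω 0).mono fun p hp =>
      scaledHeightMoment_nonneg k hp.1) (eventually_mul_scaledHeightMoment_le hω k)).trans
      (((((hX 0).const_mul_left _).add ((hX 1).const_mul_left _)).add (hX 2)).add
        (hpred.const_mul_left _))

lemma scaledMoment_zero_succ_le (k : ℕ) {t : ℝ} (ht : 0 < t) {p : ℝ × (E3 → ℂ)} (hp : 0 < p.1)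
    (hu : Continuous p.2) :
    scaledMoment 0 (k + 1) p ≤
      t * scaledHeightMoment (k + 1) p + t⁻¹ ^ 2 * scaledMoment 0 k p := by
  have hinterp := mul_le_mul_of_nonneg_left
    (moment_succ_le_heightMoment_add k (mul_pos ht hp) hu)
    (by positivity : 0 ≤ p.1 ^ (2 * (k + 1)))
  have hcancel : p.1⁻¹ ^ 2 * p.1 ^ 2 = 1 := by field_simp
  rw [mul_inv] at hinterp
  simp only [scaledMoment, scaledHeightMoment]
  linear_combination hinterp + t⁻¹ ^ 2 * p.1 ^ (2 * k) * moment 0 k p.2 * hcancel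

lemma scaledMoment_zero_succ_isBigO (hω : 0 ≤ ω)
    (hlower : ∀ i < k + 1, ∀ j, scaledMoment j i =O[lowEnergyFilter ω] scaledMoment 0 0) :
    scaledMoment 0 (k + 1) =O[lowEnergyFilter ω] scaledMoment 0 0 := by
  obtain ⟨C, hC, hheight⟩ := (scaledHeightMoment_isBigO_add hω hlower).exists_pos
  suffices hle : ∀ᶠ p in lowEnergyFilter ω,
      1 * scaledMoment 0 (k + 1) p ≤ scaledMoment 0 0 p + 8 * C ^ 2 * scaledMoment 0 k p from
    (isBigO_of_eventually_le one_pos (.of_forall (scaledMoment_nonneg 0 _)) hle).trans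
      ((isBigO_refl _ _).add ((hlower k k.lt_succ_self 0).const_mul_left _))
  filter_upwards [hheight.bound, eventually_le_and_isNeumannEigenfunctionBelow ω 1]
    with p hp ⟨ha, hΨ⟩
  obtain ⟨_, -, hΨ⟩ := hΨ
  have hsum := add_nonneg (scaledMoment_nonneg 0 (k + 1) p) (scaledMoment_nonneg 0 0 p)
  rw [Real.norm_of_nonneg hsum, Real.norm_of_nonneg
    (scaledHeightMoment_nonneg (k + 1) (by linarith))] at hp
  have hinterp := scaledMoment_zero_succ_le k (t := (2 * C)⁻¹) (by positivity)
    (by linarith : 0 < p.1) hΨ.1.continuous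
  rw [inv_inv] at hinterp
  have hhalf := mul_le_mul_of_nonneg_left hp (by positivity : 0 ≤ (2 * C)⁻¹)
  have hcancel : (2 * C)⁻¹ * C = 1 / 2 := by field_simp
  linear_combination 2 * hinterp + 2 * hhalf
    + 2 * (scaledMoment 0 (k + 1) p + scaledMoment 0 0 p) * hcancel

theorem scaledMoment_isBigO (hω : 0 ≤ ω) (j k : ℕ) :
    scaledMoment j k =O[lowEnergyFilter ω] scaledMoment 0 0 := by
  induction k using Nat.strong_induction_on generalizing j with
  | _ k hlower =>
    suffices hzero : scaledMoment 0 k =O[lowEnergyFilter ω] scaledMoment 0 0 from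
      (scaledMoment_isBigO_add hlower j).trans (hzero.add (isBigO_refl _ _))
    cases k with
    | zero => exact isBigO_refl _ _
    | succ k => exact scaledMoment_zero_succ_isBigO hω hlower

lemma scaledEnergyMoment_nonneg (j k : ℕ) (p : ℝ × (E3 → ℂ)) : 0 ≤ scaledEnergyMoment j k p :=
  mul_nonneg ((even_two_mul _).pow_nonneg _) (integral_nonneg fun x =>
    have := magEnergyDensity_nonneg (p.1 ^ 4) p.2 x
    by positivity)

lemma integral_sq_momentWeight_mul_energy (j k : ℕ) (B b : ℝ) {Ψ : E3 → ℂ}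
    (hΨ : ContDiff ℝ 1 Ψ) :
    ∫ x in ball3, momentWeight j k x ^ 2 * (‖Ψ x‖ ^ 2 + b * magEnergyDensity B Ψ x) =
      moment j k Ψ + b * ∫ x in ball3, momentWeight j k x ^ 2 * magEnergyDensity B Ψ x := by
  have hw := (contDiff_momentWeight j k (n := 1)).continuous
  have hcont := hΨ.continuous
  have hE := continuous_magEnergyDensity B hΨ
  rw [moment, ← integral_const_mul, ← integral_add (integrableOn_ball3_of_continuous (by fun_prop))
    (integrableOn_ball3_of_continuous (by fun_prop))]
  simp only [mul_add, mul_left_comm b]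

lemma eventually_scaledEnergyMoment_le (hω : 0 ≤ ω) (j k : ℕ) :
    ∀ᶠ p in lowEnergyFilter ω, 1 * scaledEnergyMoment j k p ≤
      (3 + 2 * ω) * scaledMoment j k p + 32 * j ^ 2 * scaledMoment (j - 1) k p
        + 8 * k ^ 2 * scaledMoment j (k - 1) p := by
  filter_upwards [eventually_le_and_isNeumannEigenfunctionBelow ω 1] with p ⟨ha, hΨ⟩
  have : 0 < p.1 := by linarith
  have henergy := integral_sq_momentWeight_mul_magEnergyDensity_le j k hΨ
  obtain ⟨_, -, hΨ⟩ := hΨ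
  have hthreshold : Theta0 * p.1 ^ 4 + ω * p.1 ^ 3 ≤ (1 + ω) * p.1 ^ 4 := by
    have := mul_le_mul_of_nonneg_right Theta0_lt_one.le (by positivity : 0 ≤ p.1 ^ 4)
    have := mul_le_mul_of_nonneg_left
      (pow_le_pow_right₀ ha (by norm_num) : p.1 ^ 3 ≤ p.1 ^ 4) hω
    linarith
  have hmass := mul_le_mul_of_nonneg_right hthreshold (scaledMoment_nonneg j k p)
  have hpow := mul_le_mul_of_nonneg_right
    (pow_le_pow_right₀ ha (by norm_num) : p.1 ^ 2 ≤ p.1 ^ 4)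
    (mul_nonneg (sq_nonneg (k : ℝ)) (scaledMoment_nonneg j (k - 1) p))
  have hscaled := mul_le_mul_of_nonneg_left henergy
    (by positivity : 0 ≤ p.1 ^ (2 * (2 * j + k)))
  have hgradient := pow_mul_gradientMoment j k p
  refine le_of_mul_le_mul_left ?_ (by positivity : 0 < p.1 ^ 4)
  rw [scaledEnergyMoment, integral_sq_momentWeight_mul_energy j k _ _ (hΨ.1.of_le one_le_two)]
  have hcancel : (p.1 ^ 4)⁻¹ * p.1 ^ 4 = 1 := by field_simp
  have hunfold : scaledMoment j k p = p.1 ^ (2 * (2 * j + k)) * moment j k p.2 := rfl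
  rw [hunfold] at hmass ⊢
  linear_combination hscaled + 4 * hgradient + 2 * hmass + 8 * hpow
    + p.1 ^ (2 * (2 * j + k)) * (∫ x in ball3, momentWeight j k x ^ 2 *
      magEnergyDensity (p.1 ^ 4) p.2 x) * hcancel

lemma scaledEnergyMoment_isBigO (hω : 0 ≤ ω) (j k : ℕ) :
    scaledEnergyMoment j k =O[lowEnergyFilter ω] scaledMoment 0 0 := by
  have hX := scaledMoment_isBigO hω
  exact (isBigO_of_eventually_le one_pos (.of_forall (scaledEnergyMoment_nonneg j k))
    (eventually_scaledEnergyMoment_le hω j k)).trans ((((hX j k).const_mul_left _).add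
      ((hX (j - 1) k).const_mul_left _)).add ((hX j (k - 1)).const_mul_left _))

end ScaledMoment

/-! ### Distances to the boundary and to the equator -/

section Distance

open Asymptotics

variable {ω a : ℝ} {x : E3} {Ψ : E3 → ℂ}

lemma distBd_nonneg (hx : x ∈ ball3) : 0 ≤ distBd x :=
  sub_nonneg.mpr (mem_ball_zero_iff.mp hx).le

lemma distBd_le_one_sub_norm_sq (hx : x ∈ ball3) : distBd x ≤ 1 - ‖x‖ ^ 2 :=
  sub_le_sub_left (pow_le_of_le_one (norm_nonneg x) (mem_ball_zero_iff.mp hx).le two_ne_zero) 1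

lemma distEq_nonneg (x : E3) : 0 ≤ distEq x :=
  Real.arcsin_nonneg.mpr (by positivity)

-- Jordan's inequality bounds the angle by its sine; near the centre `distBd` is large instead.
lemma distEq_le_pi_mul_max (x : E3) : distEq x ≤ π * max |x 2| (distBd x) := by
  rcases le_total ‖x‖ (1 / 2) with hcentre | houter
  · have hmax : 1 / 2 ≤ max |x 2| (distBd x) := le_max_of_le_right (by unfold distBd; linarith)
    have := mul_le_mul_of_nonneg_left hmax pi_pos.le
    unfold distEq
    linarith [Real.arcsin_le_pi_div_two (|x 2| / ‖x‖)]
  · have hpos : 0 < ‖x‖ := by linarith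
    have hheight : |x 2| ≤ ‖x‖ := PiLp.norm_apply_le x 2
    have hjordan := Real.mul_le_sin (distEq_nonneg x) (Real.arcsin_le_pi_div_two _)
    rw [distEq, Real.sin_arcsin (by linarith [show 0 ≤ |x 2| / ‖x‖ by positivity])
      ((div_le_one hpos).mpr hheight), ← distEq] at hjordan
    have hquotient : |x 2| / ‖x‖ ≤ 2 * max |x 2| (distBd x) := by
      have hlarge := mul_le_mul_of_nonneg_left (by linarith : 1 ≤ 2 * ‖x‖) (abs_nonneg (x 2))
      have := mul_le_mul_of_nonneg_right (le_max_left |x 2| (distBd x)) hpos.le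
      rw [div_le_iff₀ hpos]
      linarith
    have := mul_le_mul_of_nonneg_left (hjordan.trans hquotient) pi_pos.le
    field_simp at this
    linarith

lemma distEq_pow_le (n : ℕ) (hx : x ∈ ball3) :
    distEq x ^ n ≤ π ^ n * (|x 2| ^ n + distBd x ^ n) := by
  have hmax : max |x 2| (distBd x) ^ n ≤ |x 2| ^ n + distBd x ^ n := by
    rcases max_choice |x 2| (distBd x) with h | h <;> rw [h]
    · linarith [pow_nonneg (distBd_nonneg hx) n]
    · linarith [pow_nonneg (abs_nonneg (x 2)) n]
  calc distEq x ^ n ≤ (π * max |x 2| (distBd x)) ^ n :=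
        pow_le_pow_left₀ (distEq_nonneg x) (distEq_le_pi_mul_max x) n
    _ ≤ π ^ n * (|x 2| ^ n + distBd x ^ n) := by
        rw [mul_pow]
        exact mul_le_mul_of_nonneg_left hmax (by positivity)

lemma le_one_add_sq (t : ℝ) : t ≤ 1 + t ^ 2 := by
  linarith [sq_nonneg (t - 1 / 2), sub_sq t (1 / 2)]

lemma pow_mul_distBd_pow_le (n : ℕ) (ha : 0 ≤ a) (hx : x ∈ ball3) :
    a ^ (2 * n) * distBd x ^ n ≤ 1 + a ^ (2 * (2 * n)) * momentWeight n 0 x ^ 2 := by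
  have hweight : distBd x ^ n ≤ momentWeight n 0 x := by
    rw [momentWeight, pow_zero, mul_one]
    exact pow_le_pow_left₀ (distBd_nonneg hx) (distBd_le_one_sub_norm_sq hx) n
  linear_combination mul_le_mul_of_nonneg_left hweight (by positivity : 0 ≤ a ^ (2 * n))
    + le_one_add_sq (a ^ (2 * n) * momentWeight n 0 x)

lemma pow_mul_abs_pow_le (n : ℕ) (a : ℝ) (x : E3) :
    a ^ n * |x 2| ^ n ≤ 1 + a ^ (2 * n) * momentWeight 0 n x ^ 2 := by
  have hweight : momentWeight 0 n x ^ 2 = (|x 2| ^ n) ^ 2 := by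
    rw [momentWeight, pow_zero, one_mul, ← abs_pow, sq_abs]
  rw [hweight]
  linear_combination le_one_add_sq (a ^ n * |x 2| ^ n)

lemma pow_mul_distEq_pow_le (n : ℕ) (ha : 1 ≤ a) (hx : x ∈ ball3) :
    (π ^ n)⁻¹ * (a ^ n * distEq x ^ n) ≤ 2 + a ^ (2 * (2 * n)) * momentWeight n 0 x ^ 2
      + a ^ (2 * n) * momentWeight 0 n x ^ 2 := by
  have hpow : a ^ n * distBd x ^ n ≤ a ^ (2 * n) * distBd x ^ n :=
    mul_le_mul_of_nonneg_right (pow_le_pow_right₀ ha (by lia)) (pow_nonneg (distBd_nonneg hx) n)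
  rw [inv_mul_le_iff₀ (by positivity)]
  have := mul_le_mul_of_nonneg_left (distEq_pow_le n hx) (by positivity : 0 ≤ a ^ n)
  have := mul_le_mul_of_nonneg_left (add_le_add (pow_mul_abs_pow_le n a x)
    (hpow.trans (pow_mul_distBd_pow_le n (by linarith) hx))) (by positivity : 0 ≤ π ^ n)
  linarith

lemma integral_mul_energy_le {g : E3 → ℝ} (n : ℕ) (p : ℝ × (E3 → ℂ)) (hp : ContDiff ℝ 1 p.2)
    (hg : ∀ x ∈ ball3, 0 ≤ g x)
    (hle : ∀ x ∈ ball3, g x ≤ 2 + p.1 ^ (2 * (2 * n)) * momentWeight n 0 x ^ 2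
      + p.1 ^ (2 * n) * momentWeight 0 n x ^ 2) :
    ∫ x in ball3, g x * (‖p.2 x‖ ^ 2 + (p.1 ^ 4)⁻¹ * magEnergyDensity (p.1 ^ 4) p.2 x) ≤
      2 * scaledEnergyMoment 0 0 p + scaledEnergyMoment n 0 p + scaledEnergyMoment 0 n p := by
  have hw := fun j k => (contDiff_momentWeight j k (n := 1)).continuous
  have hcont := hp.continuous
  have hE := continuous_magEnergyDensity (p.1 ^ 4) hp
  have hF : ∀ x, 0 ≤ ‖p.2 x‖ ^ 2 + (p.1 ^ 4)⁻¹ * magEnergyDensity (p.1 ^ 4) p.2 x := fun x => by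
    have := magEnergyDensity_nonneg (p.1 ^ 4) p.2 x
    positivity
  simp only [scaledEnergyMoment, ← integral_const_mul]
  rw [← integral_add (integrableOn_ball3_of_continuous (by fun_prop))
      (integrableOn_ball3_of_continuous (by fun_prop)),
    ← integral_add (integrableOn_ball3_of_continuous (by fun_prop))
      (integrableOn_ball3_of_continuous (by fun_prop))]
  refine integral_mono_of_nonneg ?_ (integrableOn_ball3_of_continuous (by fun_prop)) ?_ <;>
    filter_upwards [ae_restrict_mem Metric.isOpen_ball.measurableSet] with x hx
  · exact mul_nonneg (hg x hx) (hF x)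
  · have := mul_le_mul_of_nonneg_right (hle x hx) (hF x)
    simp only [momentWeight, pow_zero, mul_zero, zero_add, add_zero, mul_one, one_mul,
      one_pow] at this ⊢
    linarith

lemma pow_mul_integral_mul_energy_isBigO {g : E3 → ℝ} {c : ℝ} {m : ℕ} (hω : 0 ≤ ω) (n : ℕ)
    (hc : 0 < c) (hg : ∀ x ∈ ball3, 0 ≤ g x)
    (hle : ∀ a, 1 ≤ a → ∀ x ∈ ball3, c * (a ^ m * g x) ≤
      2 + a ^ (2 * (2 * n)) * momentWeight n 0 x ^ 2 + a ^ (2 * n) * momentWeight 0 n x ^ 2) :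
    (fun p => p.1 ^ m * ∫ x in ball3,
      g x * (‖p.2 x‖ ^ 2 + (p.1 ^ 4)⁻¹ * magEnergyDensity (p.1 ^ 4) p.2 x))
        =O[lowEnergyFilter ω] scaledMoment 0 0 := by
  have hbound : ∀ᶠ p in lowEnergyFilter ω, c * (p.1 ^ m * ∫ x in ball3,
      g x * (‖p.2 x‖ ^ 2 + (p.1 ^ 4)⁻¹ * magEnergyDensity (p.1 ^ 4) p.2 x)) ≤
        2 * scaledEnergyMoment 0 0 p + scaledEnergyMoment n 0 p + scaledEnergyMoment 0 n p := by
    filter_upwards [eventually_le_and_isNeumannEigenfunctionBelow ω 1] with p hp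
    obtain ⟨ha, _, -, hΨ⟩ := hp
    rw [← mul_assoc, ← integral_const_mul]
    simp only [← mul_assoc (c * p.1 ^ m)]
    exact integral_mul_energy_le n p (hΨ.1.of_le one_le_two)
      (fun x hx => mul_nonneg (by positivity) (hg x hx)) fun x hx => by
        rw [mul_assoc]
        exact hle p.1 ha x hx
  refine (isBigO_of_eventually_le hc ?_ hbound).trans
    ((((scaledEnergyMoment_isBigO hω 0 0).const_mul_left 2).add
      (scaledEnergyMoment_isBigO hω n 0)).add (scaledEnergyMoment_isBigO hω 0 n))
  filter_upwards [eventually_le_and_isNeumannEigenfunctionBelow ω 0] with p ⟨ha, _⟩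
  refine mul_nonneg (by positivity) (setIntegral_nonneg Metric.isOpen_ball.measurableSet
    fun x hx => mul_nonneg (hg x hx) ?_)
  have := magEnergyDensity_nonneg (p.1 ^ 4) p.2 x
  positivity

lemma pow_mul_integral_distBd_pow_isBigO (hω : 0 ≤ ω) (n : ℕ) :
    (fun p => p.1 ^ (2 * n) * ∫ x in ball3,
      distBd x ^ n * (‖p.2 x‖ ^ 2 + (p.1 ^ 4)⁻¹ * magEnergyDensity (p.1 ^ 4) p.2 x))
        =O[lowEnergyFilter ω] scaledMoment 0 0 := by
  refine pow_mul_integral_mul_energy_isBigO hω n one_pos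
    (fun x hx => pow_nonneg (distBd_nonneg hx) n) fun a ha x hx => ?_
  have : 0 ≤ a ^ (2 * n) * momentWeight 0 n x ^ 2 := by positivity
  linarith [pow_mul_distBd_pow_le n (by linarith : 0 ≤ a) hx]

lemma pow_mul_integral_distEq_pow_isBigO (hω : 0 ≤ ω) (n : ℕ) :
    (fun p => p.1 ^ n * ∫ x in ball3,
      distEq x ^ n * (‖p.2 x‖ ^ 2 + (p.1 ^ 4)⁻¹ * magEnergyDensity (p.1 ^ 4) p.2 x))
        =O[lowEnergyFilter ω] scaledMoment 0 0 :=
  pow_mul_integral_mul_energy_isBigO hω n (by positivity)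
    (fun x _ => pow_nonneg (distEq_nonneg x) n) fun _ ha _ hx => pow_mul_distEq_pow_le n ha hx

lemma eventually_le_of_pow_mul_isBigO {f : ℝ × (E3 → ℂ) → ℝ} {m : ℕ}
    (hf : (fun p => p.1 ^ m * f p) =O[lowEnergyFilter ω] scaledMoment 0 0) :
    ∀ᶠ C in atTop, ∀ᶠ p in lowEnergyFilter ω,
      f p ≤ C * (p.1 ^ m)⁻¹ * ∫ x in ball3, ‖p.2 x‖ ^ 2 := by
  filter_upwards [isBigO_iff_eventually.mp hf] with C hC
  filter_upwards [hC, eventually_le_and_isNeumannEigenfunctionBelow ω 1] with p hp ⟨ha, _⟩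
  have hpow : 0 < p.1 ^ m := by positivity
  rw [Real.norm_of_nonneg (scaledMoment_nonneg 0 0 p), scaledMoment, moment_zero_zero] at hp
  have hle := (le_abs_self _).trans hp
  rw [mul_zero, add_zero, mul_zero, pow_zero, one_mul] at hle
  rwa [mul_right_comm, ← div_eq_mul_inv, le_div_iff₀' hpow]

end Distance

lemma rpow_quarter_pow {B : ℝ} (hB : 0 ≤ B) (m : ℕ) :
    (B ^ (1 / 4 : ℝ)) ^ m = B ^ (m / 4 : ℝ) := by
  rw [← Real.rpow_mul_natCast hB, one_div_mul_eq_div]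

theorem statement2_general (ω : ℝ) (n : ℕ) :
    ∃ C B₀ : ℝ, 0 < C ∧ 1 ≤ B₀ ∧
      ∀ B : ℝ, B₀ ≤ B → ∀ (lam : ℝ) (Ψ : E3 → ℂ),
        IsNeumannEigenfunction B lam Ψ →
        lam ≤ Theta0 * B + ω * B ^ ((3 : ℝ)/4) →
        (∫ x in ball3, distBd x ^ n * (‖Ψ x‖ ^ 2 + B⁻¹ * magEnergyDensity B Ψ x))
            ≤ C * B ^ (-(n:ℝ)/2) * ∫ x in ball3, ‖Ψ x‖ ^ 2 ∧
        (∫ x in ball3, distEq x ^ n * (‖Ψ x‖ ^ 2 + B⁻¹ * magEnergyDensity B Ψ x))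
            ≤ C * B ^ (-(n:ℝ)/4) * ∫ x in ball3, ‖Ψ x‖ ^ 2 := by
  have hbd := eventually_le_of_pow_mul_isBigO
    (pow_mul_integral_distBd_pow_isBigO (abs_nonneg ω) n)
  have heq := eventually_le_of_pow_mul_isBigO
    (pow_mul_integral_distEq_pow_isBigO (abs_nonneg ω) n)
  obtain ⟨C, ⟨hbdC, heqC⟩, hC⟩ := ((hbd.and heq).and (eventually_gt_atTop 0)).exists
  obtain ⟨A, hA⟩ := eventually_lowEnergyFilter_iff.mp (hbdC.and heqC)
  obtain ⟨B₀, hB₀⟩ := eventually_atTop.mp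
    ((tendsto_rpow_atTop (by norm_num : (0 : ℝ) < 1 / 4)).eventually_ge_atTop A)
  refine ⟨C, max B₀ 1, hC, le_max_right _ _, fun B hB lam Ψ hΨ hlam => ?_⟩
  have hB_nonneg : 0 ≤ B := zero_le_one.trans ((le_max_right _ _).trans hB)
  have hfour : (B ^ (1 / 4 : ℝ)) ^ 4 = B := by rw [rpow_quarter_pow hB_nonneg]; norm_num
  have hthree : (B ^ (1 / 4 : ℝ)) ^ 3 = B ^ (3 / 4 : ℝ) := rpow_quarter_pow hB_nonneg 3
  have hbound := hA (B ^ (1 / 4 : ℝ)) (hB₀ B ((le_max_left _ _).trans hB)) Ψ <| by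
    rw [hfour, hthree]
    exact ⟨lam, hlam.trans (by gcongr; exact le_abs_self ω), hΨ⟩
  have hhalf : (B ^ (1 / 4 : ℝ)) ^ (2 * n) = B ^ (n / 2 : ℝ) := by
    rw [rpow_quarter_pow hB_nonneg]
    push_cast
    ring_nf
  simpa only [hfour, hhalf, rpow_quarter_pow hB_nonneg n, ← Real.rpow_neg hB_nonneg,
    ← neg_div] using hbound

/-- Corollary 2.2: moment estimates (Agmon-type) for eigenfunctions
with low energy: decay away from the boundary and away from the equator. -/
theorem statement2 (ω : ℝ) (hω : 0 < ω) (n : ℕ) :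
    ∃ C B₀ : ℝ, 0 < C ∧ 0 < B₀ ∧
      ∀ B : ℝ, B₀ ≤ B → ∀ (lam : ℝ) (Ψ : E3 → ℂ),
        IsNeumannEigenfunction B lam Ψ →
        lam ≤ Theta0 * B + ω * B ^ ((2 : ℝ)/3) →
        (∫ x in ball3, distBd x ^ n * (‖Ψ x‖ ^ 2 + B⁻¹ * magEnergyDensity B Ψ x))
            ≤ C * B ^ (-(n:ℝ)/2) * ∫ x in ball3, ‖Ψ x‖ ^ 2 ∧
        (∫ x in ball3, distEq x ^ n * (‖Ψ x‖ ^ 2 + B⁻¹ * magEnergyDensity B Ψ x))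
            ≤ C * B ^ (-(n:ℝ)/4) * ∫ x in ball3, ‖Ψ x‖ ^ 2 := by
  obtain ⟨C, B₀, hC, hB₀, h⟩ := statement2_general ω n
  exact ⟨C, B₀, hC, one_pos.trans_le hB₀, fun B hB lam Ψ hΨ hlam => h B hB lam Ψ hΨ
    (hlam.trans (by gcongr Theta0 * B + ω * B ^ ?_ <;> linarith))⟩
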